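/- arXiv:2012.14498 — 7 statements merged into one kernel-verified Lean document; each statement's English description precedes it below -/
import Mathlib

section
/- Let J be a finite set of non-negative integers containing at least one positive integer and let α ∈ ℝ_+^J satisfy Assumption 1 with witness β. For a partition λ and n ∈ ℕ let φ_{λ,n}(t) = n^{−1/2}·|{a ∈ λ : a ≥ t√n}| (counted with multiplicity), and let φ_∞(t) = ∫_t^∞ 1/(exp(Σ_{j∈J} β_j s^j) − 1) ds. Then for all 0 < t₁ < t₂ < ∞ and ε > 0, the probability that a uniformly random λ ∈ P(N(α,n)) satisfies max_{t∈[t₁,t₂]} |φ_{λ,n}(t) − φ_∞(t)| ≥ ε tends to 0 as n → ∞ along those n for which N(α,n) ∈ NT(J). -/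
open MeasureTheory
open scoped Classical

/-- The set `Q_J` of (coefficient vectors of) polynomials `∑_{j ∈ J} t_j x^j` with
coefficients in `(-1/2, 1/2]` that are integer-valued on `ℤ`. -/
def QJ (J : Finset ℕ) : Set (ℕ → ℝ) :=
  {t | (∀ j ∉ J, t j = 0) ∧ (∀ j ∈ J, t j ∈ Set.Ioc (-(1/2) : ℝ) (1/2)) ∧
    ∀ m : ℤ, ∃ z : ℤ, ∑ j ∈ J, t j * (m : ℝ) ^ j = (z : ℝ)}

/-- The set `NT(J)` of profiles compatible with all number-theoretic constraints. -/
def NTset (J : Finset ℕ) : Set (ℕ → ℤ) :=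
  {m | ∀ t ∈ QJ J, ∃ z : ℤ, ∑ j ∈ J, t j * (m j : ℝ) = (z : ℝ)}

/-- The profile `N(α, n) = (⌊α_j n^{(j+1)/2}⌋)_{j ∈ J}`. -/
noncomputable def Nvec (α : ℕ → ℝ) (n : ℕ) : ℕ → ℤ :=
  fun j => ⌊α j * (n : ℝ) ^ (((j : ℝ) + 1) / 2)⌋

/-- `φ_{λ,n}(t) = n^{-1/2} |{a ∈ λ : a ≥ t √n}|`, counted with multiplicity. -/
noncomputable def phiLam (lam : Multiset ℕ) (n : ℕ) (t : ℝ) : ℝ :=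
  ((lam.filter (fun a => t * Real.sqrt n ≤ (a : ℝ))).card : ℝ) / Real.sqrt n

/-- The multisets supported on `I` all of whose multiplicities are below `M`. -/
noncomputable def boundedMultisets (I : Finset ℕ) (M : ℕ) : Finset (Multiset ℕ) :=
  (Fintype.piFinset fun _ : I => Finset.range M).image
    fun f => ∑ k : I, f k • {(k : ℕ)}

theorem count_sum_nsmul_singleton (I : Finset ℕ) (f : I → ℕ) (k : I) :
    (∑ i : I, f i • ({(i : ℕ)} : Multiset ℕ)).count (k : ℕ) = f k := by
  rw [Multiset.count_sum']
  simp only [Multiset.count_nsmul, Multiset.count_singleton]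
  rw [Finset.sum_eq_single k]
  · simp
  · intro b _ hb
    simp [Subtype.coe_injective.ne hb.symm]
  · simp

theorem mem_of_mem_boundedMultisets {I : Finset ℕ} {M : ℕ} {lam : Multiset ℕ}
    (h : lam ∈ boundedMultisets I M) : ∀ x ∈ lam, x ∈ I := by
  obtain ⟨f, -, rfl⟩ := Finset.mem_image.1 h
  intro x hx
  obtain ⟨i, -, hi⟩ := Multiset.mem_sum.1 hx
  have := Multiset.mem_of_mem_nsmul hi
  rw [Multiset.mem_singleton] at this
  exact this ▸ i.2

theorem mem_boundedMultisets {I : Finset ℕ} {M : ℕ} {lam : Multiset ℕ}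
    (hI : ∀ x ∈ lam, x ∈ I) (hM : ∀ x, lam.count x < M) : lam ∈ boundedMultisets I M := by
  refine Finset.mem_image.2 ⟨fun k => lam.count (k : ℕ), ?_, ?_⟩
  · simpa [Fintype.mem_piFinset] using fun x _ => hM x
  · ext x
    by_cases hx : x ∈ I
    · exact count_sum_nsmul_singleton I (fun k => lam.count (k : ℕ)) ⟨x, hx⟩
    · rw [Multiset.count_eq_zero_of_notMem, Multiset.count_eq_zero_of_notMem]
      · exact fun h => hx (hI x h)
      · intro h
        obtain ⟨i, -, hi⟩ := Multiset.mem_sum.1 h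
        have := Multiset.mem_of_mem_nsmul hi
        rw [Multiset.mem_singleton] at this
        exact hx (this ▸ i.2)

theorem sum_boundedMultisets (I : Finset ℕ) (M : ℕ) (F : ℕ → ℝ) :
    ∑ lam ∈ boundedMultisets I M, (lam.map F).prod = ∏ k ∈ I, ∑ m ∈ Finset.range M, F k ^ m := by
  rw [boundedMultisets, Finset.sum_image, ← Finset.prod_coe_sort, Finset.prod_univ_sum]
  · refine Finset.sum_congr rfl fun f _ => ?_
    rw [← Multiset.coe_mapAddMonoidHom, map_sum, Multiset.prod_sum]
    refine Finset.prod_congr rfl fun k _ => ?_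
    rw [map_nsmul, Multiset.prod_nsmul]
    simp
  · intro f _ g _ hfg
    funext k
    rw [← count_sum_nsmul_singleton I f k, ← count_sum_nsmul_singleton I g k]
    exact congrArg _ hfg

theorem sum_prod_map_le (I : Finset ℕ) (F : ℕ → ℝ) (h0 : ∀ k ∈ I, 0 ≤ F k)
    (h1 : ∀ k ∈ I, F k < 1) (B : Finset (Multiset ℕ)) (hB : ∀ lam ∈ B, ∀ x ∈ lam, x ∈ I) :
    ∑ lam ∈ B, (lam.map F).prod ≤ ∏ k ∈ I, (1 - F k)⁻¹ := by
  have hsub : B ⊆ boundedMultisets I (B.sup Multiset.card + 1) := by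
    intro lam hlam
    refine mem_boundedMultisets (hB lam hlam) fun x => Nat.lt_succ_of_le ?_
    exact (Multiset.count_le_card x lam).trans (Finset.le_sup (f := Multiset.card) hlam)
  refine (Finset.sum_le_sum_of_subset_of_nonneg hsub fun lam hlam _ => ?_).trans ?_
  · refine Multiset.prod_nonneg fun a ha => ?_
    obtain ⟨x, hx, rfl⟩ := Multiset.mem_map.1 ha
    exact h0 x (mem_of_mem_boundedMultisets hlam x hx)
  · rw [sum_boundedMultisets]
    refine Finset.prod_le_prod (fun k hk => Finset.sum_nonneg fun m _ => pow_nonneg (h0 k hk) m)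
      fun k hk => ?_
    rw [← tsum_geometric_of_lt_one (h0 k hk) (h1 k hk)]
    exact (summable_geometric_of_lt_one (h0 k hk) (h1 k hk)).sum_le_tsum _
      fun m _ => pow_nonneg (h0 k hk) m

theorem exists_lt_sum_prod_map (I : Finset ℕ) (F : ℕ → ℝ) (h0 : ∀ k ∈ I, 0 ≤ F k)
    (h1 : ∀ k ∈ I, F k < 1) (c : ℝ) (hc : c < ∏ k ∈ I, (1 - F k)⁻¹) :
    ∃ B : Finset (Multiset ℕ), (∀ lam ∈ B, ∀ x ∈ lam, x ∈ I) ∧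
      c < ∑ lam ∈ B, (lam.map F).prod := by
  have hlim : Filter.Tendsto (fun M => ∏ k ∈ I, ∑ m ∈ Finset.range M, F k ^ m) Filter.atTop
      (nhds (∏ k ∈ I, (1 - F k)⁻¹)) :=
    tendsto_finsetProd _ fun k hk =>
      (hasSum_geometric_of_lt_one (h0 k hk) (h1 k hk)).tendsto_sum_nat
  obtain ⟨M, hM⟩ := (hlim.eventually (lt_mem_nhds hc)).exists
  exact ⟨boundedMultisets I M, fun lam h => mem_of_mem_boundedMultisets h,
    by rwa [sum_boundedMultisets]⟩

theorem mul_exp_sub_one_inv_le (p : ℝ) (hp : 0 < p) :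
    p * (Real.exp p - 1)⁻¹ ≤ Real.exp (-(p / 2)) := by
  have h1 : 0 < Real.exp p - 1 := by
    have := Real.add_one_lt_exp hp.ne'
    linarith
  rw [← div_eq_mul_inv, div_le_iff₀ h1]
  have h2 : p / 2 ≤ Real.sinh (p / 2) := Real.self_le_sinh_iff.2 (by positivity)
  rw [Real.sinh_eq] at h2
  have h3 : Real.exp (-(p / 2)) * Real.exp p = Real.exp (p / 2) := by
    rw [← Real.exp_add]; ring_nf
  nlinarith

theorem abs_exp_sub_one_le (u : ℝ) : |Real.exp u - 1| ≤ |u| * Real.exp |u| := by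
  have := Complex.norm_exp_sub_sum_le_norm_mul_exp (u : ℂ) 1
  simp only [Finset.sum_range_one, pow_zero, Nat.factorial_zero, Nat.cast_one, div_one,
    Complex.norm_real, pow_one, Real.norm_eq_abs] at this
  rwa [← Complex.ofReal_exp, ← Complex.ofReal_one, ← Complex.ofReal_sub, Complex.norm_real,
    Real.norm_eq_abs] at this

theorem exp_sub_one_sub_le (u : ℝ) : Real.exp u - 1 - u ≤ u ^ 2 * Real.exp |u| := by
  have := Complex.norm_exp_sub_sum_le_norm_mul_exp (u : ℂ) 2
  simp only [Finset.sum_range_succ, Finset.sum_range_zero, zero_add, pow_zero,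
    Nat.factorial_zero, Nat.cast_one, div_one, Complex.norm_real, pow_one, Real.norm_eq_abs,
    Nat.factorial_one, sq_abs] at this
  rw [← Complex.ofReal_exp, ← Complex.ofReal_one, ← Complex.ofReal_add, ← Complex.ofReal_sub,
    Complex.norm_real, Real.norm_eq_abs] at this
  have h2 := le_abs_self (Real.exp u - (1 + u))
  linarith

theorem inv_one_sub_le_exp (a : ℝ) (ha : |a| ≤ 1 / 2) :
    (1 - a)⁻¹ ≤ Real.exp (a + 2 * a ^ 2) := by
  have h1 : 0 < 1 - a := by linarith [le_abs_self a]
  have h2 := Real.abs_log_sub_add_sum_range_le (x := a) (by linarith) 1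
  simp only [Finset.sum_range_one, zero_add, pow_one, Nat.cast_zero, div_one] at h2
  have h3 : |a| ^ (1 + 1) / (1 - |a|) ≤ 2 * a ^ 2 := by
    rw [div_le_iff₀ (by linarith), ← sq_abs a, one_add_one_eq_two]
    have := mul_nonneg (sq_nonneg |a|) (sub_nonneg.2 ha)
    linarith
  rw [← Real.exp_log h1, ← Real.exp_neg]
  refine Real.exp_le_exp.2 ?_
  have := neg_abs_le (a + Real.log (1 - a))
  linarith

theorem abs_inv_mul_exp_sub_one_le (p u s : ℝ) (hp : 0 < p) (hs0 : 0 ≤ s) (hs1 : s ≤ 1)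
    (hu : |u| ≤ s * p) : |(Real.exp p - 1)⁻¹ * (Real.exp u - 1)| ≤ s := by
  have h1 : p < Real.exp p - 1 := by
    have := Real.add_one_lt_exp hp.ne'
    linarith
  have h0 : 0 < Real.exp p - 1 := hp.trans h1
  obtain ⟨hu1, hu2⟩ := abs_le.1 hu
  rw [abs_mul, abs_of_pos (inv_pos.2 h0), inv_mul_le_iff₀ h0, abs_le]
  constructor
  · have := Real.add_one_le_exp u
    nlinarith
  · have h2 := convexOn_exp.2 (Set.mem_univ 0) (Set.mem_univ p) (sub_nonneg.2 hs1) hs0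
      (by ring)
    simp only [smul_eq_mul, mul_zero, zero_add, Real.exp_zero, mul_one] at h2
    have := Real.exp_le_exp.2 hu2
    linarith

theorem geometric_mgf_le (p g s : ℝ) (hp : 0 < p) (hg0 : 0 ≤ g) (hg : g ≤ p)
    (hs : |s| ≤ 1 / 4) :
    Real.exp (-p + s * g) < 1 ∧
    (1 - Real.exp (-p + s * g))⁻¹ ≤ (1 - Real.exp (-p))⁻¹ *
      Real.exp (s * (g * (Real.exp p - 1)⁻¹) + s ^ 2 * (10 * Real.exp (-(p / 8)))) := by
  set h := (Real.exp p - 1)⁻¹ with hh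
  set u := s * g with hu
  have h1 : p < Real.exp p - 1 := by
    have := Real.add_one_lt_exp hp.ne'
    linarith
  have h0 : 0 < Real.exp p - 1 := hp.trans h1
  have hpos : 0 < h := inv_pos.2 h0
  have huabs : |u| ≤ |s| * p := by
    rw [hu, abs_mul, abs_of_nonneg hg0]
    exact mul_le_mul_of_nonneg_left hg (abs_nonneg s)
  have hup : |u| ≤ p / 4 := by nlinarith
  have ha := abs_inv_mul_exp_sub_one_le p u |s| hp (abs_nonneg s) (by linarith) huabs
  rw [← hh] at ha
  have hexp : Real.exp (-p) * Real.exp p = 1 := by rw [← Real.exp_add]; simp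
  have hlt : Real.exp (-p + u) < 1 := by
    rw [Real.exp_lt_one_iff]
    linarith [le_abs_self u]
  refine ⟨hlt, ?_⟩
  have heq : (1 - Real.exp (-p + u))⁻¹ =
      (1 - Real.exp (-p))⁻¹ * (1 - h * (Real.exp u - 1))⁻¹ := by
    rw [← mul_inv]
    congr 1
    have e1 : 1 - Real.exp (-p) = Real.exp (-p) * (Real.exp p - 1) := by
      rw [mul_sub, hexp, mul_one]
    have e2 : (Real.exp p - 1) * h = 1 := mul_inv_cancel₀ h0.ne'
    rw [e1, Real.exp_add]
    linear_combination (-1 : ℝ) * hexp + Real.exp (-p) * (Real.exp u - 1) * e2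
  rw [heq]
  have hq1 : 0 < 1 - Real.exp (-p) := by
    rw [sub_pos, Real.exp_lt_one_iff]; linarith
  refine mul_le_mul_of_nonneg_left ?_ (inv_pos.2 hq1).le
  refine (inv_one_sub_le_exp _ (ha.trans (by linarith))).trans (Real.exp_le_exp.2 ?_)
  have hph : p * h ≤ Real.exp (-(p / 2)) := mul_exp_sub_one_inv_le p hp
  have hE : Real.exp |u| ≤ Real.exp (p / 4) := Real.exp_le_exp.2 hup
  have hus : u ^ 2 ≤ s ^ 2 * p ^ 2 := by
    rw [hu, mul_pow]
    exact mul_le_mul_of_nonneg_left (pow_le_pow_left₀ hg0 hg 2) (sq_nonneg s)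
  have b1 : h * (Real.exp u - 1) ≤ s * (g * h) + s ^ 2 * (8 * Real.exp (-(p / 8))) := by
    have c1 := exp_sub_one_sub_le u
    have c2 : u ^ 2 * Real.exp |u| ≤ s ^ 2 * p ^ 2 * Real.exp (p / 4) :=
      mul_le_mul hus hE (Real.exp_pos _).le (by positivity)
    have c3 : h * (p ^ 2 * Real.exp (p / 4)) ≤ 8 * Real.exp (-(p / 8)) := by
      have d1 : p / 8 ≤ Real.exp (p / 8) := by linarith [Real.add_one_le_exp (p / 8)]
      calc h * (p ^ 2 * Real.exp (p / 4)) = (p * h) * (p * Real.exp (p / 4)) := by ring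
        _ ≤ Real.exp (-(p / 2)) * (8 * Real.exp (p / 8) * Real.exp (p / 4)) := by
            gcongr
            linarith
        _ = 8 * Real.exp (-(p / 8)) := by
            rw [mul_assoc, ← Real.exp_add, mul_left_comm, ← Real.exp_add]
            ring_nf
    have c4 : h * (Real.exp u - 1 - u) ≤ s ^ 2 * (8 * Real.exp (-(p / 8))) := by
      calc h * (Real.exp u - 1 - u) ≤ h * (s ^ 2 * p ^ 2 * Real.exp (p / 4)) :=
            mul_le_mul_of_nonneg_left (c1.trans c2) hpos.le
        _ = s ^ 2 * (h * (p ^ 2 * Real.exp (p / 4))) := by ring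
        _ ≤ _ := mul_le_mul_of_nonneg_left c3 (sq_nonneg s)
    have : h * u = s * (g * h) := by rw [hu]; ring
    nlinarith
  have b2 : (h * (Real.exp u - 1)) ^ 2 ≤ s ^ 2 * Real.exp (-(p / 8)) := by
    have c1 : |h * (Real.exp u - 1)| ≤ |s| * Real.exp (-(p / 4)) := by
      rw [abs_mul, abs_of_pos hpos]
      calc h * |Real.exp u - 1| ≤ h * (|s| * p * Real.exp (p / 4)) := by
            gcongr
            refine (abs_exp_sub_one_le u).trans ?_
            gcongr
        _ = |s| * ((p * h) * Real.exp (p / 4)) := by ring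
        _ ≤ |s| * (Real.exp (-(p / 2)) * Real.exp (p / 4)) := by gcongr
        _ = _ := by rw [← Real.exp_add]; ring_nf
    calc (h * (Real.exp u - 1)) ^ 2 = |h * (Real.exp u - 1)| ^ 2 := (sq_abs _).symm
      _ ≤ (|s| * Real.exp (-(p / 4))) ^ 2 := pow_le_pow_left₀ (abs_nonneg _) c1 2
      _ = s ^ 2 * Real.exp (-(p / 2)) := by
          rw [mul_pow, sq_abs, sq (Real.exp _), ← Real.exp_add]; ring_nf
      _ ≤ _ := by gcongr; linarith
  linarith

/-- The Boltzmann weight `∏_{x ∈ lam} exp (-P x)`. -/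
noncomputable def boltzmann (P : ℕ → ℝ) (lam : Multiset ℕ) : ℝ :=
  (lam.map fun k => Real.exp (-P k)).prod

theorem boltzmann_mul_exp (P g : ℕ → ℝ) (s : ℝ) (lam : Multiset ℕ) :
    boltzmann P lam * Real.exp (s * (lam.map g).sum) =
      (lam.map fun k => Real.exp (-P k + s * g k)).prod := by
  induction lam using Multiset.induction_on with
  | empty => simp [boltzmann]
  | cons a t ih =>
    simp only [boltzmann, Multiset.map_cons, Multiset.prod_cons, Multiset.sum_cons] at ih ⊢
    rw [← ih, mul_add, Real.exp_add, Real.exp_add]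
    ring

theorem boltzmann_pos (P : ℕ → ℝ) (lam : Multiset ℕ) : 0 < boltzmann P lam := by
  induction lam using Multiset.induction_on with
  | empty => simp [boltzmann]
  | cons a t ih =>
    simp only [boltzmann, Multiset.map_cons, Multiset.prod_cons] at ih ⊢
    exact mul_pos (Real.exp_pos _) ih

theorem boltzmann_eq_exp (P : ℕ → ℝ) (lam : Multiset ℕ) :
    boltzmann P lam = Real.exp (-(lam.map P).sum) := by
  induction lam using Multiset.induction_on with
  | empty => simp [boltzmann]
  | cons a t ih =>
    simp only [boltzmann, Multiset.map_cons, Multiset.prod_cons, Multiset.sum_cons] at ih ⊢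
    rw [ih, ← Real.exp_add]
    ring_nf

/-- The partition function of multisets supported on `I`. -/
noncomputable def partitionFn (P : ℕ → ℝ) (I : Finset ℕ) : ℝ :=
  ∏ k ∈ I, (1 - Real.exp (-P k))⁻¹

theorem exp_neg_lt_one {p : ℝ} (hp : 0 < p) : Real.exp (-p) < 1 := by
  rw [Real.exp_lt_one_iff]; linarith

theorem partitionFn_pos {P : ℕ → ℝ} {I : Finset ℕ} (hP : ∀ k ∈ I, 0 < P k) :
    0 < partitionFn P I :=
  Finset.prod_pos fun k hk => inv_pos.2 (sub_pos.2 (exp_neg_lt_one (hP k hk)))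

theorem sum_boltzmann_one_sided (P g : ℕ → ℝ) (I : Finset ℕ) (hP : ∀ k ∈ I, 0 < P k)
    (hg0 : ∀ k ∈ I, 0 ≤ g k) (hg : ∀ k ∈ I, g k ≤ P k) (B : Finset (Multiset ℕ))
    (hB : ∀ lam ∈ B, ∀ x ∈ lam, x ∈ I) (s : ℝ) (hs : |s| ≤ 1 / 4) :
    ∑ lam ∈ B, boltzmann P lam *
        Real.exp (s * ((lam.map g).sum - ∑ k ∈ I, g k * (Real.exp (P k) - 1)⁻¹)) ≤
      partitionFn P I * Real.exp (s ^ 2 * ∑ k ∈ I, 10 * Real.exp (-(P k / 8))) := by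
  have key := sum_prod_map_le I (fun k => Real.exp (-P k + s * g k))
    (fun k _ => (Real.exp_pos _).le)
    (fun k hk => (geometric_mgf_le _ _ s (hP k hk) (hg0 k hk) (hg k hk) hs).1) B hB
  have key2 : ∏ k ∈ I, (1 - Real.exp (-P k + s * g k))⁻¹ ≤ partitionFn P I *
      Real.exp (s * (∑ k ∈ I, g k * (Real.exp (P k) - 1)⁻¹) +
        s ^ 2 * ∑ k ∈ I, 10 * Real.exp (-(P k / 8))) := by
    rw [partitionFn, Finset.mul_sum, Finset.mul_sum, ← Finset.sum_add_distrib, Real.exp_sum,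
      ← Finset.prod_mul_distrib]
    refine Finset.prod_le_prod (fun k hk => ?_) fun k hk =>
      (geometric_mgf_le _ _ s (hP k hk) (hg0 k hk) (hg k hk) hs).2
    exact (inv_pos.2 (sub_pos.2
      (geometric_mgf_le _ _ s (hP k hk) (hg0 k hk) (hg k hk) hs).1)).le
  have h3 : ∀ lam ∈ B, boltzmann P lam *
        Real.exp (s * ((lam.map g).sum - ∑ k ∈ I, g k * (Real.exp (P k) - 1)⁻¹)) =
      (lam.map fun k => Real.exp (-P k + s * g k)).prod *
        Real.exp (-(s * ∑ k ∈ I, g k * (Real.exp (P k) - 1)⁻¹)) := by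
    intro lam _
    rw [← boltzmann_mul_exp, mul_sub, sub_eq_add_neg, Real.exp_add, mul_assoc]
  rw [Finset.sum_congr rfl h3, ← Finset.sum_mul]
  refine (mul_le_mul_of_nonneg_right (key.trans key2) (Real.exp_pos _).le).trans_eq ?_
  rw [mul_assoc, ← Real.exp_add]
  ring_nf

/-- Chernoff bound for the Boltzmann weights. -/
theorem sum_boltzmann_deviation_le (P g : ℕ → ℝ) (I : Finset ℕ) (hP : ∀ k ∈ I, 0 < P k)
    (hg0 : ∀ k ∈ I, 0 ≤ g k) (hg : ∀ k ∈ I, g k ≤ P k) (B : Finset (Multiset ℕ))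
    (hB : ∀ lam ∈ B, ∀ x ∈ lam, x ∈ I) (τ s : ℝ) (hs0 : 0 ≤ s) (hs : s ≤ 1 / 4)
    (hdev : ∀ lam ∈ B, τ ≤ |(lam.map g).sum - ∑ k ∈ I, g k * (Real.exp (P k) - 1)⁻¹|) :
    ∑ lam ∈ B, boltzmann P lam ≤ 2 * partitionFn P I *
      Real.exp (-(s * τ) + s ^ 2 * ∑ k ∈ I, 10 * Real.exp (-(P k / 8))) := by
  have habs : |s| ≤ 1 / 4 := by rwa [abs_of_nonneg hs0]
  have h1 := sum_boltzmann_one_sided P g I hP hg0 hg B hB s habs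
  have h2 := sum_boltzmann_one_sided P g I hP hg0 hg B hB (-s) (by rwa [abs_neg])
  rw [neg_sq] at h2
  have h3 : ∑ lam ∈ B, boltzmann P lam ≤ Real.exp (-(s * τ)) *
      (∑ lam ∈ B, boltzmann P lam *
        Real.exp (s * ((lam.map g).sum - ∑ k ∈ I, g k * (Real.exp (P k) - 1)⁻¹)) +
      ∑ lam ∈ B, boltzmann P lam *
        Real.exp (-s * ((lam.map g).sum - ∑ k ∈ I, g k * (Real.exp (P k) - 1)⁻¹))) := by
    rw [← Finset.sum_add_distrib, Finset.mul_sum]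
    refine Finset.sum_le_sum fun lam hlam => ?_
    set y := (lam.map g).sum - ∑ k ∈ I, g k * (Real.exp (P k) - 1)⁻¹ with hy
    have hw := boltzmann_pos P lam
    have e1 : Real.exp (s * τ) ≤ Real.exp (s * y) + Real.exp (-s * y) := by
      have hy2 := hdev lam hlam
      rcases le_abs.1 hy2 with h | h
      · have := Real.exp_le_exp.2 (mul_le_mul_of_nonneg_left h hs0)
        linarith [Real.exp_pos (-s * y)]
      · have := Real.exp_le_exp.2 (mul_le_mul_of_nonneg_left h hs0)
        rw [mul_neg, ← neg_mul] at this
        linarith [Real.exp_pos (s * y)]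
    have e2 : Real.exp (-(s * τ)) * Real.exp (s * τ) = 1 := by rw [← Real.exp_add]; simp
    calc boltzmann P lam = boltzmann P lam * (Real.exp (-(s * τ)) * Real.exp (s * τ)) := by
          rw [e2, mul_one]
      _ ≤ boltzmann P lam * (Real.exp (-(s * τ)) * (Real.exp (s * y) + Real.exp (-s * y))) := by
          gcongr
      _ = _ := by ring
  refine h3.trans ((mul_le_mul_of_nonneg_left (add_le_add h1 h2) (Real.exp_pos _).le).trans_eq ?_)
  rw [Real.exp_add]
  ring

/-- The power sum `∑_{x ∈ lam} x ^ j`. -/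
def powSum (lam : Multiset ℕ) (j : ℕ) : ℕ := (lam.map fun x => x ^ j).sum

theorem powSum_add (lam mu : Multiset ℕ) (j : ℕ) :
    powSum (lam + mu) j = powSum lam j + powSum mu j := by
  simp [powSum]

theorem powSum_sum {ι : Type*} (s : Finset ι) (f : ι → Multiset ℕ) (j : ℕ) :
    powSum (∑ i ∈ s, f i) j = ∑ i ∈ s, powSum (f i) j := by
  simp only [powSum]
  rw [← Multiset.coe_mapAddMonoidHom, map_sum, Multiset.sum_sum]

/-- The multiset containing `i * t` with multiplicity `b i` for `1 ≤ i ≤ P`. -/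
def multiples (P t : ℕ) (b : ℕ → ℕ) : Multiset ℕ := ∑ i ∈ Finset.Icc 1 P, b i • {i * t}

theorem powSum_multiples (P t : ℕ) (b : ℕ → ℕ) (j : ℕ) :
    powSum (multiples P t b) j = ∑ i ∈ Finset.Icc 1 P, b i * (i * t) ^ j := by
  rw [multiples, powSum_sum]
  refine Finset.sum_congr rfl fun i _ => ?_
  simp [powSum, Multiset.map_nsmul, Multiset.sum_nsmul]

theorem pos_of_mem_multiples {P t : ℕ} (ht : 0 < t) {b : ℕ → ℕ} {x : ℕ}
    (hx : x ∈ multiples P t b) : 0 < x := by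
  obtain ⟨i, hi, h⟩ := Multiset.mem_sum.1 hx
  have := Multiset.mem_of_mem_nsmul h
  rw [Multiset.mem_singleton] at this
  rw [this]
  exact Nat.mul_pos (Finset.mem_Icc.1 hi).1 ht

/-- Every vector indexed by exponents below `P` is a combination of the power vectors of
`1, …, P`, with coefficients bounded in terms of the vector. -/
theorem exists_powers_combination (J : Finset ℕ) (P : ℕ) (hP : ∀ j ∈ J, j < P) :
    ∃ A : ℝ, 0 ≤ A ∧ ∀ (y : ℕ → ℝ) (B : ℝ), (∀ j ∈ J, |y j| ≤ B) → ∃ a : ℕ → ℝ,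
      (∀ j ∈ J, ∑ i ∈ Finset.Icc 1 P, a i * (i : ℝ) ^ j = y j) ∧
      ∀ i ∈ Finset.Icc 1 P, |a i| ≤ A * B := by
  set s := Finset.Icc 1 P with hs
  set v : ℕ → ℝ := fun i => (i : ℝ) with hv
  have hinj : Set.InjOn v s := fun a _ b _ h => Nat.cast_injective h
  set c : ℕ → ℕ → ℝ := fun i j => (Lagrange.basis s v i).coeff j with hc
  have key : ∀ j ∈ J, ∀ j', ∑ i ∈ s, (i : ℝ) ^ j * c i j' = if j' = j then 1 else 0 := by
    intro j hj j'
    have hdeg : (Polynomial.X ^ j : Polynomial ℝ).degree < s.card := by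
      rw [Polynomial.degree_X_pow, hs, Nat.card_Icc]
      exact_mod_cast (by simpa using hP j hj)
    have h := congrArg (fun f => Polynomial.coeff f j') (Lagrange.eq_interpolate hinj hdeg)
    simp only [Lagrange.interpolate_apply, Polynomial.finsetSum_coeff, Polynomial.coeff_C_mul,
      Polynomial.eval_pow, Polynomial.eval_X, Polynomial.coeff_X_pow] at h
    exact h.symm
  refine ⟨∑ i ∈ s, ∑ j ∈ J, |c i j|, by positivity, fun y B hy => ?_⟩
  refine ⟨fun i => ∑ j ∈ J, y j * c i j, fun j hj => ?_, fun i hi => ?_⟩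
  · calc ∑ i ∈ s, (∑ j' ∈ J, y j' * c i j') * (i : ℝ) ^ j
        = ∑ j' ∈ J, y j' * ∑ i ∈ s, (i : ℝ) ^ j * c i j' := by
          simp only [Finset.sum_mul, Finset.mul_sum]
          rw [Finset.sum_comm]
          exact Finset.sum_congr rfl fun _ _ => Finset.sum_congr rfl fun _ _ => by ring
      _ = y j := by
          rw [Finset.sum_congr rfl fun j' _ => by rw [key j hj j']]
          simp [hj]
  · calc |∑ j ∈ J, y j * c i j| ≤ ∑ j ∈ J, |y j * c i j| := Finset.abs_sum_le_sum_abs _ _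
      _ ≤ ∑ j ∈ J, |c i j| * B := by
          refine Finset.sum_le_sum fun j hj => ?_
          rw [abs_mul, mul_comm]
          exact mul_le_mul_of_nonneg_left (hy j hj) (abs_nonneg _)
      _ = (∑ j ∈ J, |c i j|) * B := by rw [Finset.sum_mul]
      _ ≤ _ := by
          by_cases hJ : J.Nonempty
          · obtain ⟨j, hj⟩ := hJ
            have hB : 0 ≤ B := (abs_nonneg _).trans (hy j hj)
            refine mul_le_mul_of_nonneg_right ?_ hB
            exact Finset.single_le_sum (f := fun i => ∑ j ∈ J, |c i j|)
              (fun i _ => Finset.sum_nonneg fun _ _ => abs_nonneg _) hi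
          · rw [Finset.not_nonempty_iff_eq_empty] at hJ
            simp [hJ]

theorem abs_sum_sub_sum_floor_le (P t : ℕ) (c : ℕ → ℝ) (hc : ∀ i ∈ Finset.Icc 1 P, 0 ≤ c i)
    (j : ℕ) :
    |∑ i ∈ Finset.Icc 1 P, c i * ((i : ℝ) * t) ^ j -
      ∑ i ∈ Finset.Icc 1 P, (⌊c i⌋₊ : ℝ) * ((i : ℝ) * t) ^ j| ≤ P * (P * t) ^ j := by
  rw [← Finset.sum_sub_distrib]
  refine (Finset.abs_sum_le_sum_abs _ _).trans ?_
  calc ∑ i ∈ Finset.Icc 1 P, |c i * ((i : ℝ) * t) ^ j - (⌊c i⌋₊ : ℝ) * ((i : ℝ) * t) ^ j|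
      ≤ ∑ i ∈ Finset.Icc 1 P, ((P : ℝ) * t) ^ j := by
        refine Finset.sum_le_sum fun i hi => ?_
        have h1 := Nat.floor_le (hc i hi)
        have h2 := Nat.lt_floor_add_one (c i)
        have hiP : (i : ℝ) ≤ P := by exact_mod_cast (Finset.mem_Icc.1 hi).2
        rw [← sub_mul, abs_mul, abs_of_nonneg (by linarith),
          abs_of_nonneg (by positivity : (0 : ℝ) ≤ ((i : ℝ) * t) ^ j)]
        calc (c i - ⌊c i⌋₊) * ((i : ℝ) * t) ^ j ≤ 1 * ((i : ℝ) * t) ^ j := by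
              gcongr; linarith
          _ ≤ _ := by rw [one_mul]; gcongr
    _ = _ := by simp

/-- The vector `R` is a difference of two power sum profiles. -/
def IsProfileDiff (J : Finset ℕ) (R : ℕ → ℤ) : Prop :=
  ∃ lam mu : Multiset ℕ, (∀ x ∈ lam, 0 < x) ∧ (∀ x ∈ mu, 0 < x) ∧
    ∀ j ∈ J, R j = (powSum lam j : ℤ) - powSum mu j

theorem IsProfileDiff.add_sub {J : Finset ℕ} {R : ℕ → ℤ} (h : IsProfileDiff J R)
    (S T : Multiset ℕ) (hS : ∀ x ∈ S, 0 < x) (hT : ∀ x ∈ T, 0 < x) :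
    IsProfileDiff J fun j => R j + powSum S j - powSum T j := by
  obtain ⟨lam, mu, h1, h2, h3⟩ := h
  refine ⟨lam + S, mu + T, fun x hx => ?_, fun x hx => ?_, fun j hj => ?_⟩
  · rcases Multiset.mem_add.1 hx with h | h
    exacts [h1 x h, hS x h]
  · rcases Multiset.mem_add.1 hx with h | h
    exacts [h2 x h, hT x h]
  · beta_reduce
    rw [powSum_add, powSum_add, h3 j hj]
    push_cast
    ring

theorem exists_scale_reduction (J : Finset ℕ) (P : ℕ) (hP : ∀ j ∈ J, j < P) :
    ∃ A : ℕ, ∀ (m : ℕ) (R : ℕ → ℤ), (∀ j ∈ J, |R j| ≤ P * (P * 2 ^ (m + 1)) ^ j) →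
      ∃ b : ℕ → ℕ, ∀ j ∈ J, |R j + powSum (multiples P (2 ^ m) fun _ => A) j -
        powSum (multiples P (2 ^ m) b) j| ≤ P * (P * 2 ^ m) ^ j := by
  obtain ⟨A₀, hA₀, h⟩ := exists_powers_combination J P hP
  set B : ℝ := ∑ j ∈ J, (P : ℝ) * (P * 2) ^ j with hB
  set A := ⌈A₀ * B⌉₊ with hA
  refine ⟨A, fun m R hR => ?_⟩
  have hy : ∀ j ∈ J, |(R j : ℝ) / (2 ^ m) ^ j| ≤ B := by
    intro j hj
    have h1 : |(R j : ℝ)| ≤ P * (P * 2 ^ (m + 1)) ^ j := by exact_mod_cast hR j hj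
    have h2 : (0 : ℝ) < (2 ^ m) ^ j := by positivity
    rw [abs_div, abs_of_pos h2, div_le_iff₀ h2]
    refine h1.trans ?_
    have h3 : (P : ℝ) * (P * 2) ^ j ≤ B :=
      Finset.single_le_sum (f := fun j => (P : ℝ) * (P * 2) ^ j)
        (fun i _ => by positivity) hj
    calc (P : ℝ) * (P * 2 ^ (m + 1)) ^ j = P * (P * 2) ^ j * (2 ^ m) ^ j := by
          rw [mul_assoc, ← mul_pow]; ring_nf
      _ ≤ _ := by gcongr
  obtain ⟨a, ha1, ha2⟩ := h _ B hy
  have hc : ∀ i ∈ Finset.Icc 1 P, 0 ≤ a i + A := by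
    intro i hi
    have := ha2 i hi
    have h3 := Nat.le_ceil (A₀ * B)
    have := neg_abs_le (a i)
    linarith
  refine ⟨fun i => ⌊a i + A⌋₊, fun j hj => ?_⟩
  have h1 := abs_sum_sub_sum_floor_le P (2 ^ m) (fun i => a i + A) hc j
  have h2 : (0 : ℝ) < (2 ^ m) ^ j := by positivity
  have h3 : ∑ i ∈ Finset.Icc 1 P, a i * ((i : ℝ) * (2 ^ m : ℕ)) ^ j = R j := by
    have := ha1 j hj
    rw [eq_div_iff h2.ne', Finset.sum_mul] at this
    rw [← this]
    refine Finset.sum_congr rfl fun i _ => ?_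
    push_cast
    rw [mul_pow]
    ring
  rw [powSum_multiples, powSum_multiples]
  simp only [add_mul, Finset.sum_add_distrib] at h1
  rw [h3] at h1
  have h4 : ((|R j + ((∑ i ∈ Finset.Icc 1 P, A * (i * 2 ^ m) ^ j : ℕ) : ℤ) -
      ((∑ i ∈ Finset.Icc 1 P, ⌊a i + A⌋₊ * (i * 2 ^ m) ^ j : ℕ) : ℤ)| : ℤ) : ℝ) ≤
      ((P * (P * 2 ^ m) ^ j : ℤ) : ℝ) := by
    push_cast at h1 ⊢
    exact h1
  exact_mod_cast h4

/-- At each dyadic scale some small multiset absorbs every admissible error of that scale. -/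
theorem exists_absorber (J : Finset ℕ) (P : ℕ) (hP : ∀ j ∈ J, j < P) :
    ∃ C : ℕ, ∀ m : ℕ, ∃ S : Multiset ℕ, (∀ x ∈ S, 0 < x) ∧
      (∀ j ∈ J, powSum S j ≤ C * (m + 1) * (P * 2 ^ m) ^ j) ∧
      ∀ R : ℕ → ℤ, IsProfileDiff J R → (∀ j ∈ J, |R j| ≤ P * (P * 2 ^ m) ^ j) →
        ∃ mu : Multiset ℕ, (∀ x ∈ mu, 0 < x) ∧
          ∀ j ∈ J, (powSum mu j : ℤ) = powSum S j + R j := by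
  obtain ⟨A, hA⟩ := exists_scale_reduction J P hP
  have hbase : ∃ S : Multiset ℕ, (∀ x ∈ S, 0 < x) ∧
      ∀ R : ℕ → ℤ, IsProfileDiff J R → (∀ j ∈ J, |R j| ≤ P * (P * 2 ^ 0) ^ j) →
        ∃ mu : Multiset ℕ, (∀ x ∈ mu, 0 < x) ∧
          ∀ j ∈ J, (powSum mu j : ℤ) = powSum S j + R j := by
    set box : Finset (J → ℤ) := Fintype.piFinset fun j : J =>
      Finset.Icc (-((P : ℤ) * P ^ (j : ℕ))) ((P : ℤ) * P ^ (j : ℕ)) with hbox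
    have hch : ∀ R : J → ℤ, ∃ mu : Multiset ℕ, (∀ x ∈ mu, 0 < x) ∧
        ((∃ lam mu : Multiset ℕ, (∀ x ∈ lam, 0 < x) ∧ (∀ x ∈ mu, 0 < x) ∧
          ∀ j : J, R j = (powSum lam j : ℤ) - powSum mu j) →
        ∃ lam : Multiset ℕ, (∀ x ∈ lam, 0 < x) ∧
          ∀ j : J, R j = (powSum lam j : ℤ) - powSum mu j) := by
      intro R
      by_cases h : ∃ lam mu : Multiset ℕ, (∀ x ∈ lam, 0 < x) ∧ (∀ x ∈ mu, 0 < x) ∧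
          ∀ j : J, R j = (powSum lam j : ℤ) - powSum mu j
      · obtain ⟨lam, mu, h1, h2, h3⟩ := h
        exact ⟨mu, h2, fun _ => ⟨lam, h1, h3⟩⟩
      · exact ⟨0, by simp, fun h' => absurd h' h⟩
    choose f hf1 hf2 using hch
    refine ⟨∑ R ∈ box, f R, fun x hx => ?_, fun R hR hb => ?_⟩
    · obtain ⟨R, -, h⟩ := Multiset.mem_sum.1 hx
      exact hf1 R x h
    · set R' : J → ℤ := fun j => R j with hR'
      have hmem : R' ∈ box := by
        rw [hbox, Fintype.mem_piFinset]
        intro j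
        have := hb j j.2
        rw [pow_zero, mul_one, abs_le] at this
        exact Finset.mem_Icc.2 this
      obtain ⟨lam, mu, h1, h2, h3⟩ := hR
      obtain ⟨lam', h4, h5⟩ := hf2 R' ⟨lam, mu, h1, h2, fun j => h3 j j.2⟩
      refine ⟨lam' + ∑ Q ∈ box.erase R', f Q, fun x hx => ?_, fun j hj => ?_⟩
      · rcases Multiset.mem_add.1 hx with h | h
        · exact h4 x h
        · obtain ⟨Q, -, h⟩ := Multiset.mem_sum.1 h
          exact hf1 Q x h
      · have h6 : R j = _ := h5 ⟨j, hj⟩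
        rw [← Finset.add_sum_erase _ _ hmem, powSum_add, powSum_add, h6]
        push_cast
        ring
  obtain ⟨S₀, hS₀, hS₀'⟩ := hbase
  refine ⟨∑ j ∈ J, powSum S₀ j + P * A, fun m => ?_⟩
  induction m with
  | zero =>
    refine ⟨S₀, hS₀, fun j hj => ?_, hS₀'⟩
    have h1 : powSum S₀ j ≤ ∑ j ∈ J, powSum S₀ j :=
      Finset.single_le_sum (f := fun j => powSum S₀ j) (fun _ _ => Nat.zero_le _) hj
    have h2 : 1 ≤ (P * 2 ^ 0) ^ j := Nat.one_le_pow _ _ (by have := hP j hj; omega)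
    rw [zero_add, mul_one]
    exact (h1.trans (Nat.le_add_right _ _)).trans (Nat.le_mul_of_pos_right _ h2)
  | succ m ih =>
    obtain ⟨S, hS, hSb, hSR⟩ := ih
    refine ⟨S + multiples P (2 ^ m) fun _ => A, fun x hx => ?_, fun j hj => ?_,
      fun R hR hb => ?_⟩
    · rcases Multiset.mem_add.1 hx with h | h
      exacts [hS x h, pos_of_mem_multiples (by positivity) h]
    · rw [powSum_add, powSum_multiples]
      have h1 := hSb j hj
      have h2 : ∑ i ∈ Finset.Icc 1 P, A * (i * 2 ^ m) ^ j ≤ P * A * (P * 2 ^ m) ^ j := by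
        calc _ ≤ ∑ i ∈ Finset.Icc 1 P, A * (P * 2 ^ m) ^ j := by
              refine Finset.sum_le_sum fun i hi => ?_
              gcongr
              exact (Finset.mem_Icc.1 hi).2
          _ = _ := by simp [mul_assoc]
      have h3 : (P * 2 ^ m) ^ j ≤ (P * 2 ^ (m + 1)) ^ j := by
        gcongr <;> omega
      calc _ ≤ (∑ j ∈ J, powSum S₀ j + P * A) * (m + 1) * (P * 2 ^ m) ^ j +
            P * A * (P * 2 ^ m) ^ j := add_le_add h1 h2
        _ ≤ (∑ j ∈ J, powSum S₀ j + P * A) * (m + 1) * (P * 2 ^ m) ^ j +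
            (∑ j ∈ J, powSum S₀ j + P * A) * (P * 2 ^ m) ^ j := by gcongr; omega
        _ = (∑ j ∈ J, powSum S₀ j + P * A) * (m + 1 + 1) * (P * 2 ^ m) ^ j := by ring
        _ ≤ _ := by gcongr
    · obtain ⟨b, hbb⟩ := hA m R hb
      obtain ⟨mu, hmu, hmu'⟩ := hSR _ (hR.add_sub (multiples P (2 ^ m) fun _ => A)
        (multiples P (2 ^ m) b) (fun x hx => pos_of_mem_multiples (by positivity) hx)
        (fun x hx => pos_of_mem_multiples (by positivity) hx)) hbb
      refine ⟨mu + multiples P (2 ^ m) b, fun x hx => ?_, fun j hj => ?_⟩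
      · rcases Multiset.mem_add.1 hx with h | h
        exacts [hmu x h, pos_of_mem_multiples (by positivity) h]
      · rw [powSum_add, powSum_add]
        push_cast
        rw [hmu' j hj]
        ring

theorem tendsto_natLog_add_div_atTop :
    Filter.Tendsto (fun r : ℝ => ((Nat.log 2 ⌊r⌋₊ : ℝ) + 2) / r) Filter.atTop (nhds 0) := by
  have h1 : Filter.Tendsto (fun r : ℝ => (Real.log 2)⁻¹ * (Real.log r / r) + 2 / r) Filter.atTop
      (nhds ((Real.log 2)⁻¹ * 0 + 0)) := by
    refine Filter.Tendsto.add (Filter.Tendsto.const_mul _ ?_) ?_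
    · exact Real.isLittleO_log_id_atTop.tendsto_div_nhds_zero
    · exact Filter.tendsto_id.const_div_atTop 2
  rw [mul_zero, add_zero] at h1
  refine squeeze_zero' ?_ ?_ h1
  · filter_upwards [Filter.eventually_gt_atTop 0] with r hr
    positivity
  · filter_upwards [Filter.eventually_ge_atTop 1] with r hr
    have hr0 : 0 < r := by linarith
    have h2 := Real.natLog_le_logb ⌊r⌋₊ 2
    have hfl : (1 : ℝ) ≤ ⌊r⌋₊ := by exact_mod_cast Nat.floor_pos.2 hr
    have h3 : Real.logb (2 : ℕ) ⌊r⌋₊ ≤ (Real.log 2)⁻¹ * Real.log r := by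
      rw [Real.logb, div_eq_inv_mul, Nat.cast_ofNat]
      have : 0 < Real.log 2 := Real.log_pos (by norm_num)
      gcongr
      exact Nat.floor_le hr0.le
    calc ((Nat.log 2 ⌊r⌋₊ : ℝ) + 2) / r ≤ ((Real.log 2)⁻¹ * Real.log r + 2) / r := by
          gcongr
          exact h2.trans h3
      _ = _ := by ring

/-- Every admissible vector close to the interior of the moment cone is the power sum profile
of a partition. -/
theorem exists_powSum_eq (J : Finset ℕ) (P : ℕ) (hP : ∀ j ∈ J, j < P) (c : ℕ → ℝ)
    (hc : ∀ i ∈ Finset.Icc 1 P, 0 < c i) :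
    ∃ κ : ℝ, 0 < κ ∧ ∀ θ : ℝ, 0 < θ → ∀ᶠ r : ℝ in Filter.atTop, ∀ D : ℕ → ℤ,
      IsProfileDiff J D →
      (∀ j ∈ J, |(D j : ℝ) / r ^ (j + 1) - θ * ∑ i ∈ Finset.Icc 1 P, c i * (i : ℝ) ^ j| ≤
        θ * κ) →
      ∃ mu : Multiset ℕ, (∀ x ∈ mu, 0 < x) ∧ ∀ j ∈ J, (powSum mu j : ℤ) = D j := by
  obtain ⟨A, hA, hcomb⟩ := exists_powers_combination J P hP
  obtain ⟨C, hC⟩ := exists_absorber J P hP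
  obtain ⟨c₀, hc₀, hcc⟩ : ∃ c₀ : ℝ, 0 < c₀ ∧ ∀ i ∈ Finset.Icc 1 P, c₀ ≤ c i := by
    rcases (Finset.Icc 1 P).eq_empty_or_nonempty with h | h
    · exact ⟨1, one_pos, by simp [h]⟩
    · obtain ⟨i, hi, hmin⟩ := Finset.exists_min_image _ c h
      exact ⟨c i, hc i hi, hmin⟩
  refine ⟨c₀ / (3 * (A + 1)), by positivity, fun θ hθ => ?_⟩
  set κ := c₀ / (3 * (A + 1)) with hκ
  have hκ0 : 0 < κ := by positivity
  set M : ℕ → ℝ := fun j => ∑ i ∈ Finset.Icc 1 P, c i * (i : ℝ) ^ j with hM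
  have hM0 : ∀ j, 0 ≤ M j := fun j =>
    Finset.sum_nonneg fun i hi => mul_nonneg (hc i hi).le (by positivity)
  have hratio : ∀ j ∈ J, ∀ᶠ r : ℝ in Filter.atTop,
      (M j + κ) * |(r / ⌊r⌋₊) ^ j - 1| ≤ κ := by
    intro j _
    have h1 : Filter.Tendsto (fun r : ℝ => (M j + κ) * |(((⌊r⌋₊ : ℝ) / r)⁻¹) ^ j - 1|)
        Filter.atTop (nhds ((M j + κ) * |((1 : ℝ)⁻¹) ^ j - 1|)) :=
      ((((tendsto_nat_floor_div_atTop (R := ℝ)).inv₀ one_ne_zero).pow j).sub_const 1).abs.const_mul _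
    simp only [inv_one, one_pow, sub_self, abs_zero, mul_zero, inv_div] at h1
    exact h1.eventually (ge_mem_nhds hκ0)
  have hsmall : ∀ j ∈ J, ∀ᶠ r : ℝ in Filter.atTop,
      (C * (P * 2) ^ j : ℝ) * (((Nat.log 2 ⌊r⌋₊ : ℝ) + 2) / r) ≤ θ * κ := by
    intro j _
    have h1 := tendsto_natLog_add_div_atTop.const_mul (C * (P * 2) ^ j : ℝ)
    rw [mul_zero] at h1
    exact h1.eventually (ge_mem_nhds (by positivity))
  filter_upwards [(Filter.eventually_all_finset J).2 hratio,
    (Filter.eventually_all_finset J).2 hsmall, Filter.eventually_ge_atTop 1]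
    with r hr1 hr2 hr3 D hD hDb
  have hr0 : 0 < r := by linarith
  set ρ := ⌊r⌋₊ with hρ
  have hρ1 : 1 ≤ ρ := Nat.floor_pos.2 hr3
  have hρ0 : (0 : ℝ) < ρ := by exact_mod_cast hρ1
  set m := Nat.log 2 ρ + 1 with hm
  have hm1 : ρ ≤ 2 ^ m := (Nat.lt_pow_succ_log_self (by norm_num) ρ).le
  have hm2 : 2 ^ m ≤ 2 * ρ := by
    rw [hm, pow_succ, mul_comm]
    exact Nat.mul_le_mul_left 2 (Nat.pow_log_le_self 2 (by omega))
  obtain ⟨S, hS, hSb, hSR⟩ := hC m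
  set y : ℕ → ℝ := fun j => ((D j : ℝ) - powSum S j) / (ρ ^ j * r) - θ * M j with hy
  have hyb : ∀ j ∈ J, |y j| ≤ 3 * θ * κ := by
    intro j hj
    set X := (D j : ℝ) / r ^ (j + 1) with hX
    have e1 : y j = (X - θ * M j) + X * ((r / ρ) ^ j - 1) - powSum S j / (ρ ^ j * r) := by
      simp only [hy, hX]
      rw [div_pow]
      field_simp
      ring
    have b1 := hDb j hj
    have b2 : |X * ((r / ρ) ^ j - 1)| ≤ θ * κ := by
      have hXb : |X| ≤ θ * (M j + κ) := by
        have := abs_sub_abs_le_abs_sub X (θ * M j)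
        have h2 : |θ * M j| = θ * M j := abs_of_nonneg (mul_nonneg hθ.le (hM0 j))
        change |X - θ * M j| ≤ θ * κ at b1
        rw [h2] at this
        linarith
      rw [abs_mul]
      calc |X| * |(r / ρ) ^ j - 1| ≤ θ * (M j + κ) * |(r / ρ) ^ j - 1| := by gcongr
        _ = θ * ((M j + κ) * |(r / ρ) ^ j - 1|) := by ring
        _ ≤ _ := by gcongr; exact hr1 j hj
    have b3 : |(powSum S j : ℝ) / (ρ ^ j * r)| ≤ θ * κ := by
      rw [abs_of_nonneg (by positivity)]
      refine le_trans ?_ (hr2 j hj)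
      rw [div_le_iff₀ (by positivity)]
      have h1 : (powSum S j : ℝ) ≤ C * (m + 1) * (P * 2 ^ m) ^ j := by exact_mod_cast hSb j hj
      have h2 : ((2 : ℝ) ^ m) ≤ 2 * ρ := by exact_mod_cast hm2
      have h3 : (m : ℝ) = Nat.log 2 ρ + 1 := by rw [hm]; push_cast; ring
      calc (powSum S j : ℝ) ≤ C * (m + 1) * (P * 2 ^ m) ^ j := h1
        _ ≤ C * (m + 1) * (P * (2 * ρ)) ^ j := by gcongr
        _ = _ := by
          rw [h3, ← mul_assoc (P : ℝ), mul_pow]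
          field_simp
          ring
    change |X - θ * M j| ≤ θ * κ at b1
    rw [e1]
    have t1 := abs_sub ((X - θ * M j) + X * ((r / ρ) ^ j - 1)) (powSum S j / (ρ ^ j * r))
    have t2 := abs_add_le (X - θ * M j) (X * ((r / ρ) ^ j - 1))
    linarith
  obtain ⟨a, ha1, ha2⟩ := hcomb y _ hyb
  set w : ℕ → ℝ := fun i => r * (θ * c i + a i) with hw
  have hw0 : ∀ i ∈ Finset.Icc 1 P, 0 ≤ w i := by
    intro i hi
    refine mul_nonneg hr0.le ?_
    have h1 := ha2 i hi
    have h2 : A * (3 * θ * κ) ≤ θ * c₀ := by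
      have : A * (3 * θ * κ) = θ * c₀ * (A / (A + 1)) := by
        rw [hκ]; field_simp
      rw [this]
      refine mul_le_of_le_one_right (by positivity) ?_
      rw [div_le_one (by positivity)]
      linarith
    have h3 : θ * c₀ ≤ θ * c i := mul_le_mul_of_nonneg_left (hcc i hi) hθ.le
    have := neg_abs_le (a i)
    linarith
  have hwsum : ∀ j ∈ J, ∑ i ∈ Finset.Icc 1 P, w i * ((i : ℝ) * ρ) ^ j =
      (D j : ℝ) - powSum S j := by
    intro j hj
    calc ∑ i ∈ Finset.Icc 1 P, w i * ((i : ℝ) * ρ) ^ j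
        = ρ ^ j * r * (θ * M j + ∑ i ∈ Finset.Icc 1 P, a i * (i : ℝ) ^ j) := by
          simp only [hM, hw, Finset.mul_sum, ← Finset.sum_add_distrib]
          refine Finset.sum_congr rfl fun i _ => ?_
          rw [mul_pow]
          ring
      _ = _ := by
          rw [ha1 j hj]
          simp only [hy]
          field_simp
          ring
  set T := multiples P ρ fun i => ⌊w i⌋₊ with hT
  have hTpos : ∀ x ∈ T, 0 < x := fun x hx => pos_of_mem_multiples hρ1 hx
  have hR := hD.add_sub 0 (S + T) (by simp) (fun x hx => by
    rcases Multiset.mem_add.1 hx with h | h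
    exacts [hS x h, hTpos x h])
  obtain ⟨mu, hmu, hmu'⟩ := hSR _ hR (by
    intro j hj
    have h1 := abs_sum_sub_sum_floor_le P ρ w hw0 j
    rw [hwsum j hj] at h1
    have h2 : ((powSum T j : ℕ) : ℝ) = ∑ i ∈ Finset.Icc 1 P, (⌊w i⌋₊ : ℝ) * ((i : ℝ) * ρ) ^ j := by
      rw [hT, powSum_multiples]
      push_cast
      rfl
    rw [← h2] at h1
    have h3 : (P : ℝ) * (P * ρ) ^ j ≤ P * (P * 2 ^ m) ^ j := by
      gcongr
      exact_mod_cast hm1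
    have h4 : |(D j : ℝ) + powSum 0 j - powSum (S + T) j| ≤ P * (P * 2 ^ m) ^ j := by
      rw [powSum_add]
      have : powSum 0 j = 0 := by simp [powSum]
      rw [this]
      push_cast
      rw [add_zero, ← sub_sub]
      exact h1.trans h3
    exact_mod_cast h4)
  refine ⟨mu + T, fun x hx => ?_, fun j hj => ?_⟩
  · rcases Multiset.mem_add.1 hx with h | h
    exacts [hmu x h, hTpos x h]
  · rw [powSum_add]
    push_cast
    rw [hmu' j hj, powSum_add]
    have : powSum 0 j = 0 := by simp [powSum]
    rw [this]
    push_cast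
    ring

/-- The polynomial `∑_{ℓ ∈ J} β_ℓ x ^ ℓ`. -/
noncomputable def energy (J : Finset ℕ) (β : ℕ → ℝ) (x : ℝ) : ℝ := ∑ ℓ ∈ J, β ℓ * x ^ ℓ

theorem continuous_energy (J : Finset ℕ) (β : ℕ → ℝ) : Continuous (energy J β) := by
  unfold energy
  fun_prop

theorem differentiable_energy (J : Finset ℕ) (β : ℕ → ℝ) : Differentiable ℝ (energy J β) := by
  unfold energy
  fun_prop

theorem eventually_energy_ne_zero (J : Finset ℕ) (hJ : J.Nonempty) (β : ℕ → ℝ)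
    (hβ : ∀ j ∈ J, β j ≠ 0) (x₀ : ℝ) : ∀ᶠ x in nhdsWithin x₀ {x₀}ᶜ, energy J β x ≠ 0 := by
  set f : Polynomial ℝ := ∑ ℓ ∈ J, Polynomial.C (β ℓ) * Polynomial.X ^ ℓ with hf
  have hev : ∀ x, f.eval x = energy J β x := fun x => by
    simp [hf, energy, Polynomial.eval_finsetSum]
  have hf0 : f ≠ 0 := by
    obtain ⟨j, hj⟩ := hJ
    intro h
    have h1 := congrArg (fun g => Polynomial.coeff g j) h
    simp only [hf, Polynomial.finsetSum_coeff, Polynomial.coeff_C_mul, Polynomial.coeff_X_pow,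
      Polynomial.coeff_zero] at h1
    simp [hj] at h1
    exact hβ j hj h1
  have h2 : (↑f.roots.toFinset : Set ℝ)ᶜ ∪ {x₀} ∈ nhds x₀ := by
    have : ((↑(f.roots.toFinset.erase x₀) : Set ℝ))ᶜ ∈ nhds x₀ :=
      (Finset.finite_toSet _).isClosed.isOpen_compl.mem_nhds (by simp)
    refine Filter.mem_of_superset this fun x hx => ?_
    by_cases h : x = x₀
    · exact Or.inr h
    · refine Or.inl fun h' => hx ?_
      simp only [Finset.coe_erase]
      exact ⟨h', h⟩
  filter_upwards [mem_nhdsWithin_of_mem_nhds h2, self_mem_nhdsWithin] with x hx hx' h0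
  rcases hx with h | h
  · refine h ?_
    rw [Finset.mem_coe, Multiset.mem_toFinset, Polynomial.mem_roots hf0, Polynomial.IsRoot, hev]
    exact h0
  · exact hx' h

theorem energy_ne_zero_of_integrable (J : Finset ℕ) (hJ : J.Nonempty) (β : ℕ → ℝ)
    (hβ : ∀ j ∈ J, β j ≠ 0) (j : ℕ)
    (hint : IntegrableOn (fun x : ℝ => x ^ j / (Real.exp (energy J β x) - 1)) (Set.Ioi 0))
    (x₀ : ℝ) (hx₀ : 0 < x₀) : energy J β x₀ ≠ 0 := by
  intro h0
  have hii : IntervalIntegrable (fun x : ℝ => x ^ j / (Real.exp (energy J β x) - 1)) volume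
      (x₀ / 2) (2 * x₀) := by
    rw [intervalIntegrable_iff_integrableOn_Ioc_of_le (by linarith)]
    exact hint.mono_set fun x hx => lt_trans (by positivity) hx.1
  refine not_intervalIntegrable_of_sub_inv_isBigO_punctured (c := x₀) ?_ (by linarith) ?_ hii
  · have hd : DifferentiableAt ℝ (fun x => Real.exp (energy J β x) - 1) x₀ :=
      ((differentiable_energy J β).exp x₀).sub_const 1
    have hO := hd.isBigO_sub
    simp only [h0, Real.exp_zero, sub_self, sub_zero] at hO
    have hO' := hO.mono (nhdsWithin_le_nhds (s := {x₀}ᶜ))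
    have hinv := hO'.inv_rev (by
      filter_upwards [eventually_energy_ne_zero J hJ β hβ x₀] with x hx h
      rw [sub_eq_zero, Real.exp_eq_one_iff] at h
      exact absurd h hx)
    have hpow : (fun _ : ℝ => (1 : ℝ)) =O[nhdsWithin x₀ {x₀}ᶜ] fun x : ℝ => x ^ j := by
      have : Filter.Tendsto (fun x : ℝ => x ^ j) (nhdsWithin x₀ {x₀}ᶜ) (nhds (x₀ ^ j)) :=
        ((continuous_pow j).tendsto x₀).mono_left nhdsWithin_le_nhds
      refine Asymptotics.IsBigO.of_bound (2 / x₀ ^ j) ?_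
      have hp : 0 < x₀ ^ j := by positivity
      filter_upwards [this.eventually (lt_mem_nhds (half_lt_self hp))] with x hx
      rw [norm_one, Real.norm_eq_abs, abs_of_pos ((half_pos hp).trans hx), div_mul_eq_mul_div,
        one_le_div hp]
      linarith
    have := hpow.mul hinv
    simpa [div_eq_mul_inv] using this
  · rw [Set.uIcc_of_le (by linarith)]
    constructor <;> linarith

theorem energy_pos_of_integral (J : Finset ℕ) (hJ : J.Nonempty) (β : ℕ → ℝ)
    (hβ : ∀ j ∈ J, β j ≠ 0) (j : ℕ) (a : ℝ) (ha : 0 < a)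
    (hint : ∫ x in Set.Ioi (0 : ℝ), x ^ j / (Real.exp (energy J β x) - 1) = a)
    (x : ℝ) (hx : 0 < x) : 0 < energy J β x := by
  have hi : IntegrableOn (fun x : ℝ => x ^ j / (Real.exp (energy J β x) - 1)) (Set.Ioi 0) := by
    by_contra h
    rw [integral_undef h] at hint
    exact ha.ne hint
  have hne := energy_ne_zero_of_integrable J hJ β hβ j hi
  by_contra hcon
  have hneg : energy J β x < 0 := lt_of_le_of_ne (not_lt.1 hcon) (hne x hx)
  have hall : ∀ y : ℝ, 0 < y → energy J β y < 0 := by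
    intro y hy
    by_contra h
    have hpos : 0 < energy J β y := lt_of_le_of_ne (not_lt.1 h) (hne y hy).symm
    have hconn : IsPreconnected (Set.Ioi (0 : ℝ)) := isPreconnected_Ioi
    obtain ⟨z, hz, hz0⟩ := hconn.intermediate_value hx hy
      (continuous_energy J β).continuousOn ⟨hneg.le, hpos.le⟩
    exact hne z hz hz0
  have : ∫ x in Set.Ioi (0 : ℝ), x ^ j / (Real.exp (energy J β x) - 1) ≤ 0 := by
    refine setIntegral_nonpos measurableSet_Ioi fun y hy => ?_
    refine div_nonpos_of_nonneg_of_nonpos (pow_nonneg (le_of_lt hy) j) ?_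
    have := Real.exp_lt_one_iff.2 (hall y hy)
    linarith
  linarith

theorem exists_pow_le_energy (J : Finset ℕ) (hJ : J.Nonempty) (β : ℕ → ℝ)
    (hβ : ∀ j ∈ J, β j ≠ 0) (hpos : ∀ x : ℝ, 0 < x → 0 < energy J β x) :
    ∃ C : ℝ, 0 < C ∧ ∀ j ∈ J, ∀ x : ℝ, 0 < x → x ^ j ≤ C * energy J β x := by
  set a := J.min' hJ with ha
  set b := J.max' hJ with hb
  have haJ : a ∈ J := J.min'_mem hJ
  have hbJ : b ∈ J := J.max'_mem hJ
  -- lower bound near zero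
  have h0 : ∃ δ : ℝ, 0 < δ ∧ δ ≤ 1 ∧ ∃ c : ℝ, 0 < c ∧
      ∀ x : ℝ, 0 < x → x < δ → c * x ^ a ≤ energy J β x := by
    set q : ℝ → ℝ := fun x => ∑ ℓ ∈ J, β ℓ * x ^ (ℓ - a) with hq
    have hqe : ∀ x : ℝ, energy J β x = x ^ a * q x := by
      intro x
      simp only [energy, hq, Finset.mul_sum]
      refine Finset.sum_congr rfl fun ℓ hℓ => ?_
      have : a ≤ ℓ := J.min'_le ℓ hℓ
      rw [mul_left_comm, ← pow_add, Nat.add_sub_cancel' this]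
    have hqc : Continuous q := by simp only [hq]; fun_prop
    have hq0 : q 0 = β a := by
      simp only [hq]
      rw [Finset.sum_eq_single a]
      · simp
      · intro ℓ hℓ hne
        have : a ≤ ℓ := J.min'_le ℓ hℓ
        rw [zero_pow (by omega), mul_zero]
      · exact fun h => absurd haJ h
    have hqpos : ∀ x : ℝ, 0 < x → 0 < q x := by
      intro x hx
      have := hpos x hx
      rw [hqe] at this
      exact pos_of_mul_pos_right this (by positivity)
    have hβa : 0 < β a := by
      refine lt_of_le_of_ne ?_ (hβ a haJ).symm
      rw [← hq0]
      have ht : Filter.Tendsto q (nhdsWithin 0 (Set.Ioi 0)) (nhds (q 0)) :=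
        (hqc.tendsto 0).mono_left nhdsWithin_le_nhds
      exact ge_of_tendsto ht (by
        filter_upwards [self_mem_nhdsWithin] with x hx using (hqpos x hx).le)
    have hev : ∀ᶠ x in nhds (0 : ℝ), β a / 2 < q x := by
      refine (hqc.tendsto 0).eventually (lt_mem_nhds ?_)
      rw [hq0]; linarith
    obtain ⟨δ, hδ, hball⟩ := Metric.eventually_nhds_iff.1 hev
    refine ⟨min δ 1, by positivity, min_le_right _ _, β a / 2, by positivity,
      fun x hx hxδ => ?_⟩
    have := hball (y := x) (by
      rw [Real.dist_eq, sub_zero, abs_of_pos hx]; exact lt_of_lt_of_le hxδ (min_le_left _ _))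
    rw [hqe, mul_comm]
    exact mul_le_mul_of_nonneg_left this.le (by positivity)
  have hinf : ∃ R : ℝ, 1 ≤ R ∧ ∃ c : ℝ, 0 < c ∧
      ∀ x : ℝ, R < x → c * x ^ b ≤ energy J β x := by
    have hlim : Filter.Tendsto (fun x : ℝ => energy J β x / x ^ b) Filter.atTop
        (nhds (∑ ℓ ∈ J, if ℓ = b then β b else 0)) := by
      have : ∀ x : ℝ, energy J β x / x ^ b = ∑ ℓ ∈ J, β ℓ * (x ^ ℓ / x ^ b) := by
        intro x
        rw [energy, Finset.sum_div]
        exact Finset.sum_congr rfl fun ℓ _ => by ring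
      simp only [this]
      refine tendsto_finsetSum _ fun ℓ hℓ => ?_
      have hle : ℓ ≤ b := J.le_max' ℓ hℓ
      split_ifs with h
      · rw [h]
        refine tendsto_const_nhds.congr' ?_
        filter_upwards [Filter.eventually_gt_atTop 0] with x hx
        rw [div_self (by positivity), mul_one]
      · have := (tendsto_pow_div_pow_atTop_zero (𝕜 := ℝ) (lt_of_le_of_ne hle h)).const_mul (β ℓ)
        rwa [mul_zero] at this
    rw [Finset.sum_ite_eq' J b, if_pos hbJ] at hlim
    have hβb : 0 < β b := by
      refine lt_of_le_of_ne ?_ (hβ b hbJ).symm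
      refine ge_of_tendsto hlim ?_
      filter_upwards [Filter.eventually_gt_atTop 0] with x hx
      exact div_nonneg (hpos x hx).le (by positivity)
    have hev := hlim.eventually (lt_mem_nhds (show β b / 2 < β b by linarith))
    obtain ⟨R, hR⟩ := Filter.eventually_atTop.1 hev
    refine ⟨max R 1, le_max_right _ _, β b / 2, by positivity, fun x hx => ?_⟩
    have h1 : 0 < x := lt_of_lt_of_le one_pos ((le_max_right R 1).trans hx.le)
    have := hR x ((le_max_left R 1).trans hx.le)
    rw [lt_div_iff₀ (by positivity)] at this
    exact this.le
  obtain ⟨δ, hδ, hδ1, c₁, hc₁, hnear⟩ := h0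
  obtain ⟨R, hR1, c₂, hc₂, hfar⟩ := hinf
  obtain ⟨x₀, hx₀, hmin⟩ := (isCompact_Icc (a := δ) (b := R)).exists_isMinOn
    ⟨δ, le_rfl, hδ1.trans hR1⟩ (continuous_energy J β).continuousOn
  have hm : 0 < energy J β x₀ := hpos x₀ (lt_of_lt_of_le hδ hx₀.1)
  refine ⟨c₁⁻¹ + c₂⁻¹ + R ^ b / energy J β x₀, by positivity, fun j hj x hx => ?_⟩
  have hE := hpos x hx
  have hja : a ≤ j := J.min'_le j hj
  have hjb : j ≤ b := J.le_max' j hj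
  have t1 : 0 ≤ c₁⁻¹ * energy J β x := by positivity
  have t2 : 0 ≤ c₂⁻¹ * energy J β x := by positivity
  have t3 : 0 ≤ R ^ b / energy J β x₀ * energy J β x := by positivity
  rw [add_mul, add_mul]
  rcases lt_or_ge x δ with h | h
  · have h1 : x ^ j ≤ x ^ a := pow_le_pow_of_le_one hx.le (by linarith) hja
    have h2 : x ^ a ≤ c₁⁻¹ * energy J β x := by
      rw [le_inv_mul_iff₀ hc₁]; exact hnear x hx h
    linarith
  · rcases lt_or_ge R x with h' | h'
    · have h1 : x ^ j ≤ x ^ b := pow_le_pow_right₀ (by linarith) hjb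
      have h2 : x ^ b ≤ c₂⁻¹ * energy J β x := by
        rw [le_inv_mul_iff₀ hc₂]; exact hfar x h'
      linarith
    · have h1 : x ^ j ≤ R ^ b :=
        (pow_le_pow_left₀ hx.le h' j).trans (pow_le_pow_right₀ hR1 hjb)
      have h2 : R ^ b ≤ R ^ b / energy J β x₀ * energy J β x := by
        rw [div_mul_eq_mul_div, le_div_iff₀ hm]
        exact mul_le_mul_of_nonneg_left (hmin ⟨h, h'⟩) (by positivity)
      linarith

theorem sum_indicator_Ioc_eq (f : ℝ → ℝ) (r : ℝ) (hr : 0 < r) (K : ℕ) (x : ℝ) (hx : 0 < x) :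
    ∑ k ∈ Finset.Icc 1 K, (Set.Ioc (((k - 1 : ℕ) : ℝ) / r) (k / r)).indicator
      (fun _ => f (k / r)) x = if ⌈x * r⌉₊ ≤ K then f (⌈x * r⌉₊ / r) else 0 := by
  have hmem : ∀ k ∈ Finset.Icc 1 K, (x ∈ Set.Ioc (((k - 1 : ℕ) : ℝ) / r) (k / r) ↔
      ⌈x * r⌉₊ = k) := by
    intro k hk
    have hk1 := (Finset.mem_Icc.1 hk).1
    rw [Nat.ceil_eq_iff (by omega), Set.mem_Ioc, div_lt_iff₀ hr, le_div_iff₀ hr]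
  have h1 : 1 ≤ ⌈x * r⌉₊ := Nat.ceil_pos.2 (by positivity)
  rw [Finset.sum_congr rfl fun k hk => by rw [Set.indicator_apply, if_congr (hmem k hk) rfl rfl]]
  rw [Finset.sum_ite_eq]
  simp [h1]

/-- Riemann sums of mesh `1 / √n` over a growing range converge to the integral. -/
theorem tendsto_riemann_sum (f : ℝ → ℝ) (C c : ℝ) (hc : 0 < c)
    (hb : ∀ x : ℝ, 0 < x → |f x| ≤ C * Real.exp (-(c * x)))
    (hcont : ∀ᵐ x ∂(volume.restrict (Set.Ioi (0 : ℝ))), ContinuousAt f x)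
    (K : ℕ → ℕ) (hK : ∀ n, n ≤ K n) :
    Filter.Tendsto (fun n : ℕ => (Real.sqrt n)⁻¹ * ∑ k ∈ Finset.Icc 1 (K n), f (k / Real.sqrt n))
      Filter.atTop (nhds (∫ x in Set.Ioi (0 : ℝ), f x)) := by
  set G : ℕ → ℝ → ℝ := fun n x => ∑ k ∈ Finset.Icc 1 (K n),
    (Set.Ioc (((k - 1 : ℕ) : ℝ) / Real.sqrt n) (k / Real.sqrt n)).indicator
      (fun _ => f (k / Real.sqrt n)) x with hG
  have hsqrt : Filter.Tendsto (fun n : ℕ => Real.sqrt n) Filter.atTop Filter.atTop :=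
    Real.tendsto_sqrt_atTop.comp tendsto_natCast_atTop_atTop
  have hlim : Filter.Tendsto (fun n => ∫ x in Set.Ioi (0 : ℝ), G n x) Filter.atTop
      (nhds (∫ x in Set.Ioi (0 : ℝ), f x)) := by
    refine tendsto_integral_of_dominated_convergence (fun x => |C| * Real.exp (-c * x)) ?_ ?_ ?_ ?_
    · intro n
      refine Measurable.aestronglyMeasurable ?_
      exact Finset.measurable_fun_sum _ fun k _ => measurable_const.indicator measurableSet_Ioc
    · exact (integrableOn_exp_mul_Ioi (by linarith : -c < 0) 0).const_mul _
    · intro n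
      refine (ae_restrict_iff' measurableSet_Ioi).2 (Filter.Eventually.of_forall fun x hx => ?_)
      have hx0 : (0 : ℝ) < x := hx
      rcases Nat.eq_zero_or_pos n with hn | hn
      · have : G n x = 0 := by
          simp only [hG, hn, Nat.cast_zero, Real.sqrt_zero, div_zero, Set.Ioc_self,
            Set.indicator_empty, Finset.sum_const_zero]
        rw [this, norm_zero]
        positivity
      · have hr : 0 < Real.sqrt n := Real.sqrt_pos.2 (by exact_mod_cast hn)
        simp only [hG]
        rw [sum_indicator_Ioc_eq f _ hr _ x hx0]
        split_ifs with h
        · have h1 : x ≤ ⌈x * Real.sqrt n⌉₊ / Real.sqrt n := by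
            rw [le_div_iff₀ hr]; exact Nat.le_ceil _
          refine (hb _ (hx0.trans_le h1)).trans ?_
          refine mul_le_mul (le_abs_self C) (Real.exp_le_exp.2 ?_) (Real.exp_pos _).le
            (abs_nonneg C)
          rw [neg_mul]
          exact neg_le_neg (mul_le_mul_of_nonneg_left h1 hc.le)
        · rw [norm_zero]; positivity
    · filter_upwards [hcont, ae_restrict_mem measurableSet_Ioi] with x hx hx0
      have hx0 : (0 : ℝ) < x := hx0
      have h1 : Filter.Tendsto (fun n : ℕ => (⌈x * Real.sqrt n⌉₊ : ℝ) / Real.sqrt n) Filter.atTop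
          (nhds x) := (tendsto_nat_ceil_mul_div_atTop hx0.le).comp hsqrt
      refine (hx.tendsto.comp h1).congr' ?_
      filter_upwards [hsqrt.eventually_ge_atTop x, Filter.eventually_gt_atTop 0] with n hn hn0
      have hr : 0 < Real.sqrt n := Real.sqrt_pos.2 (by exact_mod_cast hn0)
      simp only [hG]
      rw [sum_indicator_Ioc_eq f _ hr _ x hx0, if_pos]
      · rfl
      · refine le_trans (Nat.ceil_le.2 ?_) (hK n)
        calc x * Real.sqrt n ≤ Real.sqrt n * Real.sqrt n := by gcongr
          _ = n := Real.mul_self_sqrt (Nat.cast_nonneg n)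
  refine hlim.congr' ?_
  filter_upwards [Filter.eventually_gt_atTop 0] with n hn0
  have hr : 0 < Real.sqrt n := Real.sqrt_pos.2 (by exact_mod_cast hn0)
  simp only [hG]
  rw [integral_finsetSum, Finset.mul_sum]
  · refine Finset.sum_congr rfl fun k hk => ?_
    have hk1 := (Finset.mem_Icc.1 hk).1
    rw [integral_indicator_const _ measurableSet_Ioc, smul_eq_mul]
    congr 1
    rw [measureReal_restrict_apply measurableSet_Ioc, Set.inter_eq_left.2, Real.volume_real_Ioc_of_le]
    · rw [Nat.cast_sub hk1]
      field_simp
      push_cast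
      ring
    · gcongr
      exact_mod_cast Nat.sub_le k 1
    · intro y hy
      exact lt_of_le_of_lt (by positivity) hy.1
  · intro k _
    refine (integrable_indicator_iff measurableSet_Ioc).2 ?_
    refine integrableOn_const ?_
    refine ne_top_of_le_ne_top ?_ (Measure.restrict_apply_le _ _)
    simp

theorem sum_exp_neg_le (I : Finset ℕ) (hI : ∀ k ∈ I, 1 ≤ k) (c r : ℝ) (hc : 0 < c) (hr : 0 < r) :
    ∑ k ∈ I, Real.exp (-(c * (k / r))) ≤ r / c := by
  set q := Real.exp (-(c / r)) with hq
  have hq0 : 0 < q := Real.exp_pos _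
  have hq1 : q < 1 := Real.exp_lt_one_iff.2 (by simp; positivity)
  have hterm : ∀ k : ℕ, Real.exp (-(c * (k / r))) = q ^ k := by
    intro k
    rw [hq, ← Real.exp_nat_mul]
    ring_nf
  have hsub : I ⊆ Finset.Ico 1 (I.sup id + 1) := fun k hk =>
    Finset.mem_Ico.2 ⟨hI k hk, Nat.lt_succ_of_le (Finset.le_sup (f := id) hk)⟩
  calc ∑ k ∈ I, Real.exp (-(c * (k / r))) = ∑ k ∈ I, q ^ k := Finset.sum_congr rfl fun k _ => hterm k
    _ ≤ ∑ k ∈ Finset.Ico 1 (I.sup id + 1), q ^ k :=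
        Finset.sum_le_sum_of_subset_of_nonneg hsub fun _ _ _ => by positivity
    _ = q * ∑ k ∈ Finset.range (I.sup id), q ^ k := by
        rw [Finset.sum_Ico_eq_sum_range, Finset.mul_sum]
        simp [pow_add]
    _ ≤ q * (1 - q)⁻¹ := by
        gcongr
        rw [← tsum_geometric_of_lt_one hq0.le hq1]
        exact (summable_geometric_of_lt_one hq0.le hq1).sum_le_tsum _ fun m _ => by positivity
    _ ≤ r / c := by
        rw [← div_eq_mul_inv, div_le_div_iff₀ (by linarith) hc]
        have h1 := Real.add_one_le_exp (c / r)
        have h2 : q * Real.exp (c / r) = 1 := by rw [hq, ← Real.exp_add]; simp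
        have h3 : q * (c / r + 1) ≤ 1 :=
          (mul_le_mul_of_nonneg_left h1 hq0.le).trans_eq h2
        have h4 : q * c / r * r = q * c := by field_simp
        have h5 : q * c / r ≤ 1 - q := by
          have : q * (c / r + 1) = q * c / r + q := by ring
          linarith
        calc q * c = q * c / r * r := h4.symm
          _ ≤ (1 - q) * r := by gcongr
          _ = _ := by ring

theorem exp_neg_mul_le {p : ℝ → ℝ} {C : ℝ} (hC : 0 < C)
    (hgrow : ∀ x : ℝ, 0 < x → x ≤ 1 + C * p x) (a : ℝ) (ha : 0 < a) (x : ℝ) (hx : 0 < x) :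
    Real.exp (-(a * p x)) ≤ Real.exp (a / C) * Real.exp (-(a / C * x)) := by
  rw [← Real.exp_add, Real.exp_le_exp]
  have h := mul_le_mul_of_nonneg_left (hgrow x hx) (div_pos ha hC).le
  have h2 : a / C * (1 + C * p x) = a / C + a * p x := by field_simp
  linarith

/-- Statistics dominated by the energy deviate from their mean by a macroscopic amount only with
exponentially small Boltzmann weight, uniformly in the set of allowed parts. -/
theorem exists_deviation_rate {p : ℝ → ℝ} (hpos : ∀ x : ℝ, 0 < x → 0 < p x) {C : ℝ} (hC : 0 < C)
    (hgrow : ∀ x : ℝ, 0 < x → x ≤ 1 + C * p x) (ε : ℝ) (hε : 0 < ε) :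
    ∃ c : ℝ, 0 < c ∧ ∀ r : ℝ, 0 < r → ∀ I : Finset ℕ, (∀ k ∈ I, 1 ≤ k) → ∀ g : ℝ → ℝ,
      (∀ x : ℝ, 0 < x → 0 ≤ g x) → (∀ x : ℝ, 0 < x → g x ≤ p x) → ∀ B : Finset (Multiset ℕ),
      (∀ lam ∈ B, ∀ x ∈ lam, x ∈ I) →
      (∀ lam ∈ B, ε * r ≤ |(lam.map fun k : ℕ => g (k / r)).sum -
        ∑ k ∈ I, g (k / r) * (Real.exp (p (k / r)) - 1)⁻¹|) →
      ∑ lam ∈ B, boltzmann (fun k : ℕ => p (k / r)) lam ≤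
        2 * partitionFn (fun k : ℕ => p (k / r)) I * Real.exp (-(c * r)) := by
  set V : ℝ := 10 * (Real.exp (1 / 8 / C) * (8 * C)) with hV
  have hV0 : 0 < V := by positivity
  set s : ℝ := min (1 / 4) (ε / (2 * V)) with hs
  have hs0 : 0 < s := lt_min (by norm_num) (by positivity)
  have hsV : s * V ≤ ε / 2 := by
    have : s ≤ ε / (2 * V) := min_le_right _ _
    calc s * V ≤ ε / (2 * V) * V := by gcongr
      _ = ε / 2 := by field_simp
  refine ⟨s * ε / 2, by positivity, fun r hr I hI g hg0 hg B hB hdev => ?_⟩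
  have hkr : ∀ k ∈ I, (0 : ℝ) < k / r := fun k hk =>
    div_pos (by exact_mod_cast hI k hk) hr
  refine (sum_boltzmann_deviation_le (fun k : ℕ => p (k / r)) (fun k : ℕ => g (k / r)) I
    (fun k hk => hpos _ (hkr k hk)) (fun k hk => hg0 _ (hkr k hk)) (fun k hk => hg _ (hkr k hk))
    B hB (ε * r) s hs0.le (min_le_left _ _) hdev).trans ?_
  have hZ : 0 < partitionFn (fun k : ℕ => p (k / r)) I :=
    partitionFn_pos fun k hk => hpos _ (hkr k hk)
  gcongr
  have hsum : ∑ k ∈ I, 10 * Real.exp (-(p (k / r) / 8)) ≤ V * r := by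
    calc ∑ k ∈ I, 10 * Real.exp (-(p (k / r) / 8))
        ≤ ∑ k ∈ I, 10 * (Real.exp (1 / 8 / C) * Real.exp (-(1 / 8 / C * (k / r)))) := by
          refine Finset.sum_le_sum fun k hk => ?_
          have := exp_neg_mul_le hC hgrow (1 / 8) (by norm_num) _ (hkr k hk)
          have h2 : p (k / r) / 8 = 1 / 8 * p (k / r) := by ring
          rw [h2]
          gcongr
      _ = 10 * Real.exp (1 / 8 / C) * ∑ k ∈ I, Real.exp (-(1 / 8 / C * (k / r))) := by
          rw [Finset.mul_sum]
          exact Finset.sum_congr rfl fun k _ => by ring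
      _ ≤ 10 * Real.exp (1 / 8 / C) * (r / (1 / 8 / C)) := by
          gcongr
          exact sum_exp_neg_le I hI _ r (by positivity) hr
      _ = V * r := by rw [hV]; field_simp
  have h1 : s ^ 2 * ∑ k ∈ I, 10 * Real.exp (-(p (k / r) / 8)) ≤ s * (ε / 2) * r := by
    calc s ^ 2 * ∑ k ∈ I, 10 * Real.exp (-(p (k / r) / 8)) ≤ s ^ 2 * (V * r) := by gcongr
      _ = s * (s * V) * r := by ring
      _ ≤ s * (ε / 2) * r := by gcongr
  linarith

theorem continuousAt_indicator_of_notMem_frontier {S : Set ℝ} {f : ℝ → ℝ} {x : ℝ}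
    (hf : ContinuousAt f x) (hx : x ∉ frontier S) : ContinuousAt (S.indicator f) x := by
  by_cases hS : x ∈ S
  · have h := mem_interior_iff_mem_nhds.1 ((mem_interior_iff_notMem_frontier hS).2 hx)
    refine hf.congr ?_
    filter_upwards [h] with y hy using (Set.indicator_of_mem hy f).symm
  · rw [← frontier_compl] at hx
    have h := mem_interior_iff_mem_nhds.1 ((mem_interior_iff_notMem_frontier hS).2 hx)
    refine (continuousAt_const (y := (0 : ℝ))).congr ?_
    filter_upwards [h] with y hy using (Set.indicator_of_notMem hy f).symm

/-- Convergence of the mean of a statistic restricted to parts in a scaled region. -/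
theorem tendsto_mean {p : ℝ → ℝ} (hp : Continuous p) (hpos : ∀ x : ℝ, 0 < x → 0 < p x) {C : ℝ}
    (hC : 0 < C) (hgrow : ∀ x : ℝ, 0 < x → x ≤ 1 + C * p x) (g : ℝ → ℝ) (hg : Continuous g)
    (S : Set ℝ) (hS : MeasurableSet S) (hfr : volume (frontier S) = 0) (M : ℝ)
    (hg0 : ∀ x ∈ S, 0 < x → 0 ≤ g x) (hgM : ∀ x ∈ S, 0 < x → g x ≤ M * p x)
    (K : ℕ → ℕ) (hK : ∀ n, n ≤ K n) :
    Filter.Tendsto (fun n : ℕ => (Real.sqrt n)⁻¹ *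
      ∑ k ∈ (Finset.Icc 1 (K n)).filter (fun k : ℕ => (k : ℝ) / Real.sqrt n ∈ S),
        g (k / Real.sqrt n) * (Real.exp (p (k / Real.sqrt n)) - 1)⁻¹)
      Filter.atTop (nhds (∫ x in Set.Ioi (0 : ℝ) ∩ S, g x * (Real.exp (p x) - 1)⁻¹)) := by
  set f : ℝ → ℝ := S.indicator fun x => g x * (Real.exp (p x) - 1)⁻¹ with hf
  have hM : ∀ x ∈ S, 0 < x → 0 ≤ M := by
    intro x hx hx0
    by_contra h
    have h1 := hg0 x hx hx0
    have h2 := hgM x hx hx0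
    have h3 := mul_neg_of_neg_of_pos (not_le.1 h) (hpos x hx0)
    linarith
  have hb : ∀ x : ℝ, 0 < x →
      |f x| ≤ (|M| * Real.exp (1 / 2 / C)) * Real.exp (-(1 / 2 / C * x)) := by
    intro x hx
    by_cases hxS : x ∈ S
    · have h0 : 0 < Real.exp (p x) - 1 := by
        have := Real.add_one_lt_exp (hpos x hx).ne'
        linarith [hpos x hx]
      rw [hf, Set.indicator_of_mem hxS, abs_of_nonneg (mul_nonneg (hg0 x hxS hx) (inv_pos.2 h0).le)]
      calc g x * (Real.exp (p x) - 1)⁻¹ ≤ M * p x * (Real.exp (p x) - 1)⁻¹ := by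
            have := hgM x hxS hx
            gcongr
        _ = M * (p x * (Real.exp (p x) - 1)⁻¹) := by ring
        _ ≤ |M| * Real.exp (-(p x / 2)) := by
            have h1 := hM x hxS hx
            have h2 := mul_exp_sub_one_inv_le (p x) (hpos x hx)
            have h3 := le_abs_self M
            exact mul_le_mul h3 h2 (mul_nonneg (hpos x hx).le (inv_pos.2 h0).le) (abs_nonneg M)
        _ ≤ |M| * (Real.exp (1 / 2 / C) * Real.exp (-(1 / 2 / C * x))) := by
            have := exp_neg_mul_le hC hgrow (1 / 2) (by norm_num) x hx
            have h2 : p x / 2 = 1 / 2 * p x := by ring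
            rw [h2]
            gcongr
        _ = _ := by ring
    · rw [hf, Set.indicator_of_notMem hxS, abs_zero]
      positivity
  have hcont : ∀ᵐ x ∂(volume.restrict (Set.Ioi (0 : ℝ))), ContinuousAt f x := by
    have h1 : ∀ᵐ x ∂(volume.restrict (Set.Ioi (0 : ℝ))), x ∉ frontier S :=
      ae_restrict_of_ae (measure_eq_zero_iff_ae_notMem.1 hfr)
    filter_upwards [h1, ae_restrict_mem measurableSet_Ioi] with x hx hx0
    refine continuousAt_indicator_of_notMem_frontier ?_ hx
    refine hg.continuousAt.mul (ContinuousAt.inv₀ (by fun_prop) ?_)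
    have := Real.add_one_lt_exp (hpos x hx0).ne'
    have := hpos x hx0
    linarith
  have key := tendsto_riemann_sum f _ (1 / 2 / C) (by positivity) hb hcont K hK
  rw [hf, setIntegral_indicator hS] at key
  refine key.congr fun n => ?_
  congr 1
  rw [Finset.sum_filter]
  exact Finset.sum_congr rfl fun k _ => by simp [Set.indicator_apply]

/-- The union of the windows `[i, i + η)` for `1 ≤ i ≤ m`. -/
def windowSet (m : ℕ) (η : ℝ) : Set ℝ := ⋃ i ∈ Finset.Icc 1 m, Set.Ico (i : ℝ) (i + η)

theorem measurableSet_windowSet (m : ℕ) (η : ℝ) : MeasurableSet (windowSet m η) :=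
  Finset.measurableSet_biUnion _ fun _ _ => measurableSet_Ico

theorem one_le_of_mem_windowSet {m : ℕ} {η x : ℝ} (hx : x ∈ windowSet m η) : 1 ≤ x := by
  simp only [windowSet, Set.mem_iUnion] at hx
  obtain ⟨i, hi, h⟩ := hx
  have : (1 : ℝ) ≤ i := by exact_mod_cast (Finset.mem_Icc.1 hi).1
  exact this.trans h.1

theorem volume_frontier_windowSet (m : ℕ) (η : ℝ) : volume (frontier (windowSet m η)) = 0 := by
  unfold windowSet
  induction Finset.Icc 1 m using Finset.induction_on with
  | empty => simp
  | insert a s _ ih =>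
    rw [Finset.set_biUnion_insert]
    refine measure_mono_null ((frontier_union_subset _ _).trans
      (Set.union_subset_union Set.inter_subset_left Set.inter_subset_right)) ?_
    refine measure_union_null ?_ ih
    by_cases h : (a : ℝ) < a + η
    · rw [frontier_Ico h]
      exact (Set.toFinite _).measure_zero _
    · rw [Set.Ico_eq_empty h]
      simp

theorem integral_windowSet (m : ℕ) (η : ℝ) (h0 : 0 ≤ η) (h1 : η ≤ 1) (f : ℝ → ℝ)
    (hf : ContinuousOn f (Set.Ioi 0)) :
    ∫ x in Set.Ioi (0 : ℝ) ∩ windowSet m η, f x =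
      ∑ i ∈ Finset.Icc 1 m, ∫ x in (i : ℝ)..(i + η), f x := by
  have hsub : windowSet m η ⊆ Set.Ioi 0 := fun x hx =>
    lt_of_lt_of_le one_pos (one_le_of_mem_windowSet hx)
  rw [Set.inter_eq_right.2 hsub, windowSet, integral_biUnion_finset]
  · refine Finset.sum_congr rfl fun i _ => ?_
    rw [intervalIntegral.integral_of_le (by linarith), integral_Ico_eq_integral_Ioo,
      integral_Ioc_eq_integral_Ioo]
  · exact fun _ _ => measurableSet_Ico
  · intro i _ k _ hik
    refine Set.disjoint_left.2 fun x hx hy => hik ?_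
    have h2 : (i : ℝ) < k + 1 := by linarith [hx.1, hy.2]
    have h3 : (k : ℝ) < i + 1 := by linarith [hx.2, hy.1]
    have h4 : i < k + 1 := by exact_mod_cast h2
    have h5 : k < i + 1 := by exact_mod_cast h3
    omega
  · intro i hi
    have : (1 : ℝ) ≤ i := by exact_mod_cast (Finset.mem_Icc.1 hi).1
    refine IntegrableOn.mono_set (t := Set.Icc (i : ℝ) (i + η)) ?_ Set.Ico_subset_Icc_self
    refine (hf.mono fun x hx => ?_).integrableOn_Icc
    exact lt_of_lt_of_le (by linarith) hx.1

theorem tendsto_integral_windowSet (m : ℕ) (f : ℝ → ℝ) (hf : ContinuousOn f (Set.Ioi 0)) :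
    Filter.Tendsto (fun η : ℝ => η⁻¹ * ∫ x in Set.Ioi (0 : ℝ) ∩ windowSet m η, f x)
      (nhdsWithin 0 (Set.Ioi 0)) (nhds (∑ i ∈ Finset.Icc 1 m, f i)) := by
  have key : Filter.Tendsto
      (fun η : ℝ => ∑ i ∈ Finset.Icc 1 m, η⁻¹ * ∫ x in (i : ℝ)..(i + η), f x)
      (nhdsWithin 0 (Set.Ioi 0)) (nhds (∑ i ∈ Finset.Icc 1 m, f i)) := by
    refine tendsto_finsetSum _ fun i hi => ?_
    have hi0 : (0 : ℝ) < i := by exact_mod_cast (Finset.mem_Icc.1 hi).1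
    have hd : HasDerivAt (fun u => ∫ x in (i : ℝ)..u, f x) (f i) i := by
      refine intervalIntegral.integral_hasDerivAt_right (by simp) ?_
        (hf.continuousAt (Ioi_mem_nhds hi0))
      exact hf.stronglyMeasurableAtFilter isOpen_Ioi _ hi0
    have := hd.tendsto_slope_zero_right
    simpa using this
  refine key.congr' ?_
  filter_upwards [Ioc_mem_nhdsGT (zero_lt_one' ℝ)] with η hη
  rw [integral_windowSet m η hη.1.le hη.2 f hf, Finset.mul_sum]

theorem partitionFn_le_filter_mul_exp (P : ℕ → ℝ) (I : Finset ℕ) (hP : ∀ k ∈ I, 0 < P k)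
    (q : ℕ → Prop) :
    partitionFn P I ≤ partitionFn P (I.filter fun k => ¬ q k) *
      Real.exp (∑ k ∈ I.filter q, (Real.exp (P k) - 1)⁻¹) := by
  have h0 : 0 < partitionFn P (I.filter fun k => ¬ q k) :=
    partitionFn_pos fun k hk => hP k (Finset.mem_filter.1 hk).1
  have hsplit : partitionFn P I = (∏ k ∈ I.filter q, (1 - Real.exp (-P k))⁻¹) *
      partitionFn P (I.filter fun k => ¬ q k) :=
    (Finset.prod_filter_mul_prod_filter_not I q _).symm
  rw [hsplit, mul_comm, Real.exp_sum]
  refine mul_le_mul_of_nonneg_left ?_ h0.le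
  refine Finset.prod_le_prod (fun k hk => ?_) fun k hk => ?_
  · have := exp_neg_lt_one (hP k (Finset.mem_filter.1 hk).1)
    exact inv_nonneg.2 (by linarith)
  · have hk0 := hP k (Finset.mem_filter.1 hk).1
    have h1 : 1 < Real.exp (P k) := Real.one_lt_exp_iff.2 hk0
    have h2 : (1 - Real.exp (-P k))⁻¹ = (Real.exp (P k) - 1)⁻¹ + 1 := by
      rw [Real.exp_neg]
      have h3 : Real.exp (P k) - 1 ≠ 0 := by linarith
      have h4 : Real.exp (P k) ≠ 0 := by positivity
      field_simp
      ring
    rw [h2]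
    exact Real.add_one_le_exp _

/-- If each of finitely many bad events carries little Boltzmann weight, then multisets avoiding
all of them carry at least half of the total weight. -/
theorem exists_typical (P : ℕ → ℝ) (I : Finset ℕ) (hP : ∀ k ∈ I, 0 < P k) (J : Finset ℕ)
    (bad : ℕ → Multiset ℕ → Prop) (b : ℝ) (hb : J.card * b ≤ 1 / 4 * partitionFn P I)
    (hbad : ∀ j ∈ J, ∀ B : Finset (Multiset ℕ), (∀ lam ∈ B, ∀ x ∈ lam, x ∈ I) →
      (∀ lam ∈ B, bad j lam) → ∑ lam ∈ B, boltzmann P lam ≤ b) :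
    ∃ G : Finset (Multiset ℕ), (∀ lam ∈ G, ∀ x ∈ lam, x ∈ I) ∧
      (∀ lam ∈ G, ∀ j ∈ J, ¬ bad j lam) ∧ partitionFn P I / 2 ≤ ∑ lam ∈ G, boltzmann P lam := by
  have hZ := partitionFn_pos hP
  obtain ⟨B, hB, hlt⟩ := exists_lt_sum_prod_map I (fun k => Real.exp (-P k))
    (fun k _ => (Real.exp_pos _).le) (fun k hk => exp_neg_lt_one (hP k hk))
    (3 / 4 * partitionFn P I) (by
      change _ < partitionFn P I
      linarith)
  refine ⟨B.filter fun lam => ∀ j ∈ J, ¬ bad j lam,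
    fun lam h => hB lam (Finset.mem_filter.1 h).1, fun lam h => (Finset.mem_filter.1 h).2, ?_⟩
  have h1 : ∑ lam ∈ B, boltzmann P lam ≤
      ∑ lam ∈ B.filter (fun lam => ∀ j ∈ J, ¬ bad j lam), boltzmann P lam +
      ∑ j ∈ J, ∑ lam ∈ B.filter (bad j), boltzmann P lam := by
    simp only [Finset.sum_filter]
    rw [Finset.sum_comm, ← Finset.sum_add_distrib]
    refine Finset.sum_le_sum fun lam _ => ?_
    have hnn : ∀ j ∈ J, 0 ≤ if bad j lam then boltzmann P lam else 0 := fun j _ => by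
      split_ifs
      · exact (boltzmann_pos P lam).le
      · exact le_rfl
    by_cases h : ∀ j ∈ J, ¬ bad j lam
    · rw [if_pos h]
      linarith [Finset.sum_nonneg hnn]
    · rw [if_neg h]
      push Not at h
      obtain ⟨j, hj, hjb⟩ := h
      have := Finset.single_le_sum hnn hj
      rw [if_pos hjb] at this
      linarith
  have h2 : ∑ j ∈ J, ∑ lam ∈ B.filter (bad j), boltzmann P lam ≤ J.card * b := by
    rw [← nsmul_eq_mul]
    exact Finset.sum_le_card_nsmul _ _ _ fun j hj => hbad j hj _
      (fun lam h => hB lam (Finset.mem_filter.1 h).1) fun lam h => (Finset.mem_filter.1 h).2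
  have h3 : 3 / 4 * partitionFn P I < ∑ lam ∈ B, boltzmann P lam := hlt
  linarith

/-- Completing each multiset of `G` to one with profile `N` is injective once the profile of the
original multiset is remembered. -/
theorem card_le_card_mul_prod (J : Finset ℕ) (N : ℕ → ℤ) (F G : Finset (Multiset ℕ))
    (hF : ∀ lam : Multiset ℕ, (∀ x ∈ lam, 0 < x) → (∀ j ∈ J, (powSum lam j : ℤ) = N j) → lam ∈ F)
    (hGpos : ∀ lam ∈ G, ∀ x ∈ lam, 0 < x)
    (hG : ∀ lam ∈ G, ∃ mu : Multiset ℕ, (∀ x ∈ mu, 0 < x) ∧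
      ∀ j ∈ J, (powSum mu j : ℤ) = N j - powSum lam j) :
    G.card ≤ F.card * ∏ j ∈ J, ((N j).toNat + 1) := by
  set M : (J → ℕ) → Multiset ℕ := fun v =>
    if h : ∃ mu : Multiset ℕ, (∀ x ∈ mu, 0 < x) ∧ ∀ j : J, (powSum mu j : ℤ) = N j - v j
    then h.choose else 0 with hM
  have hMspec : ∀ lam ∈ G, (∀ x ∈ M (fun j => powSum lam j), 0 < x) ∧
      ∀ j ∈ J, (powSum (M fun j => powSum lam j) j : ℤ) = N j - powSum lam j := by
    intro lam hlam
    have h : ∃ mu : Multiset ℕ, (∀ x ∈ mu, 0 < x) ∧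
        ∀ j : J, (powSum mu j : ℤ) = N j - (powSum lam j : ℕ) := by
      obtain ⟨mu, h1, h2⟩ := hG lam hlam
      exact ⟨mu, h1, fun j => h2 j j.2⟩
    simp only [hM]
    rw [dif_pos h]
    exact ⟨h.choose_spec.1, fun j hj => h.choose_spec.2 ⟨j, hj⟩⟩
  have hcard : (F ×ˢ Fintype.piFinset fun j : J => Finset.range ((N j).toNat + 1)).card =
      F.card * ∏ j ∈ J, ((N j).toNat + 1) := by
    rw [Finset.card_product, Fintype.card_piFinset]
    simp only [Finset.card_range]
    rw [Finset.prod_coe_sort J fun j => (N j).toNat + 1]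
  rw [← hcard]
  refine Finset.card_le_card_of_injOn
    (fun lam => (lam + M (fun j => powSum lam j), fun j : J => powSum lam j)) ?_ ?_
  · intro lam hlam
    obtain ⟨h1, h2⟩ := hMspec lam hlam
    refine Finset.mem_product.2 ⟨hF _ ?_ ?_, Fintype.mem_piFinset.2 fun j => ?_⟩
    · intro x hx
      rcases Multiset.mem_add.1 hx with h | h
      · exact hGpos lam hlam x h
      · exact h1 x h
    · intro j hj
      rw [powSum_add]
      push_cast
      rw [h2 j hj]
      ring
    · have := h2 j j.2
      rw [Finset.mem_range]
      dsimp only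
      omega
  · intro lam _ mu _ h
    obtain ⟨ha, hb⟩ := Prod.mk.inj h
    rw [hb] at ha
    exact add_right_cancel ha

theorem sum_map_energy (J : Finset ℕ) (β : ℕ → ℝ) (r : ℝ) (lam : Multiset ℕ) :
    (lam.map fun k : ℕ => energy J β (k / r)).sum =
      ∑ j ∈ J, β j * ((powSum lam j : ℝ) / r ^ j) := by
  induction lam using Multiset.induction_on with
  | empty => simp [powSum]
  | cons a s ih =>
    rw [Multiset.map_cons, Multiset.sum_cons, ih, energy, ← Finset.sum_add_distrib]
    refine Finset.sum_congr rfl fun j _ => ?_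
    simp only [powSum, Multiset.map_cons, Multiset.sum_cons]
    push_cast
    ring

theorem boltzmann_energy (J : Finset ℕ) (β : ℕ → ℝ) (r : ℝ) (lam : Multiset ℕ) :
    boltzmann (fun k : ℕ => energy J β (k / r)) lam =
      Real.exp (-∑ j ∈ J, β j * ((powSum lam j : ℝ) / r ^ j)) := by
  rw [boltzmann_eq_exp, sum_map_energy]

theorem eventually_prod_toNat_le (J : Finset ℕ) (α : ℕ → ℝ) (N : ℕ → ℕ → ℤ)
    (hN : ∀ j ∈ J, Filter.Tendsto (fun n : ℕ => (N n j : ℝ) / Real.sqrt n ^ (j + 1))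
      Filter.atTop (nhds (α j))) (a : ℝ) (ha : 0 < a) :
    ∀ᶠ n : ℕ in Filter.atTop,
      2 * ∏ j ∈ J, (((N n j).toNat : ℝ) + 1) ≤ Real.exp (a * Real.sqrt n) := by
  set b := a / (J.card + 1) with hb
  have hb0 : 0 < b := by positivity
  have hsq : Filter.Tendsto (fun n : ℕ => Real.sqrt n) Filter.atTop Filter.atTop :=
    Real.tendsto_sqrt_atTop.comp tendsto_natCast_atTop_atTop
  have hsmall : ∀ k : ℕ, Filter.Tendsto
      (fun n : ℕ => Real.sqrt n ^ k / Real.exp (b * Real.sqrt n)) Filter.atTop (nhds 0) :=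
    fun k => ((isLittleO_pow_exp_pos_mul_atTop k hb0).tendsto_div_nhds_zero).comp hsq
  have h2 : ∀ᶠ n : ℕ in Filter.atTop, 2 ≤ Real.exp (b * Real.sqrt n) :=
    (Real.tendsto_exp_atTop.comp (hsq.const_mul_atTop hb0)).eventually_ge_atTop 2
  have hj : ∀ᶠ n : ℕ in Filter.atTop, ∀ j ∈ J,
      ((N n j).toNat : ℝ) + 1 ≤ Real.exp (b * Real.sqrt n) := by
    refine (Finset.eventually_all J).2 fun j hj => ?_
    have hlim : Filter.Tendsto (fun n : ℕ => |(N n j : ℝ) / Real.sqrt n ^ (j + 1)| *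
        (Real.sqrt n ^ (j + 1) / Real.exp (b * Real.sqrt n)) +
        Real.sqrt n ^ 0 / Real.exp (b * Real.sqrt n)) Filter.atTop (nhds 0) := by
      have := ((hN j hj).abs.mul (hsmall (j + 1))).add (hsmall 0)
      simpa using this
    filter_upwards [hlim.eventually_le_const one_pos, Filter.eventually_gt_atTop 0] with n hn hn0
    have hr : 0 < Real.sqrt n := Real.sqrt_pos.2 (by exact_mod_cast hn0)
    have he := Real.exp_pos (b * Real.sqrt n)
    have habs : |(N n j : ℝ) / Real.sqrt n ^ (j + 1)| = |(N n j : ℝ)| / Real.sqrt n ^ (j + 1) := by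
      rw [abs_div, abs_of_pos (pow_pos hr _)]
    rw [habs, div_mul_div_cancel₀ (pow_pos hr _).ne', pow_zero, ← add_div, div_le_one he] at hn
    refine le_trans ?_ hn
    gcongr
    have h3 : ((N n j).toNat : ℤ) ≤ |N n j| := by
      rw [Int.toNat_eq_max]
      exact max_le (le_abs_self _) (abs_nonneg _)
    exact_mod_cast h3
  filter_upwards [h2, hj] with n hn2 hnj
  calc 2 * ∏ j ∈ J, (((N n j).toNat : ℝ) + 1)
      ≤ Real.exp (b * Real.sqrt n) * ∏ _j ∈ J, Real.exp (b * Real.sqrt n) := by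
        gcongr with j hj
        exact hnj j hj
    _ = Real.exp (a * Real.sqrt n) := by
        rw [Finset.prod_const, ← pow_succ', ← Real.exp_nat_mul, hb]
        congr 1
        push_cast
        field_simp

theorem sum_map_div_pow_div (lam : Multiset ℕ) (r C : ℝ) (j : ℕ) :
    (lam.map fun k : ℕ => ((k : ℝ) / r) ^ j / C).sum = (powSum lam j : ℝ) / r ^ j / C := by
  induction lam using Multiset.induction_on with
  | empty => simp [powSum]
  | cons a s ih =>
    rw [Multiset.map_cons, Multiset.sum_cons, ih]
    simp only [powSum, Multiset.map_cons, Multiset.sum_cons]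
    push_cast
    ring

theorem continuousOn_pow_mul_inv_exp_energy (J : Finset ℕ) (β : ℕ → ℝ)
    (hpos : ∀ x : ℝ, 0 < x → 0 < energy J β x) (j : ℕ) :
    ContinuousOn (fun x : ℝ => x ^ j * (Real.exp (energy J β x) - 1)⁻¹) (Set.Ioi 0) := by
  have hc := continuous_energy J β
  refine (by fun_prop : Continuous fun x : ℝ => x ^ j).continuousOn.mul
    (ContinuousOn.inv₀ (by fun_prop) fun x hx => ?_)
  have := Real.one_lt_exp_iff.2 (hpos x hx)
  linarith

/-- Choice of a window width whose mass is small and well approximated by point masses. -/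
theorem exists_window_width (J : Finset ℕ) (β : ℕ → ℝ)
    (hpos : ∀ x : ℝ, 0 < x → 0 < energy J β x) (m : ℕ) (κ a A : ℝ) (hκ : 0 < κ) (ha : 0 < a) :
    ∃ η : ℝ, 0 < η ∧ η * A ≤ a ∧
      (∫ x in Set.Ioi (0 : ℝ) ∩ windowSet m η, 1 * (Real.exp (energy J β x) - 1)⁻¹ ≤ a / 2) ∧
      ∀ j ∈ J, |(∫ x in Set.Ioi (0 : ℝ) ∩ windowSet m η,
        x ^ j * (Real.exp (energy J β x) - 1)⁻¹) -
        η * ∑ i ∈ Finset.Icc 1 m, (Real.exp (energy J β i) - 1)⁻¹ * (i : ℝ) ^ j| ≤ η * κ / 4 := by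
  have hlim := fun j => tendsto_integral_windowSet m _
    (continuousOn_pow_mul_inv_exp_energy J β hpos j)
  have hid : Filter.Tendsto (fun η : ℝ => η) (nhdsWithin 0 (Set.Ioi 0)) (nhds 0) :=
    tendsto_nhdsWithin_of_tendsto_nhds Filter.tendsto_id
  have e1 : ∀ᶠ η : ℝ in nhdsWithin 0 (Set.Ioi 0), η * A ≤ a := by
    have := hid.mul_const A
    rw [zero_mul] at this
    exact this.eventually_le_const ha
  have e2 : ∀ᶠ η : ℝ in nhdsWithin 0 (Set.Ioi 0),
      η * (η⁻¹ * ∫ x in Set.Ioi (0 : ℝ) ∩ windowSet m η,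
        x ^ 0 * (Real.exp (energy J β x) - 1)⁻¹) ≤ a / 2 := by
    have := hid.mul (hlim 0)
    rw [zero_mul] at this
    exact this.eventually_le_const (by positivity)
  have e3 : ∀ᶠ η : ℝ in nhdsWithin 0 (Set.Ioi 0), ∀ j ∈ J,
      |η⁻¹ * (∫ x in Set.Ioi (0 : ℝ) ∩ windowSet m η, x ^ j * (Real.exp (energy J β x) - 1)⁻¹) -
        ∑ i ∈ Finset.Icc 1 m, (i : ℝ) ^ j * (Real.exp (energy J β i) - 1)⁻¹| < κ / 4 := by
    refine (Finset.eventually_all J).2 fun j _ => ?_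
    exact (Metric.tendsto_nhds.1 (hlim j) (κ / 4) (by positivity))
  obtain ⟨η, h0, h1, h2, h3⟩ := (eventually_mem_nhdsWithin.and (e1.and (e2.and e3))).exists
  have h0' : 0 < η := h0
  refine ⟨η, h0', h1, ?_, fun j hj => ?_⟩
  · rw [mul_inv_cancel_left₀ h0'.ne'] at h2
    simpa using h2
  · have h4 := (h3 j hj).le
    have h5 : (∫ x in Set.Ioi (0 : ℝ) ∩ windowSet m η,
        x ^ j * (Real.exp (energy J β x) - 1)⁻¹) -
        η * ∑ i ∈ Finset.Icc 1 m, (Real.exp (energy J β i) - 1)⁻¹ * (i : ℝ) ^ j =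
        η * (η⁻¹ * (∫ x in Set.Ioi (0 : ℝ) ∩ windowSet m η,
          x ^ j * (Real.exp (energy J β x) - 1)⁻¹) -
        ∑ i ∈ Finset.Icc 1 m, (i : ℝ) ^ j * (Real.exp (energy J β i) - 1)⁻¹) := by
      rw [mul_sub, mul_inv_cancel_left₀ h0'.ne']
      simp only [mul_comm]
    rw [h5, abs_mul, abs_of_pos h0', mul_div_assoc]
    gcongr

/-- The number of multisets with a given attainable profile is at least the entropy bound, up to a
subexponential factor. -/
theorem eventually_partitionFn_le (J : Finset ℕ) (hJ : J.Nonempty) (β α : ℕ → ℝ)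
    (hpos : ∀ x : ℝ, 0 < x → 0 < energy J β x) {C : ℝ} (hC : 0 < C)
    (hpow : ∀ j ∈ J, ∀ x : ℝ, 0 < x → x ^ j ≤ C * energy J β x) {C' : ℝ} (hC' : 0 < C')
    (hgrow : ∀ x : ℝ, 0 < x → x ≤ 1 + C' * energy J β x)
    (hα : ∀ j ∈ J, ∫ x in Set.Ioi (0 : ℝ), x ^ j * (Real.exp (energy J β x) - 1)⁻¹ = α j)
    (N : ℕ → ℕ → ℤ)
    (hN : ∀ j ∈ J, Filter.Tendsto (fun n : ℕ => (N n j : ℝ) / Real.sqrt n ^ (j + 1))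
      Filter.atTop (nhds (α j))) (K : ℕ → ℕ) (hK : ∀ n, n ≤ K n) (a : ℝ) (ha : 0 < a) :
    ∀ᶠ n : ℕ in Filter.atTop, ∀ F : Finset (Multiset ℕ),
      (∀ lam, lam ∈ F ↔ (∀ x ∈ lam, 0 < x) ∧ ∀ j ∈ J, (powSum lam j : ℤ) = N n j) →
      F.Nonempty →
      partitionFn (fun k : ℕ => energy J β (k / Real.sqrt n)) (Finset.Icc 1 (K n)) ≤
        Real.exp (3 * a * Real.sqrt n) *
          Real.exp (-∑ j ∈ J, β j * ((N n j : ℝ) / Real.sqrt n ^ j)) * F.card := by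
  set m := J.sup id + 1 with hm
  have hmJ : ∀ j ∈ J, j < m := fun j hj => Nat.lt_succ_of_le (Finset.le_sup (f := id) hj)
  set c : ℕ → ℝ := fun i => (Real.exp (energy J β i) - 1)⁻¹ with hc
  have hc0 : ∀ i ∈ Finset.Icc 1 m, 0 < c i := fun i hi => by
    have hi0 : (0 : ℝ) < i := by exact_mod_cast (Finset.mem_Icc.1 hi).1
    have := Real.one_lt_exp_iff.2 (hpos i hi0)
    exact inv_pos.2 (by linarith)
  obtain ⟨κ, hκ, hsolve⟩ := exists_powSum_eq J m hmJ c hc0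
  set S : ℕ → ℝ := fun j => ∑ i ∈ Finset.Icc 1 m, c i * (i : ℝ) ^ j with hS
  obtain ⟨η, hη, hηa, hηU, hηj⟩ := exists_window_width J β hpos m κ a
    (∑ j ∈ J, |β j| * (|S j| + κ)) hκ ha
  obtain ⟨ρ, hρ, hdev⟩ := exists_deviation_rate hpos hC' hgrow (η * κ / 4 / C) (by positivity)
  set U := windowSet m η with hU
  have hsq : Filter.Tendsto (fun n : ℕ => Real.sqrt n) Filter.atTop Filter.atTop :=
    Real.tendsto_sqrt_atTop.comp tendsto_natCast_atTop_atTop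
  have hηκ : 0 < η * κ := by positivity
  have efull : ∀ᶠ n : ℕ in Filter.atTop, ∀ j ∈ J, |(Real.sqrt n)⁻¹ *
      ∑ k ∈ Finset.Icc 1 (K n), ((k : ℝ) / Real.sqrt n) ^ j *
        (Real.exp (energy J β (k / Real.sqrt n)) - 1)⁻¹ - α j| < η * κ / 8 := by
    refine (Finset.eventually_all J).2 fun j hj => ?_
    have := tendsto_mean (continuous_energy J β) hpos hC' hgrow (fun x => x ^ j) (by fun_prop)
      Set.univ MeasurableSet.univ (by simp) C (fun x _ hx => by positivity)
      (fun x _ hx => hpow j hj x hx) K hK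
    rw [Set.inter_univ, hα j hj] at this
    simpa [Real.dist_eq] using Metric.tendsto_nhds.1 this (η * κ / 8) (by positivity)
  have ewin : ∀ᶠ n : ℕ in Filter.atTop, ∀ j ∈ J, |(Real.sqrt n)⁻¹ *
      ∑ k ∈ (Finset.Icc 1 (K n)).filter (fun k : ℕ => (k : ℝ) / Real.sqrt n ∈ U),
        ((k : ℝ) / Real.sqrt n) ^ j * (Real.exp (energy J β (k / Real.sqrt n)) - 1)⁻¹ -
      ∫ x in Set.Ioi (0 : ℝ) ∩ U, x ^ j * (Real.exp (energy J β x) - 1)⁻¹| < η * κ / 8 := by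
    refine (Finset.eventually_all J).2 fun j hj => ?_
    exact Metric.tendsto_nhds.1 (tendsto_mean (continuous_energy J β) hpos hC' hgrow
      (fun x => x ^ j) (by fun_prop) U (measurableSet_windowSet m η)
      (volume_frontier_windowSet m η) C (fun x _ hx => by positivity)
      (fun x _ hx => hpow j hj x hx) K hK) (η * κ / 8) (by positivity)
  have emass : ∀ᶠ n : ℕ in Filter.atTop, (Real.sqrt n)⁻¹ *
      ∑ k ∈ (Finset.Icc 1 (K n)).filter (fun k : ℕ => (k : ℝ) / Real.sqrt n ∈ U),
        1 * (Real.exp (energy J β (k / Real.sqrt n)) - 1)⁻¹ < a := by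
    obtain ⟨j, hj⟩ := hJ
    refine (tendsto_mean (continuous_energy J β) hpos hC' hgrow
      (fun _ => 1) continuous_const U (measurableSet_windowSet m η)
      (volume_frontier_windowSet m η) C (fun x _ hx => zero_le_one)
      (fun x hxU hx => ?_) K hK).eventually_lt_const (by linarith)
    exact (one_le_pow₀ (one_le_of_mem_windowSet hxU)).trans (hpow j hj x hx)
  have eN : ∀ᶠ n : ℕ in Filter.atTop, ∀ j ∈ J,
      |(N n j : ℝ) / Real.sqrt n ^ (j + 1) - α j| < η * κ / 4 :=
    (Finset.eventually_all J).2 fun j hj =>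
      Metric.tendsto_nhds.1 (hN j hj) (η * κ / 4) (by positivity)
  have edev : ∀ᶠ n : ℕ in Filter.atTop,
      (J.card : ℝ) * 2 * Real.exp (-(ρ * Real.sqrt n)) ≤ 1 / 4 := by
    have : Filter.Tendsto (fun n : ℕ => (J.card : ℝ) * 2 * Real.exp (-(ρ * Real.sqrt n)))
        Filter.atTop (nhds ((J.card : ℝ) * 2 * 0)) :=
      (Real.tendsto_exp_neg_atTop_nhds_zero.comp (hsq.const_mul_atTop hρ)).const_mul _
    rw [mul_zero] at this
    exact this.eventually_le_const (by norm_num)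
  filter_upwards [efull, ewin, emass, eN, edev, hsq.eventually (hsolve η hη),
    eventually_prod_toNat_le J α N hN a ha, Filter.eventually_gt_atTop 0]
    with n hfull hwin hmass hNn hdevn hsolven hprod hn0 F hF hFne
  set r := Real.sqrt n with hr_def
  have hr : 0 < r := Real.sqrt_pos.2 (by exact_mod_cast hn0)
  set P : ℕ → ℝ := fun k => energy J β (k / r) with hP
  set I := Finset.Icc 1 (K n) with hI
  have hI1 : ∀ k ∈ I, 1 ≤ k := fun k hk => (Finset.mem_Icc.1 hk).1
  have hPI : ∀ k ∈ I, 0 < P k := fun k hk =>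
    hpos _ (div_pos (by exact_mod_cast hI1 k hk) hr)
  set W := I.filter (fun k : ℕ => ¬ (k : ℝ) / r ∈ U) with hW
  have hWI : W ⊆ I := Finset.filter_subset _ _
  have hZW : 0 < partitionFn P W := partitionFn_pos fun k hk => hPI k (hWI hk)
  have hZ : partitionFn P I ≤ partitionFn P W * Real.exp (a * r) := by
    refine (partitionFn_le_filter_mul_exp P I hPI fun k : ℕ => (k : ℝ) / r ∈ U).trans ?_
    gcongr
    simp only [one_mul] at hmass
    rw [inv_mul_lt_iff₀ hr] at hmass
    linarith
  obtain ⟨G, hGW, hGgood, hGsum⟩ := exists_typical P W (fun k hk => hPI k (hWI hk)) J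
    (fun j lam => η * κ / 4 / C * r ≤ |(lam.map fun k : ℕ => ((k : ℝ) / r) ^ j / C).sum -
      ∑ k ∈ W, ((k : ℝ) / r) ^ j / C * (Real.exp (energy J β (k / r)) - 1)⁻¹|)
    (2 * partitionFn P W * Real.exp (-(ρ * r)))
    (by
      calc (J.card : ℝ) * (2 * partitionFn P W * Real.exp (-(ρ * r)))
          = J.card * 2 * Real.exp (-(ρ * r)) * partitionFn P W := by ring
        _ ≤ 1 / 4 * partitionFn P W := by gcongr)
    (fun j hj B hB hbad => hdev r hr W (fun k hk => hI1 k (hWI hk)) (fun x => x ^ j / C)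
      (fun x hx => by positivity)
      (fun x hx => by rw [div_le_iff₀ hC, mul_comm]; exact hpow j hj x hx) B hB hbad)
  have hGpos : ∀ lam ∈ G, ∀ x ∈ lam, 0 < x := fun lam hlam x hx => hI1 x (hWI (hGW lam hlam x hx))
  have hclose : ∀ lam ∈ G, ∀ j ∈ J,
      |((N n j - powSum lam j : ℤ) : ℝ) / r ^ (j + 1) - η * S j| ≤ η * κ := by
    intro lam hlam j hj
    have h1 := not_le.1 (hGgood lam hlam j hj)
    set Y := ∑ k ∈ I.filter (fun k : ℕ => (k : ℝ) / r ∈ U),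
      ((k : ℝ) / r) ^ j * (Real.exp (energy J β (k / r)) - 1)⁻¹ with hY
    set X := ∑ k ∈ I, ((k : ℝ) / r) ^ j * (Real.exp (energy J β (k / r)) - 1)⁻¹ with hX
    have hXY : ∑ k ∈ W, ((k : ℝ) / r) ^ j / C * (Real.exp (energy J β (k / r)) - 1)⁻¹ =
        (X - Y) / C := by
      rw [hX, ← Finset.sum_filter_add_sum_filter_not I (fun k : ℕ => (k : ℝ) / r ∈ U), ← hY,
        add_sub_cancel_left, Finset.sum_div]
      exact Finset.sum_congr rfl fun k _ => by ring
    rw [sum_map_div_pow_div, hXY, ← sub_div, abs_div, abs_of_pos hC, div_mul_eq_mul_div,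
      div_lt_div_iff_of_pos_right hC] at h1
    have h2 : |(powSum lam j : ℝ) / r ^ (j + 1) - r⁻¹ * (X - Y)| < η * κ / 4 := by
      have : (powSum lam j : ℝ) / r ^ (j + 1) - r⁻¹ * (X - Y) =
          ((powSum lam j : ℝ) / r ^ j - (X - Y)) / r := by
        rw [pow_succ]
        field_simp
      rw [this, abs_div, abs_of_pos hr, div_lt_iff₀ hr]
      exact h1
    have h3 := hfull j hj
    have h4 := hwin j hj
    have h5 := hNn j hj
    have h6 := hηj j hj
    have h7 : ((N n j - powSum lam j : ℤ) : ℝ) / r ^ (j + 1) =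
        (N n j : ℝ) / r ^ (j + 1) - (powSum lam j : ℝ) / r ^ (j + 1) := by
      push_cast
      ring
    rw [h7]
    have h8 : r⁻¹ * (X - Y) = r⁻¹ * X - r⁻¹ * Y := mul_sub _ _ _
    rw [h8] at h2
    rw [abs_lt] at h2 h3 h4 h5
    rw [abs_le] at h6 ⊢
    constructor
    · linarith [h2.1, h2.2, h3.1, h3.2, h4.1, h4.2, h5.1, h5.2, h6.1, h6.2]
    · linarith [h2.1, h2.2, h3.1, h3.2, h4.1, h4.2, h5.1, h5.2, h6.1, h6.2]
  have hcard : (G.card : ℝ) ≤ F.card * ∏ j ∈ J, (((N n j).toNat : ℝ) + 1) := by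
    obtain ⟨lam₀, hlam₀⟩ := hFne
    obtain ⟨hp₀, hN₀⟩ := (hF lam₀).1 hlam₀
    have := card_le_card_mul_prod J (N n) F G (fun lam h1 h2 => (hF lam).2 ⟨h1, h2⟩) hGpos
      fun lam hlam => hsolven (fun j => N n j - powSum lam j)
        ⟨lam₀, lam, hp₀, hGpos lam hlam, fun j hj => by rw [hN₀ j hj]⟩ (hclose lam hlam)
    exact_mod_cast this
  have hweight : ∀ lam ∈ G, boltzmann P lam ≤
      Real.exp (-∑ j ∈ J, β j * ((N n j : ℝ) / r ^ j)) * Real.exp (a * r) := by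
    intro lam hlam
    rw [hP, boltzmann_energy, ← Real.exp_add, Real.exp_le_exp]
    have h1 : ∑ j ∈ J, β j * ((N n j : ℝ) / r ^ j) - ∑ j ∈ J, β j * ((powSum lam j : ℝ) / r ^ j)
        ≤ ∑ j ∈ J, |β j| * (η * (|S j| + κ) * r) := by
      rw [← Finset.sum_sub_distrib]
      refine Finset.sum_le_sum fun j hj => ?_
      have h2 := hclose lam hlam j hj
      have h3 : |((N n j - powSum lam j : ℤ) : ℝ) / r ^ (j + 1)| ≤ η * (|S j| + κ) := by
        have h4 := abs_sub_abs_le_abs_sub (((N n j - powSum lam j : ℤ) : ℝ) / r ^ (j + 1))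
          (η * S j)
        rw [abs_mul, abs_of_pos hη] at h4
        linarith
      have h5 : β j * ((N n j : ℝ) / r ^ j) - β j * ((powSum lam j : ℝ) / r ^ j) =
          β j * (((N n j - powSum lam j : ℤ) : ℝ) / r ^ (j + 1) * r) := by
        push_cast
        rw [pow_succ]
        field_simp
      rw [h5]
      refine (le_abs_self _).trans ?_
      rw [abs_mul, abs_mul, abs_of_pos hr]
      gcongr
    have h2 : ∑ j ∈ J, |β j| * (η * (|S j| + κ) * r) =
        η * (∑ j ∈ J, |β j| * (|S j| + κ)) * r := by
      rw [Finset.mul_sum, Finset.sum_mul]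
      exact Finset.sum_congr rfl fun j _ => by ring
    have h3 := mul_le_mul_of_nonneg_right hηa hr.le
    linarith
  have hsumG : ∑ lam ∈ G, boltzmann P lam ≤ G.card *
      (Real.exp (-∑ j ∈ J, β j * ((N n j : ℝ) / r ^ j)) * Real.exp (a * r)) := by
    rw [← nsmul_eq_mul]
    exact Finset.sum_le_card_nsmul _ _ _ hweight
  set w := Real.exp (-∑ j ∈ J, β j * ((N n j : ℝ) / r ^ j)) with hw
  have hw0 : 0 < w := Real.exp_pos _
  calc partitionFn P I ≤ partitionFn P W * Real.exp (a * r) := hZ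
    _ ≤ (2 * (G.card * (w * Real.exp (a * r)))) * Real.exp (a * r) := by
        gcongr
        linarith
    _ ≤ (2 * ((F.card * ∏ j ∈ J, (((N n j).toNat : ℝ) + 1)) * (w * Real.exp (a * r)))) *
        Real.exp (a * r) := by gcongr
    _ = (2 * ∏ j ∈ J, (((N n j).toNat : ℝ) + 1)) *
        (F.card * w * Real.exp (a * r) * Real.exp (a * r)) := by ring
    _ ≤ Real.exp (a * r) * (F.card * w * Real.exp (a * r) * Real.exp (a * r)) := by gcongr
    _ = (Real.exp (a * r) * Real.exp (a * r) * Real.exp (a * r)) * w * F.card := by ring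
    _ = Real.exp (3 * a * r) * w * F.card := by
        rw [← Real.exp_add, ← Real.exp_add]
        ring_nf

theorem antitone_phiLam (lam : Multiset ℕ) (n : ℕ) : Antitone (phiLam lam n) := by
  intro s t hst
  unfold phiLam
  gcongr
  refine Multiset.monotone_filter_right _ fun a ha => le_trans ?_ ha
  gcongr

/-- An antitone function close to a continuous one on a fine grid is close to it uniformly. -/
theorem exists_grid (φ : ℝ → ℝ) (t₁ t₂ : ℝ) (ht : t₁ < t₂) (hφ : ContinuousOn φ (Set.Icc t₁ t₂))
    (ε : ℝ) (hε : 0 < ε) :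
    ∃ T : Finset ℝ, (∀ τ ∈ T, τ ∈ Set.Icc t₁ t₂) ∧ ∀ ψ : ℝ → ℝ, Antitone ψ →
      (∀ τ ∈ T, |ψ τ - φ τ| < ε / 2) → ∀ t ∈ Set.Icc t₁ t₂, |ψ t - φ t| < ε := by
  obtain ⟨d', hd', hunif⟩ := Metric.uniformContinuousOn_iff.1
    (isCompact_Icc.uniformContinuousOn_of_continuous hφ) (ε / 2) (by positivity)
  set d := d' / 2 with hd
  have hd0 : 0 < d := by positivity
  set M := ⌊(t₂ - t₁) / d⌋₊ + 1 with hM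
  set τ : ℕ → ℝ := fun i => min t₂ (t₁ + i * d) with hτ
  have hτmem : ∀ i, τ i ∈ Set.Icc t₁ t₂ := fun i =>
    ⟨le_min ht.le (by have : 0 ≤ i * d := by positivity
                      linarith), min_le_left _ _⟩
  refine ⟨(Finset.range (M + 1)).image τ, fun x hx => ?_, fun ψ hψ hclose t htm => ?_⟩
  · obtain ⟨i, -, rfl⟩ := Finset.mem_image.1 hx
    exact hτmem i
  · have h0 : 0 ≤ (t - t₁) / d := div_nonneg (by linarith [htm.1]) hd0.le
    set i := ⌊(t - t₁) / d⌋₊ with hi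
    have hiM : i + 1 ≤ M := by
      have : i ≤ ⌊(t₂ - t₁) / d⌋₊ := by
        refine Nat.floor_le_floor ?_
        gcongr
        exact htm.2
      omega
    have h1 : i * d ≤ t - t₁ := (le_div_iff₀ hd0).1 (Nat.floor_le h0)
    have h2 : t - t₁ < (i + 1) * d := (div_lt_iff₀ hd0).1 (Nat.lt_floor_add_one _)
    have hlo : τ i ≤ t := (min_le_right _ _).trans (by linarith)
    have hlo' : t - d ≤ τ i := le_min (by linarith [htm.2]) (by linarith)
    have hhi : t ≤ τ (i + 1) := by
      refine le_min htm.2 ?_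
      push_cast
      linarith
    have hhi' : τ (i + 1) ≤ t + d := by
      refine (min_le_right _ _).trans ?_
      push_cast
      linarith
    have c1 := hclose (τ i) (Finset.mem_image_of_mem _ (Finset.mem_range.2 (by omega)))
    have c2 := hclose (τ (i + 1)) (Finset.mem_image_of_mem _ (Finset.mem_range.2 (by omega)))
    have u1 := hunif (τ i) (hτmem i) t htm (by rw [Real.dist_eq, abs_lt]; constructor <;> linarith)
    have u2 := hunif (τ (i + 1)) (hτmem _) t htm
      (by rw [Real.dist_eq, abs_lt]; constructor <;> linarith)
    rw [Real.dist_eq] at u1 u2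
    have m1 := hψ hlo
    have m2 := hψ hhi
    rw [abs_lt] at *
    constructor <;> linarith [c1.1, c1.2, c2.1, c2.2, u1.1, u1.2, u2.1, u2.2]

theorem phiLam_eq (lam : Multiset ℕ) (n : ℕ) (t : ℝ) :
    phiLam lam n t = (((lam.map (Nat.cast : ℕ → ℝ)).filter
      (fun a => t * Real.sqrt n ≤ a)).card : ℝ) / Real.sqrt n := by
  simp only [phiLam, Multiset.bind_def, Multiset.pure_def, Multiset.bind_singleton]

theorem sum_map_ite_const (lam : Multiset ℕ) (n : ℕ) (hn : 0 < n) (τ q : ℝ) :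
    (lam.map fun k : ℕ => if τ ≤ (k : ℝ) / Real.sqrt n then q else 0).sum =
      q * (Real.sqrt n * phiLam lam n τ) := by
  have hr : 0 < Real.sqrt n := Real.sqrt_pos.2 (by exact_mod_cast hn)
  rw [phiLam_eq, mul_div_cancel₀ _ hr.ne']
  simp only [le_div_iff₀ hr]
  induction lam using Multiset.induction_on with
  | empty => simp
  | cons a s ih =>
    rw [Multiset.map_cons, Multiset.sum_cons, ih, Multiset.map_cons, Multiset.filter_cons]
    split_ifs with h
    · simp
      ring
    · simp

/-- The scaled tail counts deviate from their limit with exponentially small Boltzmann weight. -/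
theorem exists_tail_deviation_rate {p : ℝ → ℝ} (hp : Continuous p)
    (hpos : ∀ x : ℝ, 0 < x → 0 < p x) {C : ℝ} (hC : 0 < C)
    (hgrow : ∀ x : ℝ, 0 < x → x ≤ 1 + C * p x) (t₁ q : ℝ) (ht₁ : 0 < t₁) (hq : 0 < q)
    (hqp : ∀ x, t₁ ≤ x → q ≤ p x) (K : ℕ → ℕ) (hK : ∀ n, n ≤ K n) (ε : ℝ) (hε : 0 < ε) :
    ∃ c : ℝ, 0 < c ∧ ∀ τ, t₁ ≤ τ → ∀ᶠ n : ℕ in Filter.atTop, ∀ B : Finset (Multiset ℕ),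
      (∀ lam ∈ B, ∀ x ∈ lam, x ∈ Finset.Icc 1 (K n)) →
      (∀ lam ∈ B, ε ≤ |phiLam lam n τ - ∫ s in Set.Ioi τ, 1 / (Real.exp (p s) - 1)|) →
      ∑ lam ∈ B, boltzmann (fun k : ℕ => p (k / Real.sqrt n)) lam ≤
        2 * partitionFn (fun k : ℕ => p (k / Real.sqrt n)) (Finset.Icc 1 (K n)) *
          Real.exp (-(c * Real.sqrt n)) := by
  obtain ⟨c, hc, hdev⟩ := exists_deviation_rate hpos hC hgrow (q * (ε / 2)) (by positivity)
  refine ⟨c, hc, fun τ hτ => ?_⟩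
  have hmean := tendsto_mean hp hpos hC hgrow (fun _ => 1) continuous_const (Set.Ici τ)
    measurableSet_Ici (by rw [frontier_Ici]; simp) q⁻¹ (fun x _ _ => zero_le_one)
    (fun x hx _ => by
      rw [inv_mul_eq_div, one_le_div hq]
      exact hqp x (hτ.trans hx)) K hK
  have hset : Set.Ioi (0 : ℝ) ∩ Set.Ici τ = Set.Ici τ :=
    Set.inter_eq_right.2 fun x hx => lt_of_lt_of_le (ht₁.trans_le hτ) hx
  rw [hset, integral_Ici_eq_integral_Ioi] at hmean
  simp only [one_mul, ← one_div] at hmean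
  filter_upwards [Metric.tendsto_nhds.1 hmean (ε / 2) (by positivity),
    Filter.eventually_gt_atTop 0] with n hn hn0 B hB hbad
  rw [Real.dist_eq] at hn
  set r := Real.sqrt n with hr_def
  have hr : 0 < r := Real.sqrt_pos.2 (by exact_mod_cast hn0)
  refine hdev r hr _ (fun k hk => (Finset.mem_Icc.1 hk).1) (fun x => if τ ≤ x then q else 0)
    (fun x _ => by split_ifs <;> [exact hq.le; exact le_rfl])
    (fun x hx => by
      split_ifs with h
      · exact hqp x (hτ.trans h)
      · exact (hpos x hx).le) B hB fun lam hlam => ?_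
  have h1 := hbad lam hlam
  rw [sum_map_ite_const lam n hn0]
  set X := ∑ k ∈ (Finset.Icc 1 (K n)).filter (fun k : ℕ => (k : ℝ) / r ∈ Set.Ici τ),
    1 / (Real.exp (p (k / r)) - 1) with hX
  have h2 : ∑ k ∈ Finset.Icc 1 (K n), (if τ ≤ (k : ℝ) / r then q else 0) *
      (Real.exp (p (k / r)) - 1)⁻¹ = q * X := by
    rw [hX, Finset.sum_filter, Finset.mul_sum]
    refine Finset.sum_congr rfl fun k _ => ?_
    simp only [Set.mem_Ici]
    split_ifs <;> simp
  rw [h2]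
  have h3 : q * (r * phiLam lam n τ) - q * X = q * r * (phiLam lam n τ - 1 / r * X) := by
    field_simp
  rw [h3, abs_mul, abs_of_pos (mul_pos hq hr)]
  have h4 : ε / 2 ≤ |phiLam lam n τ - 1 / r * X| := by
    have hX' : |1 / r * X - ∫ s in Set.Ioi τ, 1 / (Real.exp (p s) - 1)| < ε / 2 := by
      convert hn
    have := abs_sub_le (phiLam lam n τ) (1 / r * X)
      (∫ s in Set.Ioi τ, 1 / (Real.exp (p s) - 1))
    linarith
  calc q * (ε / 2) * r = q * r * (ε / 2) := by ring
    _ ≤ _ := by gcongr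

theorem continuousOn_integral_Ioi (h : ℝ → ℝ) (t₁ t₂ : ℝ)
    (hint : IntegrableOn h (Set.Ioi t₁)) :
    ContinuousOn (fun t => ∫ s in Set.Ioi t, h s) (Set.Icc t₁ t₂) := by
  have h1 : ContinuousOn (fun t => (∫ s in Set.Ioi t₁, h s) - ∫ s in Set.Ioc t₁ t, h s)
      (Set.Icc t₁ t₂) :=
    continuousOn_const.sub (intervalIntegral.continuousOn_primitive
      ((integrableOn_Icc_iff_integrableOn_Ioc).2 (hint.mono_set Set.Ioc_subset_Ioi_self)))
  refine h1.congr fun t ht => ?_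
  have h2 : Set.Ioc t₁ t ∪ Set.Ioi t = Set.Ioi t₁ := Set.Ioc_union_Ioi_eq_Ioi ht.1
  have hdisj : Disjoint (Set.Ioc t₁ t) (Set.Ioi t) :=
    Set.disjoint_left.2 fun x hx hy => not_lt.2 hx.2 hy
  dsimp only
  rw [← h2, setIntegral_union hdisj
    measurableSet_Ioi (hint.mono_set Set.Ioc_subset_Ioi_self)
    (hint.mono_set (Set.Ioi_subset_Ioi ht.1))]
  ring

theorem tendsto_Nvec_div (α : ℕ → ℝ) (j : ℕ) (hα : 0 ≤ α j) :
    Filter.Tendsto (fun n : ℕ => (Nvec α n j : ℝ) / Real.sqrt n ^ (j + 1))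
      Filter.atTop (nhds (α j)) := by
  have hsq : Filter.Tendsto (fun n : ℕ => Real.sqrt n ^ (j + 1)) Filter.atTop Filter.atTop :=
    (Filter.tendsto_pow_atTop (by omega)).comp
      (Real.tendsto_sqrt_atTop.comp tendsto_natCast_atTop_atTop)
  refine ((tendsto_nat_floor_mul_div_atTop hα).comp hsq).congr fun n => ?_
  simp only [Function.comp, Nvec]
  have : (n : ℝ) ^ (((j : ℝ) + 1) / 2) = Real.sqrt n ^ (j + 1) := by
    rw [Real.sqrt_eq_rpow, ← Real.rpow_natCast, ← Real.rpow_mul (Nat.cast_nonneg n)]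
    congr 1
    push_cast
    ring
  rw [this, natCast_floor_eq_intCast_floor (by positivity)]

theorem exists_profile_finset (J : Finset ℕ) {j : ℕ} (hj : j ∈ J) (hj0 : 0 < j) (m : ℕ → ℤ)
    (K : ℕ) (hK : (m j).toNat ≤ K) :
    ∃ F : Finset (Multiset ℕ),
      (∀ lam, lam ∈ F ↔ (∀ x ∈ lam, 0 < x) ∧ ∀ i ∈ J, (powSum lam i : ℤ) = m i) ∧
      ∀ lam ∈ F, ∀ x ∈ lam, x ∈ Finset.Icc 1 K := by
  have hmem : ∀ lam : Multiset ℕ,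
      ((∀ x ∈ lam, 0 < x) ∧ ∀ i ∈ J, (powSum lam i : ℤ) = m i) →
      (∀ x ∈ lam, x ∈ Finset.Icc 1 K) ∧ ∀ x, lam.count x < K + 1 := by
    rintro lam ⟨h0, hm⟩
    have hle : powSum lam j ≤ K := by
      have := hm j hj
      omega
    refine ⟨fun x hx => Finset.mem_Icc.2 ⟨h0 x hx, ?_⟩, fun x => Nat.lt_succ_of_le ?_⟩
    · calc x ≤ x ^ j := Nat.le_self_pow hj0.ne' x
        _ ≤ powSum lam j := Multiset.le_sum_of_mem (Multiset.mem_map_of_mem (fun x => x ^ j) hx)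
        _ ≤ K := hle
    · have hcard : (lam.map fun x => x ^ j).card • 1 ≤ powSum lam j :=
        Multiset.card_nsmul_le_sum fun y hy => by
          obtain ⟨x, hx, rfl⟩ := Multiset.mem_map.1 hy
          exact Nat.one_le_pow _ _ (h0 x hx)
      rw [Multiset.card_map, smul_eq_mul, mul_one] at hcard
      exact (Multiset.count_le_card x lam).trans (hcard.trans hle)
  refine ⟨(boundedMultisets (Finset.Icc 1 K) (K + 1)).filter fun lam =>
    (∀ x ∈ lam, 0 < x) ∧ ∀ i ∈ J, (powSum lam i : ℤ) = m i, fun lam => ?_, fun lam hlam => ?_⟩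
  · rw [Finset.mem_filter]
    exact ⟨fun h => h.2, fun h => ⟨mem_boundedMultisets (hmem lam h).1 (hmem lam h).2, h⟩⟩
  · exact (hmem lam (Finset.mem_filter.1 hlam).2).1

theorem natCard_subtype_div_lt {P Q : Multiset ℕ → Prop} (F : Finset (Multiset ℕ))
    (hF : ∀ lam, lam ∈ F ↔ P lam) {δ : ℝ} (hδ : 0 < δ)
    (h : F.Nonempty → ((F.filter Q).card : ℝ) < δ * F.card) :
    (Nat.card {lam // P lam ∧ Q lam} : ℝ) / (Nat.card {lam // P lam} : ℝ) < δ := by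
  have h1 : Nat.card {lam // P lam} = F.card := Nat.subtype_card F hF
  have h2 : Nat.card {lam // P lam ∧ Q lam} = (F.filter Q).card :=
    Nat.subtype_card _ fun lam => by rw [Finset.mem_filter, hF]
  rw [h1, h2]
  rcases F.eq_empty_or_nonempty with rfl | hne
  · simpa using hδ
  · rw [div_lt_iff₀ (by exact_mod_cast hne.card_pos)]
    exact h hne

/-- Uniformly random partitions with a given profile inherit exponentially small deviation
bounds from the Boltzmann weight. -/
theorem card_filter_lt (J : Finset ℕ) (β : ℕ → ℝ) (r c Z δ : ℝ) (m : ℕ → ℤ)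
    (F : Finset (Multiset ℕ))
    (hF : ∀ lam ∈ F, ∀ j ∈ J, (powSum lam j : ℤ) = m j) (hFne : F.Nonempty)
    (hZ : Z ≤ Real.exp (3 * (c / 6) * r) *
      Real.exp (-∑ j ∈ J, β j * ((m j : ℝ) / r ^ j)) * F.card)
    (T : Finset ℝ) (Q : Multiset ℕ → Prop) (R : ℝ → Multiset ℕ → Prop)
    (hQ : ∀ lam, Q lam → ∃ τ ∈ T, R τ lam)
    (hR : ∀ τ ∈ T, ∑ lam ∈ F.filter (R τ), boltzmann (fun k : ℕ => energy J β (k / r)) lam ≤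
      2 * Z * Real.exp (-(c * r)))
    (hδ : 2 * T.card * Real.exp (-(c / 2 * r)) < δ) :
    ((F.filter Q).card : ℝ) < δ * F.card := by
  set w := Real.exp (-∑ j ∈ J, β j * ((m j : ℝ) / r ^ j)) with hw
  have hw0 : 0 < w := Real.exp_pos _
  have hFc : (0 : ℝ) < F.card := by exact_mod_cast hFne.card_pos
  have hbw : ∀ lam ∈ F, boltzmann (fun k : ℕ => energy J β (k / r)) lam = w := by
    intro lam hlam
    rw [boltzmann_energy, hw]
    congr 2
    refine Finset.sum_congr rfl fun j hj => ?_
    rw [← hF lam hlam j hj, Int.cast_natCast]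
  have h1 : w * (F.filter Q).card ≤ T.card * (2 * Z * Real.exp (-(c * r))) := by
    have hsub : F.filter Q ⊆ T.biUnion fun τ => F.filter (R τ) := fun lam hlam => by
      obtain ⟨hlF, hlQ⟩ := Finset.mem_filter.1 hlam
      obtain ⟨τ, hτ, hRτ⟩ := hQ lam hlQ
      exact Finset.mem_biUnion.2 ⟨τ, hτ, Finset.mem_filter.2 ⟨hlF, hRτ⟩⟩
    have hcard : ((F.filter Q).card : ℝ) ≤ ∑ τ ∈ T, ((F.filter (R τ)).card : ℝ) := by
      exact_mod_cast (Finset.card_le_card hsub).trans Finset.card_biUnion_le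
    calc w * (F.filter Q).card
        ≤ w * ∑ τ ∈ T, ((F.filter (R τ)).card : ℝ) := by gcongr
      _ = ∑ τ ∈ T, ∑ lam ∈ F.filter (R τ),
            boltzmann (fun k : ℕ => energy J β (k / r)) lam := by
          rw [Finset.mul_sum]
          refine Finset.sum_congr rfl fun τ _ => ?_
          rw [Finset.sum_congr rfl fun lam hlam => hbw lam (Finset.mem_filter.1 hlam).1,
            Finset.sum_const, nsmul_eq_mul, mul_comm]
      _ ≤ ∑ _τ ∈ T, 2 * Z * Real.exp (-(c * r)) := Finset.sum_le_sum hR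
      _ = T.card * (2 * Z * Real.exp (-(c * r))) := by rw [Finset.sum_const, nsmul_eq_mul]
  have hexp : Real.exp (3 * (c / 6) * r) * Real.exp (-(c * r)) = Real.exp (-(c / 2 * r)) := by
    rw [← Real.exp_add]
    congr 1
    ring
  have h2 : w * (F.filter Q).card ≤ w * (2 * T.card * Real.exp (-(c / 2 * r)) * F.card) := by
    refine h1.trans ?_
    calc T.card * (2 * Z * Real.exp (-(c * r)))
        ≤ T.card * (2 * (Real.exp (3 * (c / 6) * r) * w * F.card) * Real.exp (-(c * r))) := by
          gcongr
      _ = _ := by rw [← hexp]; ring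
  exact (le_of_mul_le_mul_left h2 hw0).trans_lt (by gcongr)

theorem integrableOn_inv_exp_energy (J : Finset ℕ) (β : ℕ → ℝ)
    (hpos : ∀ x : ℝ, 0 < x → 0 < energy J β x) (j : ℕ)
    (hint : IntegrableOn (fun x => x ^ j / (Real.exp (energy J β x) - 1)) (Set.Ioi 0))
    {t : ℝ} (ht : 0 < t) :
    IntegrableOn (fun x => 1 / (Real.exp (energy J β x) - 1)) (Set.Ioi t) := by
  have hI := (hint.mono_set (Set.Ioi_subset_Ioi ht.le)).const_mul ((t ^ j)⁻¹)
  refine Integrable.mono' hI ?_ ?_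
  · have := (continuous_energy J β).measurable
    exact (by fun_prop : Measurable fun x => 1 / (Real.exp (energy J β x) - 1)).aestronglyMeasurable
  · refine (ae_restrict_iff' measurableSet_Ioi).2 (Filter.Eventually.of_forall fun x hx => ?_)
    have hx' : t < x := hx
    have h1 : 0 < Real.exp (energy J β x) - 1 :=
      sub_pos.2 (Real.one_lt_exp_iff.2 (hpos x (ht.trans hx')))
    rw [Real.norm_of_nonneg (by positivity), ← mul_div_assoc]
    gcongr
    rw [inv_mul_eq_div, one_le_div (by positivity)]
    gcongr

theorem stmt_1 (J : Finset ℕ) (hJ : ∃ j ∈ J, 0 < j)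
    (α β : ℕ → ℝ) (hα : ∀ j ∈ J, 0 < α j) (hβne : ∀ j ∈ J, β j ≠ 0)
    (hβ : ∀ j ∈ J,
      (∫ x in Set.Ioi (0:ℝ), x ^ j / (Real.exp (∑ ℓ ∈ J, β ℓ * x ^ ℓ) - 1)) = α j)
    (phiInf : ℝ → ℝ)
    (hphiInf : ∀ t : ℝ, phiInf t
      = ∫ s in Set.Ioi t, 1 / (Real.exp (∑ j ∈ J, β j * s ^ j) - 1))
    (t₁ t₂ ε : ℝ) (ht₁ : 0 < t₁) (ht₁₂ : t₁ < t₂) (hε : 0 < ε) :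
    ∀ δ : ℝ, 0 < δ → ∃ n₀ : ℕ, ∀ n : ℕ, n₀ ≤ n → Nvec α n ∈ NTset J →
      (Nat.card {lam : Multiset ℕ //
          ((∀ x ∈ lam, 0 < x) ∧
            ∀ j ∈ J, (((lam.map (fun x => x ^ j)).sum : ℕ) : ℤ) = Nvec α n j) ∧
          ∃ t ∈ Set.Icc t₁ t₂, ε ≤ |phiLam lam n t - phiInf t|} : ℝ) /
        (Nat.card {lam : Multiset ℕ //
          (∀ x ∈ lam, 0 < x) ∧
            ∀ j ∈ J, (((lam.map (fun x => x ^ j)).sum : ℕ) : ℤ) = Nvec α n j} : ℝ)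
        < δ := by

  intro δ hδ
  obtain ⟨j, hj, hj0⟩ := hJ
  have hJne : J.Nonempty := ⟨j, hj⟩
  have hβ' : ∀ i ∈ J, ∫ x in Set.Ioi (0 : ℝ), x ^ i / (Real.exp (energy J β x) - 1) = α i := hβ
  have hpos : ∀ x : ℝ, 0 < x → 0 < energy J β x :=
    energy_pos_of_integral J hJne β hβne j (α j) (hα j hj) (hβ' j hj)
  obtain ⟨C, hC, hpow⟩ := exists_pow_le_energy J hJne β hβne hpos
  have hgrow : ∀ x : ℝ, 0 < x → x ≤ 1 + C * energy J β x := fun x hx => by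
    rcases le_total x 1 with h | h
    · have := mul_pos hC (hpos x hx)
      linarith
    · linarith [le_self_pow₀ h hj0.ne', hpow j hj x hx]
  have hqp : ∀ x, t₁ ≤ x → t₁ ^ j / C ≤ energy J β x := fun x hx => by
    rw [div_le_iff₀' hC]
    exact (pow_le_pow_left₀ ht₁.le hx j).trans (hpow j hj x (ht₁.trans_le hx))
  have hint : IntegrableOn (fun x => x ^ j / (Real.exp (energy J β x) - 1)) (Set.Ioi 0) := by
    by_contra h
    have h1 := hβ' j hj
    rw [integral_undef h] at h1
    exact (hα j hj).ne h1
  have hphi : phiInf = fun t => ∫ s in Set.Ioi t, 1 / (Real.exp (energy J β s) - 1) :=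
    funext hphiInf
  have hcont : ContinuousOn phiInf (Set.Icc t₁ t₂) := by
    rw [hphi]
    exact continuousOn_integral_Ioi _ t₁ t₂ (integrableOn_inv_exp_energy J β hpos j hint ht₁)
  obtain ⟨T, hT, hgrid⟩ := exists_grid phiInf t₁ t₂ ht₁₂ hcont ε hε
  set K : ℕ → ℕ := fun n => n + (Nvec α n j).toNat
  obtain ⟨c, hc, hdev⟩ := exists_tail_deviation_rate (continuous_energy J β) hpos hC hgrow t₁
    (t₁ ^ j / C) ht₁ (by positivity) hqp K (fun n => Nat.le_add_right _ _) (ε / 2) (by positivity)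
  have hZ := eventually_partitionFn_le J hJne β α hpos hC hpow hC hgrow
    (by simpa only [div_eq_mul_inv] using hβ') (Nvec α)
    (fun i hi => tendsto_Nvec_div α i (hα i hi).le) K (fun n => Nat.le_add_right _ _)
    (c / 6) (by positivity)
  have hdevT := (Filter.eventually_all_finset T).2 fun τ hτ => hdev τ (hT τ hτ).1
  have hsmall : ∀ᶠ n : ℕ in Filter.atTop,
      2 * T.card * Real.exp (-(c / 2 * Real.sqrt n)) < δ := by
    have h1 : Filter.Tendsto (fun n : ℕ => Real.exp (-(c / 2 * Real.sqrt n)))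
        Filter.atTop (nhds 0) :=
      Real.tendsto_exp_neg_atTop_nhds_zero.comp
        ((Real.tendsto_sqrt_atTop.comp tendsto_natCast_atTop_atTop).const_mul_atTop
          (by positivity))
    have h2 := h1.const_mul (2 * (T.card : ℝ))
    rw [mul_zero] at h2
    exact h2.eventually_lt_const hδ
  obtain ⟨n₀, hn₀⟩ := Filter.eventually_atTop.1 (hZ.and (hdevT.and hsmall))
  refine ⟨n₀, fun n hn _ => ?_⟩
  obtain ⟨hZn, hdevn, hsmalln⟩ := hn₀ n hn
  obtain ⟨F, hF, hFK⟩ := exists_profile_finset J hj hj0 (Nvec α n) (K n) (Nat.le_add_left _ _)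
  refine natCard_subtype_div_lt F hF hδ fun hFne => ?_
  refine card_filter_lt J β (Real.sqrt n) c _ δ (Nvec α n) F (fun lam h => ((hF lam).1 h).2) hFne
    (hZn F hF hFne) T _ (fun τ lam => ε / 2 ≤ |phiLam lam n τ - phiInf τ|) ?_ ?_ hsmalln
  · rintro lam ⟨t, ht, hbad⟩
    by_contra! h
    exact (hgrid _ (antitone_phiLam lam n) h t ht).not_ge hbad
  · refine fun τ hτ => hdevn τ hτ _ (fun lam h => hFK lam (Finset.mem_filter.1 h).1)
      fun lam h => ?_
    have hlam := (Finset.mem_filter.1 h).2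
    rwa [hphi] at hlam
end

section
/- Let Ω be a finite set, f : Ω → ℝ^d, and B ∈ ℝ^d. Define Λ_B = {ω ∈ Ω : f(ω) = B} and suppose Λ_B is non-empty. Let μ be a probability distribution on Ω with E_μ f = B such that H(μ) ≥ H(ν) for every probability distribution ν on Ω with E_ν f = B (i.e., μ is a maximum entropy distribution subject to the mean constraint). Then |Λ_B| = e^{H(μ)} · μ(Λ_B). -/
open scoped Classical

/-- Shannon entropy of a probability mass function on a finite type. -/
noncomputable def shannonEntropy {Ω : Type*} [Fintype Ω] (μ : Ω → ℝ) : ℝ :=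
  -∑ ω, μ ω * Real.log (μ ω)

lemma shannonEntropy_eq_sum_negMulLog {Ω : Type*} [Fintype Ω] (μ : Ω → ℝ) :
    shannonEntropy μ = ∑ ω, Real.negMulLog (μ ω) := by
  simp [shannonEntropy, Real.negMulLog]

/-- The mass function moved from `μ` towards the point mass at `a`; negative `t` moves away. -/
noncomputable def mixPointMass {Ω : Type*} (μ : Ω → ℝ) (a : Ω) (t : ℝ) (ω : Ω) : ℝ :=
  μ ω + t * ((if ω = a then 1 else 0) - μ ω)

lemma sum_mixPointMass_mul {Ω : Type*} [Fintype Ω] (μ : Ω → ℝ) (a : Ω) (t : ℝ) (g : Ω → ℝ) :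
    ∑ ω, mixPointMass μ a t ω * g ω = (1 - t) * ∑ ω, μ ω * g ω + t * g a := by
  have h : ∀ ω, mixPointMass μ a t ω * g ω =
      (1 - t) * (μ ω * g ω) + t * (if ω = a then g ω else 0) := by
    intro ω
    unfold mixPointMass
    split_ifs <;> ring
  simp only [h, Finset.sum_add_distrib, ← Finset.mul_sum]
  simp

lemma hasDerivAt_shannonEntropy_mixPointMass {Ω : Type*} [Fintype Ω] {μ : Ω → ℝ}
    (hμ1 : ∑ ω, μ ω = 1) {a : Ω} (ha : μ a ≠ 0) :
    HasDerivAt (fun t => shannonEntropy (mixPointMass μ a t))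
      (-Real.log (μ a) - shannonEntropy μ) 0 := by
  have hterm : ∀ ω ∈ Finset.univ, HasDerivAt (fun t => Real.negMulLog (mixPointMass μ a t ω))
      ((-Real.log (μ ω) - 1) * ((if ω = a then 1 else 0) - μ ω)) 0 := by
    intro ω _
    by_cases h0 : μ ω = 0
    · have hne : ω ≠ a := by
        rintro rfl
        exact ha h0
      simpa [mixPointMass, h0, hne] using hasDerivAt_const (0 : ℝ) (0 : ℝ)
    · have hlin : HasDerivAt (fun t => mixPointMass μ a t ω)
          ((if ω = a then 1 else 0) - μ ω) 0 := by
        simpa [mixPointMass] using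
          ((hasDerivAt_id (0 : ℝ)).mul_const ((if ω = a then 1 else 0) - μ ω)).const_add (μ ω)
      have hlog : HasDerivAt Real.negMulLog (-Real.log (μ ω) - 1) (mixPointMass μ a 0 ω) := by
        simpa [mixPointMass] using Real.hasDerivAt_negMulLog h0
      exact hlog.comp 0 hlin
  have hsum := HasDerivAt.fun_sum hterm
  simp only [← shannonEntropy_eq_sum_negMulLog] at hsum
  refine hsum.congr_deriv ?_
  have h : ∀ ω, (-Real.log (μ ω) - 1) * ((if ω = a then 1 else 0) - μ ω) =
      (if ω = a then -Real.log (μ ω) - 1 else 0) + μ ω * Real.log (μ ω) + μ ω := by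
    intro ω
    split_ifs <;> ring
  simp only [h, Finset.sum_add_distrib, hμ1, shannonEntropy]
  simp
  ring

/-- Mixing in a point outside the support adds the binary entropy of the mixing weight. -/
lemma shannonEntropy_mixPointMass_of_eq_zero {Ω : Type*} [Fintype Ω] {μ : Ω → ℝ}
    (hμ1 : ∑ ω, μ ω = 1) {a : Ω} (ha : μ a = 0) (t : ℝ) :
    shannonEntropy (mixPointMass μ a t) =
      (1 - t) * shannonEntropy μ + Real.negMulLog (1 - t) + Real.negMulLog t := by
  have h : ∀ ω, Real.negMulLog (mixPointMass μ a t ω) =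
      (1 - t) * Real.negMulLog (μ ω) + μ ω * Real.negMulLog (1 - t) +
        (if ω = a then Real.negMulLog t else 0) := by
    intro ω
    by_cases hω : ω = a
    · subst hω
      simp [mixPointMass, ha]
    · rw [show mixPointMass μ a t ω = μ ω * (1 - t) by simp [mixPointMass, hω]; ring,
        Real.negMulLog_mul]
      simp [hω]
  simp only [shannonEntropy_eq_sum_negMulLog, h, Finset.sum_add_distrib, ← Finset.mul_sum,
    ← Finset.sum_mul, hμ1]
  simp

lemma exists_lt_shannonEntropy_mixPointMass {Ω : Type*} [Fintype Ω] {μ : Ω → ℝ}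
    (hμ1 : ∑ ω, μ ω = 1) {a : Ω} (ha : μ a = 0) :
    ∃ t ∈ Set.Icc (0 : ℝ) 1, shannonEntropy μ < shannonEntropy (mixPointMass μ a t) := by
  set H := shannonEntropy μ with hH
  set t := Real.exp (-|H| - 1) with ht
  have ht0 : 0 < t := Real.exp_pos _
  have ht1 : t ≤ 1 := Real.exp_le_one_iff.2 (by linarith [abs_nonneg H])
  refine ⟨t, ⟨ht0.le, ht1⟩, ?_⟩
  rw [shannonEntropy_mixPointMass_of_eq_zero hμ1 ha, ← hH]
  have hs : 0 ≤ Real.negMulLog (1 - t) := Real.negMulLog_nonneg (by linarith) (by linarith)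
  have hlog : Real.negMulLog t = t * (|H| + 1) := by
    rw [Real.negMulLog, ht, Real.log_exp]
    ring
  nlinarith [mul_le_mul_of_nonneg_left (le_abs_self H) ht0.le]

/-- A maximum entropy distribution `μ` subject to a mean constraint gives every point satisfying
the constraint the mass `exp (-H(μ))`. -/
lemma apply_eq_exp_neg_shannonEntropy_of_isMax {Ω : Type*} [Fintype Ω] {d : ℕ}
    (f : Ω → Fin d → ℝ) (B : Fin d → ℝ)
    (μ : Ω → ℝ) (hμ0 : ∀ ω, 0 ≤ μ ω) (hμ1 : ∑ ω, μ ω = 1)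
    (hμB : ∀ i, ∑ ω, μ ω * f ω i = B i)
    (hmax : ∀ ν : Ω → ℝ, (∀ ω, 0 ≤ ν ω) → ∑ ω, ν ω = 1 →
      (∀ i, ∑ ω, ν ω * f ω i = B i) → shannonEntropy ν ≤ shannonEntropy μ)
    {a : Ω} (ha : f a = B) : μ a = Real.exp (-shannonEntropy μ) := by
  have hmix : ∀ t : ℝ, t ≤ 1 → 0 ≤ mixPointMass μ a t a →
      shannonEntropy (mixPointMass μ a t) ≤ shannonEntropy μ := by
    intro t ht hta
    refine hmax _ (fun ω => ?_) ?_ (fun i => ?_)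
    · by_cases hω : ω = a
      · rwa [hω]
      · rw [show mixPointMass μ a t ω = (1 - t) * μ ω by simp [mixPointMass, hω]; ring]
        exact mul_nonneg (by linarith) (hμ0 ω)
    · simpa [hμ1] using sum_mixPointMass_mul μ a t (fun _ => 1)
    · rw [sum_mixPointMass_mul μ a t (fun ω => f ω i), hμB, ha]
      ring
  have hpos : 0 < μ a := by
    refine (hμ0 a).lt_of_ne' fun h0 => ?_
    obtain ⟨t, ⟨ht0, ht1⟩, hlt⟩ := exists_lt_shannonEntropy_mixPointMass hμ1 h0
    exact (hmix t ht1 (by simpa [mixPointMass, h0] using ht0)).not_gt hlt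
  have hcont : Continuous fun t : ℝ => mixPointMass μ a t a := by
    unfold mixPointMass
    fun_prop
  have hloc : IsLocalMax (fun t => shannonEntropy (mixPointMass μ a t)) 0 := by
    have hnear : ∀ᶠ t in nhds (0 : ℝ), 0 < mixPointMass μ a t a :=
      hcont.continuousAt.eventually_const_lt (by simpa [mixPointMass] using hpos)
    filter_upwards [hnear, eventually_lt_nhds (zero_lt_one' ℝ)] with t hta ht
    have h0 : mixPointMass μ a 0 = μ := by
      ext ω
      simp [mixPointMass]
    rw [h0]
    exact hmix t ht.le hta.le
  have hderiv := hloc.hasDerivAt_eq_zero (hasDerivAt_shannonEntropy_mixPointMass hμ1 hpos.ne')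
  rw [show -shannonEntropy μ = Real.log (μ a) by linarith, Real.exp_log hpos]

theorem stmt_2 {Ω : Type*} [Fintype Ω] {d : ℕ} (f : Ω → Fin d → ℝ) (B : Fin d → ℝ)
    (hne : ∃ ω, f ω = B)
    (μ : Ω → ℝ) (hμ0 : ∀ ω, 0 ≤ μ ω) (hμ1 : ∑ ω, μ ω = 1)
    (hμB : ∀ i, ∑ ω, μ ω * f ω i = B i)
    (hmax : ∀ ν : Ω → ℝ, (∀ ω, 0 ≤ ν ω) → ∑ ω, ν ω = 1 →
      (∀ i, ∑ ω, ν ω * f ω i = B i) → shannonEntropy ν ≤ shannonEntropy μ) :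
    (Nat.card {ω // f ω = B} : ℝ) =
      Real.exp (shannonEntropy μ) * ∑ ω, if f ω = B then μ ω else 0 := by
  have h : ∀ ω, Real.exp (shannonEntropy μ) * (if f ω = B then μ ω else 0) =
      if f ω = B then 1 else 0 := by
    intro ω
    split_ifs with hω
    · rw [apply_eq_exp_neg_shannonEntropy_of_isMax f B μ hμ0 hμ1 hμB hmax hω, ← Real.exp_add]
      simp
    · simp
  rw [Finset.mul_sum, Finset.sum_congr rfl fun ω _ => h ω, Finset.sum_boole,
    Nat.card_eq_fintype_card, Fintype.card_subtype]
end

section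
/- Let J be a finite set of non-negative integers containing at least one positive integer, α ∈ ℝ_+^J, and suppose β ∈ ℝ^J satisfies ∫₀^∞ x^j/(exp(Σ_{ℓ∈J} β_ℓ x^ℓ) − 1) dx = α_j for all j ∈ J. Let f*(x) := 1/(exp(Σ_{j∈J} β_j x^j) − 1). Then for every integrable function f : [0,∞) → [0,∞) satisfying ∫₀^∞ x^j f(x) dx = α_j for all j ∈ J, one has ∫₀^∞ G(f(x)) dx ≤ ∫₀^∞ G(f*(x)) dx. -/
open MeasureTheory

/-- `G(η) = (η+1) log(η+1) − η log η` (with `G(0) = 0`, automatic since `Real.log 0 = 0`). -/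
noncomputable def G (η : ℝ) : ℝ := (η + 1) * Real.log (η + 1) - η * Real.log η

/-- Tangent-line inequality for the concave function `G` at `s`, where `G' s = log (s + 1) - log s`. -/
lemma G_le_tangent {η s : ℝ} (hη : 0 ≤ η) (hs : 0 < s) :
    G η ≤ Real.log (1 + s) + (Real.log (s + 1) - Real.log s) * η := by
  rcases hη.eq_or_lt with rfl | hη
  · simpa [G] using Real.log_nonneg (by linarith : (1 : ℝ) ≤ 1 + s)
  have h₁ : Real.log (s * (η + 1) / (η * (s + 1))) ≤ s * (η + 1) / (η * (s + 1)) - 1 :=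
    Real.log_le_sub_one_of_pos (by positivity)
  have h₂ : Real.log ((η + 1) / (s + 1)) ≤ (η + 1) / (s + 1) - 1 :=
    Real.log_le_sub_one_of_pos (by positivity)
  have h₃ : η * (s * (η + 1) / (η * (s + 1)) - 1) + ((η + 1) / (s + 1) - 1) = 0 := by
    field_simp
    ring
  have h₄ := mul_le_mul_of_nonneg_left h₁ hη.le
  rw [Real.log_div (by positivity) (by positivity), Real.log_mul (by positivity) (by positivity),
    Real.log_mul (by positivity) (by positivity)] at h₄
  rw [Real.log_div (by positivity) (by positivity)] at h₂
  rw [G, add_comm 1 s]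
  nlinarith

lemma G_eq_tangent (s : ℝ) :
    G s = Real.log (1 + s) + (Real.log (s + 1) - Real.log s) * s := by
  rw [G, add_comm 1 s]
  ring

lemma log_add_one_sub_log_bose {p : ℝ} (hp : 0 < p) :
    Real.log (1 / (Real.exp p - 1) + 1) - Real.log (1 / (Real.exp p - 1)) = p := by
  have h : 0 < Real.exp p - 1 := by linarith [Real.add_one_lt_exp hp.ne']
  rw [← Real.log_div (by positivity) (by positivity)]
  have : (1 / (Real.exp p - 1) + 1) / (1 / (Real.exp p - 1)) = Real.exp p := by
    field_simp
    ring
  rw [this, Real.log_exp]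

/-- A pole of `x ^ j / (exp (p x) - 1)` at a positive root of `p` is not integrable. -/
lemma Polynomial.eval_ne_zero_of_integrableOn_bose {p : Polynomial ℝ} (hp : p ≠ 0) {j : ℕ}
    (hint : IntegrableOn (fun x : ℝ => x ^ j / (Real.exp (p.eval x) - 1)) (Set.Ioi 0))
    {c : ℝ} (hc : 0 < c) : p.eval c ≠ 0 := by
  intro hroot
  have hroots : ∀ᶠ x in nhdsWithin c {c}ᶜ, p.eval x ≠ 0 :=
    nhdsNE_le_cofinite c (p.finite_setOfPred_isRoot hp).compl_mem_cofinite
  have hpos : ∀ᶠ x in nhdsWithin c {c}ᶜ, 0 < x :=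
    nhdsWithin_le_nhds (lt_mem_nhds hc)
  have hdiff : DifferentiableAt ℝ (fun x : ℝ => (Real.exp (p.eval x) - 1) / x ^ j) c := by
    have := p.differentiable c
    fun_prop (disch := positivity)
  have hO := (hdiff.isBigO_sub).mono (nhdsWithin_le_nhds (s := {c}ᶜ))
  simp only [hroot, Real.exp_zero, sub_self, zero_div, sub_zero] at hO
  have hO' := hO.inv_rev (by
    filter_upwards [hroots, hpos] with x hx hx0 h
    simp [div_eq_zero_iff, sub_eq_zero, Real.exp_eq_one_iff, hx, hx0.ne'] at h)
  refine not_intervalIntegrable_of_sub_inv_isBigO_punctured (a := c) (b := c + 1) (c := c)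
    (f := fun x : ℝ => x ^ j / (Real.exp (p.eval x) - 1)) ?_ (by linarith) (by simp) ?_
  · simpa only [inv_div] using hO'
  · rw [intervalIntegrable_iff_integrableOn_Ioc_of_le (by linarith)]
    exact hint.mono_set fun x hx => hc.trans hx.1

/-- If a moment of the function `1 / (exp (p x) - 1)` over `(0, ∞)` is positive (in particular
finite), then `p` is positive on `(0, ∞)`. -/
lemma Polynomial.eval_pos_of_integral_bose_pos {p : Polynomial ℝ} {j : ℕ}
    (h : 0 < ∫ x in Set.Ioi (0 : ℝ), x ^ j / (Real.exp (p.eval x) - 1))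
    {x : ℝ} (hx : 0 < x) : 0 < p.eval x := by
  have hp : p ≠ 0 := by
    rintro rfl
    simp at h
  have hint : IntegrableOn (fun x : ℝ => x ^ j / (Real.exp (p.eval x) - 1)) (Set.Ioi 0) :=
    not_imp_comm.1 integral_undef h.ne'
  have hne : ∀ c : ℝ, 0 < c → p.eval c ≠ 0 :=
    fun c hc => Polynomial.eval_ne_zero_of_integrableOn_bose hp hint hc
  by_contra! hneg
  refine h.not_ge (setIntegral_nonpos measurableSet_Ioi fun y hy => ?_)
  have hy0 : (0 : ℝ) < y := hy
  have hyneg : p.eval y ≤ 0 := by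
    by_contra! hypos
    obtain ⟨c, hc, hc0⟩ := isPreconnected_Ioi.intermediate_value (Set.mem_Ioi.2 hx) hy
      p.continuous.continuousOn ⟨hneg, hypos.le⟩
    exact hne c hc hc0
  exact div_nonpos_of_nonneg_of_nonpos (by positivity)
    (sub_nonpos.2 (Real.exp_le_one_iff.2 hyneg))

/-- Finiteness of one moment of a nonnegative `g` makes `log (1 + g)` integrable. -/
lemma integrableOn_log_one_add_of_moment {g : ℝ → ℝ} (hg : Measurable g)
    (hg0 : ∀ x, 0 < x → 0 ≤ g x) {j : ℕ}
    (hint : IntegrableOn (fun x : ℝ => x ^ j * g x) (Set.Ioi 0)) :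
    IntegrableOn (fun x => Real.log (1 + g x)) (Set.Ioi 0) := by
  have hmeas : Measurable fun x => Real.log (1 + g x) := by fun_prop
  rw [← Set.Ioc_union_Ioi_eq_Ioi (zero_le_one (α := ℝ))]
  refine IntegrableOn.union ?_ ?_
  · have hlog : IntegrableOn Real.log (Set.Ioc 0 1) :=
      (intervalIntegrable_iff_integrableOn_Ioc_of_le zero_le_one).1
        intervalIntegral.intervalIntegrable_log'
    refine Integrable.mono' ((hint.mono_set fun x hx => hx.1).sub (hlog.const_mul (j : ℝ)))
      hmeas.aestronglyMeasurable ?_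
    filter_upwards [ae_restrict_mem measurableSet_Ioc] with x hx
    have hgx := hg0 x hx.1
    have hxj : 0 < x ^ j := pow_pos hx.1 j
    rw [Real.norm_of_nonneg (Real.log_nonneg (by linarith))]
    have h₁ : Real.log (x ^ j * (1 + g x)) ≤ x ^ j * (1 + g x) - 1 :=
      Real.log_le_sub_one_of_pos (by positivity)
    rw [Real.log_mul hxj.ne' (by positivity), Real.log_pow] at h₁
    have h₂ : x ^ j ≤ 1 := pow_le_one₀ hx.1.le hx.2
    simp only [Pi.sub_apply]
    linarith
  · refine Integrable.mono' (hint.mono_set (Set.Ioi_subset_Ioi zero_le_one))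
      hmeas.aestronglyMeasurable ?_
    filter_upwards [ae_restrict_mem measurableSet_Ioi] with x hx
    have hx1 : (1 : ℝ) < x := hx
    have hgx := hg0 x (by linarith)
    rw [Real.norm_of_nonneg (Real.log_nonneg (by linarith))]
    have h₁ : Real.log (1 + g x) ≤ 1 + g x - 1 := Real.log_le_sub_one_of_pos (by linarith)
    have h₂ : g x ≤ x ^ j * g x := le_mul_of_one_le_left hgx (one_le_pow₀ hx1.le)
    linarith

lemma integrableOn_sum_mul_of_moments {J : Finset ℕ} {g : ℝ → ℝ} (β : ℕ → ℝ)
    (hint : ∀ j ∈ J, IntegrableOn (fun x : ℝ => x ^ j * g x) (Set.Ioi 0)) :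
    IntegrableOn (fun x : ℝ => (∑ j ∈ J, β j * x ^ j) * g x) (Set.Ioi 0) := by
  simp only [Finset.sum_mul, mul_assoc]
  exact integrable_finsetSum J fun j hj => (hint j hj).const_mul (β j)

lemma integral_sum_mul_of_moments {J : Finset ℕ} {g : ℝ → ℝ} (β : ℕ → ℝ)
    (hint : ∀ j ∈ J, IntegrableOn (fun x : ℝ => x ^ j * g x) (Set.Ioi 0)) :
    ∫ x in Set.Ioi (0 : ℝ), (∑ j ∈ J, β j * x ^ j) * g x =
      ∑ j ∈ J, β j * ∫ x in Set.Ioi (0 : ℝ), x ^ j * g x := by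
  simp only [Finset.sum_mul, mul_assoc]
  rw [integral_finsetSum J fun j hj => (hint j hj).const_mul (β j)]
  simp only [integral_const_mul]

theorem stmt_7 (J : Finset ℕ) (hJ : ∃ j ∈ J, 0 < j)
    (α β : ℕ → ℝ) (hα : ∀ j ∈ J, 0 < α j)
    (hβ : ∀ j ∈ J,
      (∫ x in Set.Ioi (0:ℝ), x ^ j / (Real.exp (∑ ℓ ∈ J, β ℓ * x ^ ℓ) - 1)) = α j)
    (f : ℝ → ℝ) (hf0 : ∀ x : ℝ, 0 ≤ x → 0 ≤ f x)
    (hfint : IntegrableOn f (Set.Ioi 0))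
    (hfmom : ∀ j ∈ J, (∫ x in Set.Ioi (0:ℝ), x ^ j * f x) = α j) :
    (∫ x in Set.Ioi (0:ℝ), G (f x)) ≤
      ∫ x in Set.Ioi (0:ℝ), G (1 / (Real.exp (∑ j ∈ J, β j * x ^ j) - 1)) := by
  obtain ⟨k, hk, -⟩ := hJ
  set P : ℝ → ℝ := fun x => ∑ j ∈ J, β j * x ^ j with hP
  set g : ℝ → ℝ := fun x => 1 / (Real.exp (P x) - 1) with hg
  change _ ≤ ∫ x in Set.Ioi (0:ℝ), G (g x)
  have hPpos : ∀ x, 0 < x → 0 < P x := by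
    intro x hx
    have hev : ∀ y, (∑ j ∈ J, Polynomial.C (β j) * Polynomial.X ^ j).eval y = P y := by
      intro y
      simp [hP, Polynomial.eval_finsetSum]
    rw [← hev]
    refine Polynomial.eval_pos_of_integral_bose_pos (j := k) ?_ hx
    simp only [hev]
    exact (hα k hk).trans_eq (hβ k hk).symm
  have hgpos : ∀ x, 0 < x → 0 < g x := fun x hx =>
    one_div_pos.2 (sub_pos.2 (Real.one_lt_exp_iff.2 (hPpos x hx)))
  have hgmom : ∀ j ∈ J, (∫ x in Set.Ioi (0:ℝ), x ^ j * g x) = α j := by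
    intro j hj
    simpa only [hg, mul_one_div] using hβ j hj
  have hgI : ∀ j ∈ J, IntegrableOn (fun x : ℝ => x ^ j * g x) (Set.Ioi 0) := fun j hj =>
    not_imp_comm.1 integral_undef (by rw [hgmom j hj]; exact (hα j hj).ne')
  have hfI : ∀ j ∈ J, IntegrableOn (fun x : ℝ => x ^ j * f x) (Set.Ioi 0) := fun j hj =>
    not_imp_comm.1 integral_undef (by rw [hfmom j hj]; exact (hα j hj).ne')
  have hlog : IntegrableOn (fun x => Real.log (1 + g x)) (Set.Ioi 0) :=
    integrableOn_log_one_add_of_moment (by fun_prop) (fun x hx => (hgpos x hx).le) (hgI k hk)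
  have hslope : ∀ x, 0 < x → Real.log (g x + 1) - Real.log (g x) = P x := fun x hx =>
    log_add_one_sub_log_bose (hPpos x hx)
  have hRHS : ∫ x in Set.Ioi (0:ℝ), G (g x) =
      ∫ x in Set.Ioi (0:ℝ), (Real.log (1 + g x) + P x * f x) := by
    calc ∫ x in Set.Ioi (0:ℝ), G (g x)
        = ∫ x in Set.Ioi (0:ℝ), (Real.log (1 + g x) + P x * g x) :=
          setIntegral_congr_fun measurableSet_Ioi fun x hx => by
            simp only [G_eq_tangent (g x), hslope x hx]
      _ = ∫ x in Set.Ioi (0:ℝ), (Real.log (1 + g x) + P x * f x) := by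
          rw [integral_add hlog (integrableOn_sum_mul_of_moments β hgI),
            integral_add hlog (integrableOn_sum_mul_of_moments β hfI),
            integral_sum_mul_of_moments β hgI, integral_sum_mul_of_moments β hfI]
          congr 1
          exact Finset.sum_congr rfl fun j hj => by rw [hgmom j hj, hfmom j hj]
  rw [hRHS]
  by_cases hGf : IntegrableOn (fun x => G (f x)) (Set.Ioi 0)
  · refine setIntegral_mono_on hGf (hlog.add (integrableOn_sum_mul_of_moments β hfI))
      measurableSet_Ioi fun x hx => ?_
    rw [← hslope x hx]
    exact G_le_tangent (hf0 x (le_of_lt hx)) (hgpos x hx)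
  · rw [integral_undef hGf]
    refine setIntegral_nonneg measurableSet_Ioi fun x hx => ?_
    exact add_nonneg (Real.log_nonneg (by linarith [hgpos x hx]))
      (mul_nonneg (hPpos x hx).le (hf0 x (le_of_lt hx)))
end

section
/- For each integer d ≥ 1, the number of polynomials p(x) = Σ_{j=1}^d t_j x^j with real coefficients t_j ∈ (−1/2, 1/2] such that p(m) ∈ ℤ for every m ∈ ℤ is exactly ∏_{j=1}^d j!. -/
/-- The tuples `(t₁, …, t_d)` in an abelian group `A` whose associated polynomial map
`m ↦ ∑ mʲ • tⱼ` vanishes on all integers. -/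
def vanishingCoeffs (A : Type*) [AddCommGroup A] (d : ℕ) : AddSubgroup (Fin d → A) where
  carrier := {t | ∀ m : ℤ, ∑ j : Fin d, m ^ ((j : ℕ) + 1) • t j = 0}
  zero_mem' m := by simp
  add_mem' {s t} hs ht m := by simp [Finset.sum_add_distrib, hs m, ht m]
  neg_mem' {t} ht m := by simp [ht m]

section General

variable {A : Type*} [AddCommGroup A]

theorem mem_vanishingCoeffs {d : ℕ} {t : Fin d → A} :
    t ∈ vanishingCoeffs A d ↔ ∀ m : ℤ, ∑ j : Fin d, m ^ ((j : ℕ) + 1) • t j = 0 :=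
  Iff.rfl

theorem fwdDiff_iter_smul_const {M R : Type*} [AddCommMonoid M] [Ring R] [Module R A]
    (h : M) (f : M → R) (a : A) (n : ℕ) :
    (fwdDiff h)^[n] (fun x ↦ f x • a) = fun x ↦ (fwdDiff h)^[n] f x • a := by
  induction n generalizing f with
  | zero => rfl
  | succ n ih =>
    rw [Function.iterate_succ_apply, Function.iterate_succ_apply, ← ih]
    congr 1
    ext x
    simp [fwdDiff, sub_smul]

theorem factorial_nsmul_last_eq_zero {d : ℕ} {t : Fin (d + 1) → A}
    (ht : t ∈ vanishingCoeffs A (d + 1)) : (d + 1).factorial • t (Fin.last d) = 0 := by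
  have hzero : (∑ j : Fin (d + 1), fun m : ℤ ↦ m ^ ((j : ℕ) + 1) • t j) = fun _ ↦ (0 : A) := by
    ext m
    simpa using ht m
  have hdiff := congrArg (fun f ↦ (fwdDiff (1 : ℤ))^[d + 1] f 0) hzero
  simp only [fwdDiff_iter_finsetSum, Finset.sum_apply, fwdDiff_iter_smul_const] at hdiff
  rw [Fin.sum_univ_castSucc, Finset.sum_eq_zero] at hdiff
  · rw [fwdDiff_iter_eq_sum_shift (f := fun _ ↦ (0 : A))] at hdiff
    simpa [fwdDiff_iter_eq_factorial] using hdiff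
  · intro j _
    rw [fwdDiff_iter_pow_eq_zero_of_lt (by simp)]
    simp

theorem exists_mem_vanishingCoeffs_last_eq {d : ℕ} {a : A} (ha : (d + 1).factorial • a = 0) :
    ∃ t ∈ vanishingCoeffs A (d + 1), t (Fin.last d) = a := by
  refine ⟨fun j ↦ (descPochhammer ℤ (d + 1)).coeff (j + 1) • a, fun m ↦ ?_, ?_⟩
  · have heval : ∑ j : Fin (d + 1), m ^ ((j : ℕ) + 1) * (descPochhammer ℤ (d + 1)).coeff (j + 1) =
        (d + 1).factorial * Ring.choose m (d + 1) := by
      have hchoose := Ring.descPochhammer_eq_factorial_smul_choose m (d + 1)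
      rw [← Polynomial.eval_eq_smeval, Polynomial.eval_eq_sum_range, descPochhammer_natDegree,
        Finset.sum_range_succ', Finset.sum_range] at hchoose
      simpa [Polynomial.coeff_zero_eq_eval_zero, mul_comm] using hchoose
    simp only [smul_smul]
    rw [← Finset.sum_smul, heval, mul_comm, mul_smul, natCast_zsmul, ha, smul_zero]
  · have hmonic := monic_descPochhammer ℤ (d + 1)
    rw [Polynomial.Monic, Polynomial.leadingCoeff, descPochhammer_natDegree] at hmonic
    simp [hmonic]

variable (A) in
/-- The top coefficient of a tuple in `vanishingCoeffs`. -/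
def vanishingCoeffsLast (d : ℕ) : vanishingCoeffs A (d + 1) →+ A :=
  (Pi.evalAddMonoidHom _ (Fin.last d)).comp (vanishingCoeffs A (d + 1)).subtype

theorem vanishingCoeffsLast_apply {d : ℕ} (t : vanishingCoeffs A (d + 1)) :
    vanishingCoeffsLast A d t = t.1 (Fin.last d) :=
  rfl

variable (A) in
/-- Tuples with zero top coefficient are tuples of one length less. -/
def vanishingCoeffsLastKerEquiv (d : ℕ) :
    (vanishingCoeffsLast A d).ker ≃ vanishingCoeffs A d where
  toFun t := ⟨Fin.init t.1.1, fun m ↦ by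
    have hm := t.1.2 m
    have hlast : t.1.1 (Fin.last d) = 0 := t.2
    simpa [Fin.sum_univ_castSucc, hlast, Fin.init] using hm⟩
  invFun t := ⟨⟨Fin.snoc (α := fun _ ↦ A) t.1 0, fun m ↦ by
    simpa [Fin.sum_univ_castSucc] using t.2 m⟩, by
      simp [AddMonoidHom.mem_ker, vanishingCoeffsLast_apply]⟩
  left_inv t := by
    have hlast : t.1.1 (Fin.last d) = 0 := t.2
    ext1
    ext1
    simp [← hlast]
  right_inv t := by simp

theorem card_vanishingCoeffs_succ (d : ℕ) :
    Nat.card (vanishingCoeffs A (d + 1)) =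
      Nat.card (vanishingCoeffs A d) * Nat.card {a : A // (d + 1).factorial • a = 0} := by
  rw [← (vanishingCoeffsLast A d).ker.card_mul_index, AddSubgroup.index_ker,
    Nat.card_congr (vanishingCoeffsLastKerEquiv A d)]
  congr 1
  refine Nat.card_congr (Equiv.subtypeEquivRight fun a ↦ ?_)
  constructor
  · rintro ⟨t, rfl⟩
    exact factorial_nsmul_last_eq_zero t.2
  · intro ha
    obtain ⟨t, ht, rfl⟩ := exists_mem_vanishingCoeffs_last_eq ha
    exact ⟨⟨t, ht⟩, rfl⟩

theorem card_vanishingCoeffs (d : ℕ) :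
    Nat.card (vanishingCoeffs A d) =
      ∏ j ∈ Finset.Icc 1 d, Nat.card {a : A // j.factorial • a = 0} := by
  induction d with
  | zero => simp
  | succ d ih => rw [card_vanishingCoeffs_succ, ih, Finset.prod_Icc_succ_top (by simp)]

end General

theorem UnitAddCircle.card_nsmul_eq_zero {n : ℕ} (hn : 0 < n) :
    Nat.card {u : UnitAddCircle // n • u = 0} = n := by
  have hn' : (0 : ℝ) < n := by exact_mod_cast hn
  have htorsion (k : Fin n) : n • ((k / n : ℝ) : UnitAddCircle) = 0 :=
    (AddCircle.nsmul_eq_zero_iff hn).2 ⟨k, k.2, by rw [mul_one]⟩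
  refine (Nat.card_congr (Equiv.ofBijective (fun k : Fin n ↦ ⟨_, htorsion k⟩)
    ⟨fun k l hkl ↦ ?_, ?_⟩)).symm.trans (Nat.card_fin n)
  · have hmem (i : Fin n) : (i / n : ℝ) ∈ Set.Ico (0 : ℝ) (0 + 1) := by
      refine ⟨by positivity, ?_⟩
      rw [zero_add, div_lt_one hn']
      exact_mod_cast i.2
    have heq := (AddCircle.coe_eq_coe_iff_of_mem_Ico (hmem k) (hmem l)).1 (Subtype.ext_iff.1 hkl)
    rw [div_left_inj' hn'.ne'] at heq
    exact Fin.ext (by exact_mod_cast heq)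
  · rintro ⟨u, hu⟩
    obtain ⟨m, hm, rfl⟩ := (AddCircle.nsmul_eq_zero_iff hn).1 hu
    exact ⟨⟨m, hm⟩, by simp only [mul_one]⟩

theorem UnitAddCircle.coe_mem_vanishingCoeffs_iff {d : ℕ} {t : Fin d → ℝ} :
    (fun j ↦ (t j : UnitAddCircle)) ∈ vanishingCoeffs UnitAddCircle d ↔
      ∀ m : ℤ, ∃ z : ℤ, ∑ j, t j * (m : ℝ) ^ ((j : ℕ) + 1) = (z : ℝ) := by
  refine mem_vanishingCoeffs.trans (forall_congr' fun m ↦ ?_)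
  have hsum : ∑ j : Fin d, m ^ ((j : ℕ) + 1) • (t j : UnitAddCircle) =
      ((∑ j, t j * (m : ℝ) ^ ((j : ℕ) + 1) : ℝ) : UnitAddCircle) := by
    rw [← QuotientAddGroup.mk'_apply, map_sum]
    refine Finset.sum_congr rfl fun j _ ↦ ?_
    rw [← AddCircle.coe_zsmul, zsmul_eq_mul, mul_comm]
    simp
  rw [hsum, AddCircle.coe_eq_zero_iff]
  simp [eq_comm]

theorem stmt_10 (d : ℕ) (hd : 1 ≤ d) :
    Nat.card {t : Fin d → ℝ //
      (∀ j, t j ∈ Set.Ioc (-(1/2) : ℝ) (1/2)) ∧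
      ∀ m : ℤ, ∃ z : ℤ, ∑ j, t j * (m : ℝ) ^ ((j : ℕ) + 1) = (z : ℝ)}
      = ∏ j ∈ Finset.Icc 1 d, Nat.factorial j := by
  have hIoc : Set.Ioc (-(1/2) : ℝ) (1/2) = Set.Ioc (-(1/2) : ℝ) (-(1/2) + 1) := by norm_num
  calc
    _ = Nat.card (vanishingCoeffs UnitAddCircle d) := by
      refine Nat.card_congr (Equiv.ofBijective (fun t ↦ ⟨fun j ↦ (t.1 j : UnitAddCircle),
        UnitAddCircle.coe_mem_vanishingCoeffs_iff.2 t.2.2⟩) ⟨fun s t hst ↦ ?_, ?_⟩)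
      · ext j
        exact (AddCircle.coe_eq_coe_iff_of_mem_Ioc (hIoc.le <| s.2.1 j) (hIoc.le <| t.2.1 j)).1
          (congrFun (Subtype.ext_iff.1 hst) j)
      · rintro ⟨u, hu⟩
        have hcoe (j) : ((AddCircle.equivIoc 1 (-(1/2)) (u j) : ℝ) : UnitAddCircle) = u j :=
          AddCircle.coe_equivIoc
        refine ⟨⟨fun j ↦ AddCircle.equivIoc 1 (-(1/2)) (u j),
          fun j ↦ hIoc.ge (AddCircle.equivIoc 1 (-(1/2)) (u j)).2,
          UnitAddCircle.coe_mem_vanishingCoeffs_iff.1 (by simpa only [hcoe] using hu)⟩, ?_⟩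
        ext j
        exact hcoe j
    _ = ∏ j ∈ Finset.Icc 1 d, Nat.factorial j := by
      rw [card_vanishingCoeffs]
      exact Finset.prod_congr rfl fun j _ ↦ UnitAddCircle.card_nsmul_eq_zero j.factorial_pos
end

section
/- Fix d ≥ 1 and an integer k ≥ 1. There exists a constant C > 0 (depending only on d) such that the following holds: let g(z) = t₀ + t₁ z + ⋯ + t_d z^d be a real polynomial of degree d with coefficients in (−k/2, k/2], and let s₀,…,s_d be the unique reals with g(m) = Σ_{j=0}^d s_j·binom(m,j) for all m. If ‖g‖_{C^∞[N]} := sup_{1≤j≤d} N^j ‖s_j‖_{ℝ/ℤ} ≤ R, then there is a polynomial q(z) = Σ_j q_j z^j that is integer-valued on ℤ such that ‖t_j − q_j‖_{ℝ/(kℤ)} ≤ C·R·N^{−j} for all 1 ≤ j ≤ d. -/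
/-- `‖x‖_{ℝ/ℤ}`: the distance from `x` to the nearest integer. -/
noncomputable def distToInt (x : ℝ) : ℝ := ⨅ z : ℤ, |x - z|

/-- `‖x‖_{ℝ/(kℤ)}`: the distance from `x` to the nearest multiple of `k`. -/
noncomputable def distToIntMul (k : ℕ) (x : ℝ) : ℝ := ⨅ z : ℤ, |x - k * z|

open Polynomial

/-- The binomial coefficient polynomial `X (X - 1) ⋯ (X - j + 1) / j!` over `ℝ`. -/
noncomputable def binomPoly (j : ℕ) : ℝ[X] :=
  C ((j.factorial : ℝ)⁻¹) * descPochhammer ℝ j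

theorem binomPoly_eval (j : ℕ) (x : ℝ) :
    (binomPoly j).eval x = (∏ i ∈ Finset.range j, (x - i)) / (j.factorial : ℝ) := by
  rw [binomPoly, eval_mul, eval_C, descPochhammer_eval_eq_prod_range, div_eq_inv_mul]

theorem binomPoly_eval_int (j : ℕ) (m : ℤ) :
    (binomPoly j).eval (m : ℝ) = (Ring.choose m j : ℤ) := by
  have h := Ring.descPochhammer_eq_factorial_smul_choose m j
  have hf : (j.factorial : ℝ) ≠ 0 := by positivity
  have hm : (descPochhammer ℝ j).eval (m : ℝ) = (((descPochhammer ℤ j).eval m : ℤ) : ℝ) := by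
    rw [← descPochhammer_map (Int.castRingHom ℝ), eval_intCast_map]
    simp
  rw [← eval_eq_smeval, nsmul_eq_mul] at h
  rw [binomPoly, eval_mul, eval_C, hm, h]
  push_cast
  rw [inv_mul_cancel_left₀ hf]

theorem binomPoly_natDegree_le (j : ℕ) : (binomPoly j).natDegree ≤ j :=
  (natDegree_C_mul_le _ _).trans (descPochhammer_natDegree ℝ j).le

theorem exists_int_abs_sub_le_distToInt (x : ℝ) : ∃ n : ℤ, |x - n| ≤ distToInt x :=
  ⟨round x, le_ciInf fun z => round_le x z⟩

theorem distToIntMul_le_abs (k : ℕ) (x : ℝ) : distToIntMul k x ≤ |x| := by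
  have h : distToIntMul k x ≤ |x - k * (0 : ℤ)| :=
    ciInf_le (f := fun z : ℤ => |x - k * z|) ⟨0, by rintro _ ⟨z, rfl⟩; positivity⟩ 0
  simpa using h

theorem eq_sum_coeff_binomPoly {d : ℕ} {t s : Fin (d + 1) → ℝ}
    (h : ∀ m : ℤ, ∑ j, t j * (m : ℝ) ^ (j : ℕ)
      = ∑ j, s j * ((∏ i ∈ Finset.range (j : ℕ), ((m : ℝ) - i)) / ((j : ℕ).factorial : ℝ)))
    (i : Fin (d + 1)) : t i = ∑ j, s j * (binomPoly j).coeff i := by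
  have hpoly : ∑ j, C (t j) * X ^ (j : ℕ) = ∑ j, C (s j) * binomPoly j := by
    refine eq_of_infinite_eval_eq _ _
      ((Set.infinite_range_of_injective (Int.cast_injective (α := ℝ))).mono ?_)
    rintro _ ⟨m, rfl⟩
    simpa [eval_finsetSum, binomPoly_eval] using h m
  have hc := congrArg (fun p => p.coeff (i : ℕ)) hpoly
  simpa [finsetSum_coeff, coeff_C_mul, coeff_X_pow, Fin.val_inj] using hc

theorem sum_coeff_binomPoly_mul_pow {d : ℕ} (n : Fin (d + 1) → ℝ) (x : ℝ) :
    ∑ i : Fin (d + 1), (∑ j, n j * (binomPoly j).coeff i) * x ^ (i : ℕ)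
      = ∑ j, n j * (binomPoly j).eval x := by
  simp_rw [Finset.sum_mul]
  rw [Finset.sum_comm]
  refine Finset.sum_congr rfl fun j _ => ?_
  rw [eval_eq_sum_range' ((binomPoly_natDegree_le j).trans_lt j.isLt), Finset.mul_sum,
    ← Fin.sum_univ_eq_sum_range (fun i => n j * ((binomPoly j).coeff i * x ^ i))]
  simp_rw [mul_assoc]

theorem abs_coeff_binomPoly_mul_le {N R e : ℝ} (hN : 1 ≤ N) {i j : ℕ}
    (he : i ≤ j → N ^ j * |e| ≤ R) :
    |e * (binomPoly j).coeff i| ≤ |(binomPoly j).coeff i| * (R * (N ^ i)⁻¹) := by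
  rcases le_or_gt i j with hij | hij
  · rw [abs_mul, mul_comm]
    gcongr
    rw [← div_eq_mul_inv, le_div_iff₀ (by positivity), mul_comm]
    exact (mul_le_mul_of_nonneg_right (pow_le_pow_right₀ hN hij) (abs_nonneg e)).trans (he hij)
  · simp [coeff_eq_zero_of_natDegree_lt ((binomPoly_natDegree_le j).trans_lt hij)]

theorem stmt_12 (d : ℕ) (hd : 1 ≤ d) :
    ∃ C : ℝ, 0 < C ∧ ∀ k : ℕ, 1 ≤ k → ∀ N : ℕ, 0 < N → ∀ R : ℝ,
      ∀ t s : Fin (d + 1) → ℝ,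
      (∀ j, t j ∈ Set.Ioc (-(k : ℝ) / 2) ((k : ℝ) / 2)) →
      t (Fin.last d) ≠ 0 →
      (∀ m : ℤ, ∑ j, t j * (m : ℝ) ^ (j : ℕ)
          = ∑ j, s j * ((∏ i ∈ Finset.range (j : ℕ), ((m : ℝ) - i)) /
              ((j : ℕ).factorial : ℝ))) →
      (∀ j : Fin (d + 1), 1 ≤ (j : ℕ) → (N : ℝ) ^ (j : ℕ) * distToInt (s j) ≤ R) →
      ∃ q : Fin (d + 1) → ℝ,
        (∀ m : ℤ, ∃ z : ℤ, ∑ j, q j * (m : ℝ) ^ (j : ℕ) = (z : ℝ)) ∧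
        ∀ j : Fin (d + 1), 1 ≤ (j : ℕ) →
          distToIntMul k (t j - q j) ≤ C * R * ((N : ℝ) ^ (j : ℕ))⁻¹ := by
  let B : Fin (d + 1) → ℝ := fun i => ∑ j : Fin (d + 1), |(binomPoly j).coeff i|
  have hB : ∀ i, 0 ≤ B i := fun i => Finset.sum_nonneg fun _ _ => abs_nonneg _
  refine ⟨1 + ∑ i, B i, add_pos_of_pos_of_nonneg one_pos (Finset.sum_nonneg fun i _ => hB i), ?_⟩
  intro k _ N hN R t s _ _ hts hs
  choose n hn using fun j => exists_int_abs_sub_le_distToInt (s j)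
  have hbound : ∀ j : Fin (d + 1), 1 ≤ (j : ℕ) → (N : ℝ) ^ (j : ℕ) * |s j - n j| ≤ R :=
    fun j hj => (mul_le_mul_of_nonneg_left (hn j) (by positivity)).trans (hs j hj)
  have hR : 0 ≤ R := le_trans (by positivity) (hbound (Fin.last d) (by simpa using hd))
  refine ⟨fun i => ∑ j, n j * (binomPoly j).coeff i, fun m => ?_, fun i hi => ?_⟩
  · refine ⟨∑ j : Fin (d + 1), n j * Ring.choose m (j : ℕ), ?_⟩
    rw [sum_coeff_binomPoly_mul_pow (fun j => (n j : ℝ))]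
    simp [binomPoly_eval_int]
  · calc distToIntMul k (t i - ∑ j, n j * (binomPoly j).coeff i)
        ≤ |t i - ∑ j, n j * (binomPoly j).coeff i| := distToIntMul_le_abs _ _
      _ = |∑ j, (s j - n j) * (binomPoly j).coeff i| := by
          rw [eq_sum_coeff_binomPoly hts i, ← Finset.sum_sub_distrib]
          simp_rw [sub_mul]
      _ ≤ ∑ j, |(s j - n j) * (binomPoly j).coeff i| := Finset.abs_sum_le_sum_abs _ _
      _ ≤ ∑ j : Fin (d + 1), |(binomPoly j).coeff i| * (R * ((N : ℝ) ^ (i : ℕ))⁻¹) :=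
          Finset.sum_le_sum fun j _ => abs_coeff_binomPoly_mul_le (by exact_mod_cast hN)
            fun hij => hbound j (hi.trans hij)
      _ = B i * (R * ((N : ℝ) ^ (i : ℕ))⁻¹) := (Finset.sum_mul _ _ _).symm
      _ ≤ (1 + ∑ i, B i) * (R * ((N : ℝ) ^ (i : ℕ))⁻¹) := by
          gcongr
          linarith [Finset.single_le_sum (fun i _ => hB i) (Finset.mem_univ i)]
      _ = (1 + ∑ i, B i) * R * ((N : ℝ) ^ (i : ℕ))⁻¹ := (mul_assoc _ _ _).symm
end

section
/- Let X be a geometric random variable with parameter p ∈ (0,1). Then for every C > 0, E[ |X − EX|² · 1{|X − EX| ≥ C} ] ≤ 3·Var(X)/(C·p). -/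
open scoped Classical

lemma cast_add_choose_succ (n k : ℕ) :
    ((n + (k + 1)).choose (k + 1) : ℝ) = (n + k + 1) * ((n + k).choose k : ℝ) / (k + 1) := by
  rw [eq_div_iff (by positivity)]
  exact_mod_cast (Nat.add_one_mul_choose_eq (n + k) k).symm

lemma hasSum_geometric_mul_choose {p : ℝ} (hp : p ∈ Set.Ioo (0 : ℝ) 1) (k : ℕ) :
    HasSum (fun n : ℕ => p * (1 - p) ^ n * ((n + k).choose k : ℝ)) (1 / p ^ k) := by
  have hp0 : p ≠ 0 := hp.1.ne'
  have hr : ‖1 - p‖ < 1 := by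
    rw [Real.norm_eq_abs, abs_lt]
    constructor <;> linarith [hp.1, hp.2]
  convert! (hasSum_choose_mul_geometric_of_norm_lt_one k hr).mul_left p using 1
  · ext n
    ring
  · rw [sub_sub_cancel, pow_succ]
    field_simp

/-- The variance of the geometric distribution. -/
lemma hasSum_geometric_centered_sq {p : ℝ} (hp : p ∈ Set.Ioo (0 : ℝ) 1) :
    HasSum (fun n : ℕ => p * (1 - p) ^ n * ((n : ℝ) - (1 - p) / p) ^ 2) ((1 - p) / p ^ 2) := by
  have hp0 : p ≠ 0 := hp.1.ne'
  have h := hasSum_geometric_mul_choose hp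
  set m := (1 - p) / p with hm
  convert! (((h 2).mul_left 2).add ((h 1).mul_left (-3 - 2 * m))).add
    ((h 0).mul_left (1 + 2 * m + m ^ 2)) using 1
  · ext n
    simp only [cast_add_choose_succ n 1, cast_add_choose_succ n 0, Nat.choose_zero_right]
    push_cast
    ring
  · rw [hm]
    field_simp
    ring

/-- The fourth central moment of the geometric distribution. -/
lemma hasSum_geometric_centered_pow_four {p : ℝ} (hp : p ∈ Set.Ioo (0 : ℝ) 1) :
    HasSum (fun n : ℕ => p * (1 - p) ^ n * ((n : ℝ) - (1 - p) / p) ^ 4)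
      ((1 - p) / p ^ 2 * (9 * (1 - p) / p ^ 2 + 1)) := by
  have hp0 : p ≠ 0 := hp.1.ne'
  have h := hasSum_geometric_mul_choose hp
  set m := (1 - p) / p with hm
  convert! (((((h 4).mul_left 24).add ((h 3).mul_left (-60 - 24 * m))).add
    ((h 2).mul_left (50 + 48 * m + 12 * m ^ 2))).add
    ((h 1).mul_left (-15 - 28 * m - 18 * m ^ 2 - 4 * m ^ 3))).add
    ((h 0).mul_left (1 + 4 * m + 6 * m ^ 2 + 4 * m ^ 3 + m ^ 4)) using 1
  · ext n
    simp only [cast_add_choose_succ n 3, cast_add_choose_succ n 2, cast_add_choose_succ n 1,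
      cast_add_choose_succ n 0, Nat.choose_zero_right]
    push_cast
    ring
  · rw [hm]
    field_simp
    ring

/-- Truncation bound: `y² 1{|y| ≥ C} ≤ |y|³ / C`, combined with the arithmetic-geometric mean
inequality for `|y|³ = |y| * y²`. -/
lemma ite_sq_le_of_pos {C a : ℝ} (hC : 0 < C) (ha : 0 < a) (y : ℝ) :
    (if C ≤ |y| then y ^ 2 else 0) ≤ a / (2 * C) * y ^ 2 + 1 / (2 * C * a) * y ^ 4 := by
  split_ifs with h
  · have key : 2 * C * a * y ^ 2 ≤ a ^ 2 * y ^ 2 + y ^ 4 := by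
      have h1 : C * (a * y ^ 2) ≤ |y| * (a * y ^ 2) :=
        mul_le_mul_of_nonneg_right h (by positivity)
      have h2 := mul_nonneg (sq_nonneg (a - |y|)) (sq_nonneg y)
      nlinarith [sq_abs y]
    have heq : a / (2 * C) * y ^ 2 + 1 / (2 * C * a) * y ^ 4
        = (a ^ 2 * y ^ 2 + y ^ 4) / (2 * C * a) := by
      field_simp
    rw [heq, le_div_iff₀ (by positivity)]
    linarith
  · positivity

theorem stmt_16 (p : ℝ) (hp : p ∈ Set.Ioo (0:ℝ) 1) (C : ℝ) (hC : 0 < C) :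
    (∑' k : ℕ, p * (1 - p) ^ k *
        (if C ≤ |(k : ℝ) - (1 - p) / p| then ((k : ℝ) - (1 - p) / p) ^ 2 else 0))
      ≤ 3 * ((1 - p) / p ^ 2) / (C * p) := by
  obtain ⟨hp0, hp1⟩ := id hp
  have hq : 0 < 1 - p := by linarith
  have ha : 0 < 3 / p := by positivity
  have hsum := ((hasSum_geometric_centered_sq hp).mul_left (3 / p / (2 * C))).add
    ((hasSum_geometric_centered_pow_four hp).mul_left (1 / (2 * C * (3 / p))))
  have hle : ∀ k : ℕ, p * (1 - p) ^ k *
      (if C ≤ |(k : ℝ) - (1 - p) / p| then ((k : ℝ) - (1 - p) / p) ^ 2 else 0) ≤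
      3 / p / (2 * C) * (p * (1 - p) ^ k * ((k : ℝ) - (1 - p) / p) ^ 2) +
      1 / (2 * C * (3 / p)) * (p * (1 - p) ^ k * ((k : ℝ) - (1 - p) / p) ^ 4) := by
    intro k
    have hw : 0 ≤ p * (1 - p) ^ k := by positivity
    refine (mul_le_mul_of_nonneg_left
      (ite_sq_le_of_pos hC ha ((k : ℝ) - (1 - p) / p)) hw).trans_eq ?_
    ring
  have hnonneg : ∀ k : ℕ, 0 ≤ p * (1 - p) ^ k *
      (if C ≤ |(k : ℝ) - (1 - p) / p| then ((k : ℝ) - (1 - p) / p) ^ 2 else 0) := by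
    intro k
    split_ifs <;> positivity
  have hsummable := Summable.of_nonneg_of_le hnonneg hle hsum.summable
  refine (hasSum_le hle hsummable.hasSum hsum).trans ?_
  have hfourth : 9 * (1 - p) / p ^ 2 + 1 ≤ 9 / p ^ 2 := by
    rw [div_add_one (by positivity)]
    gcongr
    nlinarith
  calc _ ≤ 3 / p / (2 * C) * ((1 - p) / p ^ 2) +
        1 / (2 * C * (3 / p)) * ((1 - p) / p ^ 2 * (9 / p ^ 2)) := by gcongr
    _ = 3 * ((1 - p) / p ^ 2) / (C * p) := by
      field_simp
      ring
end

section
/- ∫₁^∞ P₂(x)/(2x²) dx = (1/2)·log(2π) − 11/12, where P₂(x) = (x − ⌊x⌋)² − (x − ⌊x⌋) + 1/6 is the second periodized Bernoulli polynomial. -/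
open MeasureTheory

/-- The periodized second Bernoulli polynomial divided by `2 * x ^ 2` is integrable
on `(1, ∞)`. -/
lemma integrableOn_periodizedBernoulliTwo_div_sq :
    IntegrableOn (fun x : ℝ => ((Int.fract x) ^ 2 - Int.fract x + 1/6) / (2 * x ^ 2))
      (Set.Ioi 1) := by
  have hdom : IntegrableOn (fun x : ℝ => x ^ (-2 : ℝ)) (Set.Ioi 1) :=
    integrableOn_Ioi_rpow_of_lt (by norm_num) one_pos
  refine hdom.mono' (Measurable.aestronglyMeasurable (by fun_prop)) ?_
  refine (ae_restrict_iff' measurableSet_Ioi).2 (.of_forall fun x hx => ?_)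
  have hx0 : (0 : ℝ) < x := one_pos.trans hx
  have h0 := Int.fract_nonneg x
  have h1 := (Int.fract_lt_one x).le
  have hnum : |(Int.fract x) ^ 2 - Int.fract x + 1/6| ≤ 2 := by
    rw [abs_le]; constructor <;> nlinarith
  rw [Real.rpow_neg hx0.le, Real.rpow_two, Real.norm_eq_abs, abs_div,
    abs_of_pos (by positivity : (0 : ℝ) < 2 * x ^ 2), div_le_iff₀ (by positivity)]
  rwa [mul_left_comm, inv_mul_cancel₀ (by positivity), mul_one]

/-- The periodized second Bernoulli polynomial divided by `2 * x ^ 2` is integrable on every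
interval contained in `[1, ∞)`. -/
lemma intervalIntegrable_periodizedBernoulliTwo_div_sq {a b : ℝ} (ha : 1 ≤ a) (hab : a ≤ b) :
    IntervalIntegrable (fun x : ℝ => ((Int.fract x) ^ 2 - Int.fract x + 1/6) / (2 * x ^ 2))
      volume a b :=
  (intervalIntegrable_iff_integrableOn_Ioc_of_le hab).2 <|
    integrableOn_periodizedBernoulliTwo_div_sq.mono_set fun _ hx => ha.trans_lt hx.1

lemma integral_periodizedBernoulliTwo_div_sq_unit {k : ℕ} (hk : 1 ≤ k) :
    ∫ x in (k : ℝ)..(k + 1 : ℝ), ((Int.fract x) ^ 2 - Int.fract x + 1/6) / (2 * x ^ 2)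
      = 1 - (k + 1/2) * (Real.log (k + 1) - Real.log k) + (1 / k - 1 / (k + 1)) / 12 := by
  have hk1 : (1 : ℝ) ≤ k := by exact_mod_cast hk
  have hk0 : (0 : ℝ) < k := one_pos.trans_le hk1
  have hderiv : ∀ x : ℝ, 0 < x →
      HasDerivAt (fun x : ℝ => x / 2 - (k + 1/2) * Real.log x - (k ^ 2 + k + 1/6) / 2 * x⁻¹)
        (((x - k) ^ 2 - (x - k) + 1/6) / (2 * x ^ 2)) x := fun x hx => by
    refine ((((hasDerivAt_id' x).div_const 2).sub
      ((Real.hasDerivAt_log hx.ne').const_mul ((k : ℝ) + 1/2))).sub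
      ((hasDerivAt_inv hx.ne').const_mul (((k : ℝ) ^ 2 + k + 1/6) / 2))).congr_deriv ?_
    field_simp
    ring
  rw [intervalIntegral.integral_eq_sub_of_hasDerivAt_of_le (by linarith)
    (fun x hx => (hderiv x (hk0.trans_le hx.1)).continuousAt.continuousWithinAt)
    (fun x hx => ?_)
    (intervalIntegrable_periodizedBernoulliTwo_div_sq hk1 (by linarith))]
  · field_simp
    ring
  · have hfract : Int.fract x = x - k := by
      rw [Int.fract_eq_iff]
      exact ⟨by linarith [hx.1], by linarith [hx.2], k, by simp⟩
    rw [hfract]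
    exact hderiv x (hk0.trans hx.1)

lemma log_stirlingSeq_succ_sub {k : ℕ} (hk : 1 ≤ k) :
    Real.log (Stirling.stirlingSeq (k + 1)) - Real.log (Stirling.stirlingSeq k)
      = 1 - (k + 1/2) * (Real.log (k + 1) - Real.log k) := by
  have hk0 : (k : ℝ) ≠ 0 := by positivity
  have hk1 : (k : ℝ) + 1 ≠ 0 := by positivity
  have hfac : (k.factorial : ℝ) ≠ 0 := by positivity
  rw [Stirling.log_stirlingSeq_formula, Stirling.log_stirlingSeq_formula, Nat.factorial_succ]
  push_cast
  rw [Real.log_mul hk1 hfac, Real.log_mul two_ne_zero hk1, Real.log_mul two_ne_zero hk0,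
    Real.log_div hk1 (Real.exp_ne_zero 1), Real.log_div hk0 (Real.exp_ne_zero 1), Real.log_exp]
  ring

lemma integral_one_periodizedBernoulliTwo_div_sq (n : ℕ) :
    ∫ x in (1 : ℝ)..(n + 1 : ℝ), ((Int.fract x) ^ 2 - Int.fract x + 1/6) / (2 * x ^ 2)
      = Real.log (Stirling.stirlingSeq (n + 1)) - Real.log (Stirling.stirlingSeq 1)
        + (1 - 1 / ((n : ℝ) + 1)) / 12 := by
  induction n with
  | zero => simp
  | succ n ih =>
    have hn : (0 : ℝ) ≤ n := n.cast_nonneg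
    have hunit := integral_periodizedBernoulliTwo_div_sq_unit (Nat.le_add_left 1 n)
    have hlog := log_stirlingSeq_succ_sub (Nat.le_add_left 1 n)
    push_cast at hunit hlog ⊢
    rw [← intervalIntegral.integral_add_adjacent_intervals (b := (n : ℝ) + 1)
      (intervalIntegrable_periodizedBernoulliTwo_div_sq le_rfl (by linarith))
      (intervalIntegrable_periodizedBernoulliTwo_div_sq (by linarith) (by linarith)), ih, hunit]
    linarith

theorem stmt_18 :
    (∫ x in Set.Ioi (1:ℝ), ((Int.fract x) ^ 2 - Int.fract x + 1/6) / (2 * x ^ 2))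
      = Real.log (2 * Real.pi) / 2 - 11/12 := by
  have hintegral := intervalIntegral_tendsto_integral_Ioi 1
    integrableOn_periodizedBernoulliTwo_div_sq
    (Filter.tendsto_atTop_add_const_right _ (1 : ℝ) tendsto_natCast_atTop_atTop)
  simp_rw [integral_one_periodizedBernoulliTwo_div_sq] at hintegral
  have hstirling := ((Stirling.tendsto_stirlingSeq_sqrt_pi.comp
    (Filter.tendsto_add_atTop_nat 1)).log (by positivity)).sub_const
      (Real.log (Stirling.stirlingSeq 1))
  have hinv := ((tendsto_one_div_add_atTop_nhds_zero_nat (𝕜 := ℝ)).const_sub 1).div_const 12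
  rw [tendsto_nhds_unique hintegral (hstirling.add hinv), Stirling.stirlingSeq_one,
    Real.log_div (Real.exp_ne_zero 1) (by positivity), Real.log_exp, Real.log_sqrt (by positivity),
    Real.log_sqrt (by positivity), Real.log_mul two_ne_zero Real.pi_ne_zero]
  ring
end
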